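/- (Concentration compactness.) Let h ≥ 0 with h ≠ 1 and suppose d = ℓ − α/π with ℓ a positive integer (so d ∈ D_α; for h > 1 this means d = ℓ ∈ ℕ). Assume that for every positive integer j the following strict inequalities hold: if d − 2j ≥ 0 then ℰ_h(d) < 2ℰ_h(j) + ℰ_h(d − 2j), and if d − 2(j − α/π) ≥ 0 then ℰ_h(d) < 2ℰ_h(j − α/π) + ℰ_h(d − 2(j − α/π)). Then the infimum ℰ_h(d) is attained: there exists φ ∈ 𝒜_h(d) with E_h(φ) = ℰ_h(d). -/

import Mathlib

/-!
A minimizing sequence is made compact by symmetrization, the energy it may lose at infinity is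
accounted for by transitions of smaller winding number, which the strict inequalities exclude, and
the limit is shown to be `C¹`.

*Relaxation.* Phases are replaced by continuous functions carrying a `Gauge`, a monotone function
playing the role of `x ↦ ∫_{-∞}^x φ'²`, and the energy by `relE`, in which the mass of the gauge
replaces the Dirichlet integral. Smoothing shows that this does not lower the infimum
(`Einf_le_relE`). Gauges survive cutting, gluing, reflecting, and pointwise limits.

*Symmetrization.* The kernel `(s + t)⁻²` is positive definite on the half-line
(`reflection_positive`). Hence, if a profile is replaced by one of its two even rearrangements, the
`H^{1/2}` energy decreases on average (`NL_symm_le`). Together with folding the phase, this allows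
minimizing sequences that are odd about the centre `πℓ` and stay in `[0, πℓ]`, relative to the
centre, on the right half-line (`exists_sym_phase`).

*Compactness.* Such a sequence converges locally uniformly to an odd profile, with a limit `L` at
`+∞`. If `L ≠ πd`, each phase of the sequence still has to go from `L` to `πd` far to the right.
Cutting there (`right_part`) costs little, and interactions between disjoint pieces are
nonnegative, so `exists_profile` gives `ℰ(L/π) + 2 ℰ((πd - L)/(2π)) ≤ ℰ(d)`. Since `L` is
nonnegative, at most `πℓ`, and a well relative to the centre, `(πd - L)/(2π)` is `j` or `j - α/π`
with `j ≥ 1` (`limit_cases`), and the strict inequalities are violated. Thus `L = πd`, and the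
relaxed infimum is attained (`exists_relaxed_minimizer`).

*Regularity.* Comparing a relaxed minimizer with its perturbations by small tents shows that its
second differences of step `r` are `O(r^{5/4})` (`second_difference_le`). The dyadic difference
quotients then converge uniformly, so the minimizer is `C¹` (`contDiff_of_second_difference`), and
its energy is at most its relaxed energy.
-/

open Real MeasureTheory Filter Topology
open scoped ENNReal NNReal

noncomputable section

/-- `k = min {h, 1}`. -/
def kparam (h : ℝ) : ℝ := min h 1

/-- `α = arccos k ∈ [0, π/2]`. -/
def alphaParam (h : ℝ) : ℝ := Real.arccos (kparam h)

/-- The anisotropy potential `W_h(θ) = (1/2)(cos²θ − 2h cos θ + 2hk − k²)`. -/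
def Wpot (h θ : ℝ) : ℝ :=
  (1/2) * ((Real.cos θ)^2 - 2*h*Real.cos θ + 2*h*(kparam h) - (kparam h)^2)

/-- The set `2πℤ + {−α, α}` of allowed limits at `±∞`. -/
def limSet (h : ℝ) : Set ℝ :=
  {y | ∃ n : ℤ, y = 2*Real.pi*n + alphaParam h ∨ y = 2*Real.pi*n - alphaParam h}

/-- The total energy `E_h(φ)`, valued in `[0, ∞]`:
exchange + anisotropy energy plus the stray-field (homogeneous `H^{1/2}`) energy. -/
def energy (h : ℝ) (φ : ℝ → ℝ) : ℝ≥0∞ :=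
  ENNReal.ofReal (1/2) *
      (∫⁻ x : ℝ, ENNReal.ofReal ((deriv φ x)^2 + 2 * Wpot h (φ x))) +
    ENNReal.ofReal (1/(4*Real.pi)) *
      (∫⁻ s : ℝ, ∫⁻ t : ℝ,
        ENNReal.ofReal ((Real.cos (φ s) - Real.cos (φ t))^2 / (s - t)^2))

/-- An admissible phase: `C¹`, limits at `±∞` in `2πℤ + {−α, α}`, finite energy. -/
def Admissible (h : ℝ) (φ : ℝ → ℝ) : Prop :=
  ContDiff ℝ 1 φ ∧
    (∃ L ∈ limSet h, Tendsto φ atTop (𝓝 L)) ∧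
    (∃ L ∈ limSet h, Tendsto φ atBot (𝓝 L)) ∧
    energy h φ < ⊤

/-- The winding number `deg(φ) = (φ(+∞) − φ(−∞))/(2π)`. -/
def deg (φ : ℝ → ℝ) : ℝ :=
  (limUnder atTop φ - limUnder atBot φ) / (2*Real.pi)

/-- `𝒜_h(d)`: admissible phases of winding number `d`. -/
def AA (h d : ℝ) : Set (ℝ → ℝ) := {φ | Admissible h φ ∧ deg φ = d}

/-- `ℰ_h(d) = inf {E_h(φ) : φ ∈ 𝒜_h(d)}`. -/
def Einf (h d : ℝ) : ℝ≥0∞ := ⨅ φ ∈ AA h d, energy h φ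

/-- `D_α = {n + j·α/π : n ∈ ℤ, j ∈ {−1, 0, 1}}`. -/
def Dset (h : ℝ) : Set ℝ :=
  {d | ∃ n j : ℤ, (j = -1 ∨ j = 0 ∨ j = 1) ∧ d = n + j * alphaParam h / Real.pi}

/-! ### Gauges -/

/-- `F` is a *gauge* of `φ` with total mass at most `A`: it takes values in `[0, A]`, and the
increments of `φ` satisfy `(φ y - φ x)² ≤ (y - x) (F y - F x)` for `x ≤ y`. For
`F x = ∫_{-∞}^x φ'²` this is the Cauchy–Schwarz inequality, so having a gauge of mass `A` expresses
`∫ φ'² ≤ A` without weak derivatives, in a form that passes to pointwise limits. -/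
def Gauge (φ F : ℝ → ℝ) (A : ℝ) : Prop :=
  (∀ x, 0 ≤ F x ∧ F x ≤ A) ∧ ∀ x y, x ≤ y → (φ y - φ x)^2 ≤ (y - x) * (F y - F x)

namespace Gauge
variable {φ ψ F G : ℝ → ℝ} {A B : ℝ}

lemma nonneg (hg : Gauge φ F A) : 0 ≤ A := (hg.1 0).1.trans (hg.1 0).2

lemma monotone (hg : Gauge φ F A) : Monotone F := by
  intro x y hxy
  rcases hxy.eq_or_lt with rfl | hlt
  · exact le_rfl
  · have h := (sq_nonneg _).trans (hg.2 x y hxy)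
    have := nonneg_of_mul_nonneg_right h (sub_pos.2 hlt)
    linarith

lemma sq_le (hg : Gauge φ F A) (x y : ℝ) : (φ y - φ x)^2 ≤ |y - x| * A := by
  rcases le_total x y with hxy | hxy
  · rw [abs_of_nonneg (sub_nonneg.2 hxy)]
    refine (hg.2 x y hxy).trans ?_
    have := (hg.1 x).1
    have := (hg.1 y).2
    gcongr
    linarith
  · rw [abs_of_nonpos (sub_nonpos.2 hxy)]
    have h := hg.2 y x hxy
    have h1 := (hg.1 y).1
    have h2 := (hg.1 x).2
    have : (x - y) * (F x - F y) ≤ -(y-x) * A := by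
      rw [neg_sub]
      gcongr
      linarith
    nlinarith

lemma continuous (hg : Gauge φ F A) : Continuous φ := by
  rw [continuous_iff_continuousAt]
  intro x
  rw [ContinuousAt, tendsto_iff_dist_tendsto_zero]
  have h1 : Tendsto (fun y => Real.sqrt (|y - x| * A)) (𝓝 x) (𝓝 0) := by
    have : Continuous (fun y => Real.sqrt (|y - x| * A)) := by fun_prop
    have h2 := this.tendsto x
    simpa using h2
  refine squeeze_zero (fun _ => dist_nonneg) (fun y => ?_) h1
  rw [Real.dist_eq]
  exact Real.abs_le_sqrt (hg.sq_le x y)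

lemma of_le (hg : Gauge φ F A) (h : ∀ x y, |ψ y - ψ x| ≤ |φ y - φ x|) : Gauge ψ F A :=
  ⟨hg.1, fun x y hxy => (sq_le_sq.2 (h x y)).trans (hg.2 x y hxy)⟩

lemma cos (hg : Gauge φ F A) : Gauge (fun x => Real.cos (φ x)) F A := by
  refine hg.of_le fun x y => ?_
  simpa [Real.dist_eq] using Real.lipschitzWith_cos.dist_le_mul (φ y) (φ x)

lemma sub (hf : Gauge φ F A) (hg : Gauge ψ G B) :
    Gauge (fun x => φ x - ψ x) (fun x => 2 * F x + 2 * G x) (2 * A + 2 * B) := by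
  refine ⟨fun x => ⟨?_, ?_⟩, fun x y hxy => ?_⟩
  · linarith [(hf.1 x).1, (hg.1 x).1]
  · linarith [(hf.1 x).2, (hg.1 x).2]
  · have h1 := hf.2 x y hxy
    have h2 := hg.2 x y hxy
    nlinarith [sq_nonneg ((φ y - φ x) + (ψ y - ψ x))]

/-- The mean-square difference quotients of `φ` are controlled by the gauge. -/
lemma lintegral_incr (hg : Gauge φ F A) {u : ℝ} (hu : 0 ≤ u) :
    ∫⁻ x, ENNReal.ofReal (F (x + u) - F x) ≤ ENNReal.ofReal (u * A) := by
  have hmono := hg.monotone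
  have hmeas : Measurable (fun x => ENNReal.ofReal (F (x + u) - F x)) :=
    ((hmono.measurable.comp (measurable_id.add_const u)).sub hmono.measurable).ennreal_ofReal
  have hcov : AECover volume atTop (fun n : ℕ => Set.Ioc (-(n:ℝ)) n) :=
    aecover_Ioc (tendsto_neg_atTop_atBot.comp tendsto_natCast_atTop_atTop)
      tendsto_natCast_atTop_atTop
  refine le_of_tendsto (hcov.lintegral_tendsto_of_countably_generated hmeas.aemeasurable)
    (Eventually.of_forall fun n => ?_)
  have hint : ∀ a b, IntervalIntegrable F volume a b := fun a b => hmono.intervalIntegrable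
  have hint' : ∀ a b, IntervalIntegrable (fun x => F (x + u)) volume a b := fun a b =>
    (hmono.comp (fun x y h => by simpa using h : Monotone fun x : ℝ => x + u)).intervalIntegrable
  have hn : (-(n:ℝ)) ≤ n := by linarith [n.cast_nonneg (α := ℝ)]
  rw [← ofReal_integral_eq_lintegral_ofReal]
  · apply ENNReal.ofReal_le_ofReal
    rw [← intervalIntegral.integral_of_le hn, intervalIntegral.integral_sub (hint' _ _) (hint _ _),
      intervalIntegral.integral_comp_add_right]
    have e1 : (∫ x in (-(n:ℝ)+u)..(n+u), F x) - ∫ x in (-(n:ℝ))..n, F x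
        = (∫ x in (n:ℝ)..(n+u), F x) - ∫ x in (-(n:ℝ))..(-n+u), F x := by
      have := intervalIntegral.integral_add_adjacent_intervals (hint (-(n:ℝ)) (-n+u)) (hint (-(n:ℝ)+u) (n+u))
      have := intervalIntegral.integral_add_adjacent_intervals (hint (-(n:ℝ)) n) (hint n (n+u))
      linarith
    rw [e1]
    have b1 : (∫ x in (n:ℝ)..(n+u), F x) ≤ u * A := by
      have := intervalIntegral.integral_mono_on (f := F) (g := fun _ => A) (a := n) (b := n+u)
        (by linarith) (hint _ _) (by simp) (fun x _ => (hg.1 x).2)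
      simpa using this
    have b2 : 0 ≤ ∫ x in (-(n:ℝ))..(-n+u), F x :=
      intervalIntegral.integral_nonneg (by linarith) (fun x _ => (hg.1 x).1)
    linarith
  · exact ((hint' _ _).sub (hint (-(n:ℝ)) n)).1
  · exact ae_of_all _ fun x => sub_nonneg.2 (hmono (by linarith))

lemma lintegral_sq_incr (hg : Gauge φ F A) {u : ℝ} (hu : 0 ≤ u) :
    ∫⁻ x, ENNReal.ofReal ((φ (x + u) - φ x)^2) ≤ ENNReal.ofReal (u^2 * A) := by
  calc ∫⁻ x, ENNReal.ofReal ((φ (x + u) - φ x)^2)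
      ≤ ∫⁻ x, ENNReal.ofReal u * ENNReal.ofReal (F (x + u) - F x) := by
        refine lintegral_mono fun x => ?_
        rw [← ENNReal.ofReal_mul hu]
        apply ENNReal.ofReal_le_ofReal
        have := hg.2 x (x+u) (by linarith)
        simpa using this
    _ = ENNReal.ofReal u * ∫⁻ x, ENNReal.ofReal (F (x + u) - F x) :=
        lintegral_const_mul' _ _ ENNReal.ofReal_ne_top
    _ ≤ ENNReal.ofReal u * ENNReal.ofReal (u * A) := by gcongr; exact hg.lintegral_incr hu
    _ = _ := by rw [← ENNReal.ofReal_mul hu]; ring_nf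

lemma lintegral_sq_incr_neg (hg : Gauge φ F A) (u : ℝ) :
    ∫⁻ x, ENNReal.ofReal ((φ (x + u) - φ x)^2) ≤ ENNReal.ofReal (u^2 * A) := by
  rcases le_total 0 u with hu | hu
  · exact hg.lintegral_sq_incr hu
  · have h1 := hg.lintegral_sq_incr (u := -u) (by linarith)
    rw [← lintegral_add_right_eq_self (fun x => ENNReal.ofReal ((φ (x + -u) - φ x)^2)) u] at h1
    rw [neg_sq] at h1
    refine (le_of_eq (lintegral_congr fun x => ?_)).trans h1
    rw [add_neg_cancel_right]
    congr 1; ring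

end Gauge

/-- For a `C¹` function the gauge mass dominates the Dirichlet integral. -/
lemma Gauge.lintegral_deriv_sq {φ F : ℝ → ℝ} {A : ℝ} (hg : Gauge φ F A) (hφ : ContDiff ℝ 1 φ) :
    ∫⁻ x, ENNReal.ofReal ((deriv φ x)^2) ≤ ENNReal.ofReal A := by
  -- Fatou's lemma for the difference quotients of step `1 / (n + 1)`.
  have hu : ∀ n : ℕ, (0:ℝ) < 1 / ((n:ℝ) + 1) := fun n => by positivity
  have key : ∀ x, Tendsto (fun n : ℕ => ENNReal.ofReal
      (((φ (x + 1/((n:ℝ)+1)) - φ x) / (1/((n:ℝ)+1)))^2)) atTop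
      (𝓝 (ENNReal.ofReal ((deriv φ x)^2))) := by
    intro x
    have hd : HasDerivAt φ (deriv φ x) x := (hφ.differentiable (by norm_num)).differentiableAt.hasDerivAt
    have h1 := hd.tendsto_slope_zero
    have h2 : Tendsto (fun n : ℕ => 1/((n:ℝ)+1)) atTop (𝓝[≠] 0) := by
      refine tendsto_nhdsWithin_iff.2 ⟨tendsto_one_div_add_atTop_nhds_zero_nat, ?_⟩
      exact Eventually.of_forall fun n => (hu n).ne'
    have h3 := h1.comp h2
    refine (ENNReal.continuous_ofReal.tendsto _).comp ?_
    have h4 := h3.pow 2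
    refine h4.congr fun n => ?_
    simp only [Function.comp, smul_eq_mul]
    rw [div_eq_inv_mul (φ _ - φ x)]
  have hm : ∀ n : ℕ, Measurable (fun x => ENNReal.ofReal
      (((φ (x + 1/((n:ℝ)+1)) - φ x) / (1/((n:ℝ)+1)))^2)) := by
    intro n
    have := hφ.continuous
    exact Measurable.ennreal_ofReal (by fun_prop)
  calc ∫⁻ x, ENNReal.ofReal ((deriv φ x)^2)
      = ∫⁻ x, liminf (fun n : ℕ => ENNReal.ofReal
      (((φ (x + 1/((n:ℝ)+1)) - φ x) / (1/((n:ℝ)+1)))^2)) atTop :=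
        lintegral_congr fun x => (key x).liminf_eq.symm
    _ ≤ liminf (fun n : ℕ => ∫⁻ x, ENNReal.ofReal
      (((φ (x + 1/((n:ℝ)+1)) - φ x) / (1/((n:ℝ)+1)))^2)) atTop := lintegral_liminf_le hm
    _ ≤ liminf (fun n : ℕ => ENNReal.ofReal A) atTop := by
        refine liminf_le_liminf (Eventually.of_forall fun n => ?_)
        have h1 := hg.lintegral_sq_incr (hu n).le
        have e : ∀ x, ENNReal.ofReal
            (((φ (x + 1/((n:ℝ)+1)) - φ x) / (1/((n:ℝ)+1)))^2)
            = ENNReal.ofReal (1 / (1/((n:ℝ)+1))^2) * ENNReal.ofReal ((φ (x + 1/((n:ℝ)+1)) - φ x)^2) := by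
          intro x
          rw [← ENNReal.ofReal_mul (by positivity)]
          congr 1
          rw [div_pow]; ring
        simp_rw [e]
        rw [lintegral_const_mul' _ _ ENNReal.ofReal_ne_top]
        refine (mul_le_mul_right h1 _).trans ?_
        rw [← ENNReal.ofReal_mul (by positivity)]
        apply ENNReal.ofReal_le_ofReal
        have := (hu n).ne'
        field_simp
        exact le_rfl
    _ = ENNReal.ofReal A := by simp

/-- Conversely, a `C¹` function with finite Dirichlet integral has a gauge of exactly that mass. -/
lemma exists_gauge_of_contDiff {φ : ℝ → ℝ} (hφ : ContDiff ℝ 1 φ)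
    (hfin : ∫⁻ x, ENNReal.ofReal ((deriv φ x)^2) < ⊤) :
    ∃ F, Gauge φ F (∫⁻ x, ENNReal.ofReal ((deriv φ x)^2)).toReal ∧
      ENNReal.ofReal (∫⁻ x, ENNReal.ofReal ((deriv φ x)^2)).toReal
        = ∫⁻ x, ENNReal.ofReal ((deriv φ x)^2) := by
  have hc : Continuous (deriv φ) := hφ.continuous_deriv le_rfl
  have hint : Integrable (fun x => (deriv φ x)^2) := by
    refine ⟨(by fun_prop : Continuous fun x => (deriv φ x)^2).aestronglyMeasurable, ?_⟩
    rw [hasFiniteIntegral_iff_ofReal (ae_of_all _ fun x => sq_nonneg _)]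
    exact hfin
  have hA : (∫⁻ x, ENNReal.ofReal ((deriv φ x)^2)).toReal = ∫ x, (deriv φ x)^2 := by
    rw [integral_eq_lintegral_of_nonneg_ae (ae_of_all _ fun x => sq_nonneg _) hint.1]
  refine ⟨fun x => ∫ t in Set.Iic x, (deriv φ t)^2, ⟨fun x => ⟨?_, ?_⟩, fun x y hxy => ?_⟩,
    ENNReal.ofReal_toReal hfin.ne⟩
  · exact integral_nonneg fun _ => sq_nonneg _
  · rw [hA]
    exact setIntegral_le_integral hint (ae_of_all _ fun x => sq_nonneg _)
  · have h1 : (∫ t in Set.Iic y, (deriv φ t)^2) - ∫ t in Set.Iic x, (deriv φ t)^2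
        = ∫ t in x..y, (deriv φ t)^2 :=
      intervalIntegral.integral_Iic_sub_Iic hint.integrableOn hint.integrableOn
    have h2 : ∫ t in x..y, deriv φ t = φ y - φ x := by
      refine intervalIntegral.integral_deriv_eq_sub
        (fun t _ => (hφ.differentiable (by norm_num)).differentiableAt) (hc.intervalIntegrable _ _)
    simp only
    rw [h1, ← h2]
    set J := ∫ t in x..y, deriv φ t with hJ
    rcases hxy.eq_or_lt with rfl | hlt
    · simp [hJ]
    have h3 : 0 ≤ ∫ t in x..y, (deriv φ t - J / (y - x))^2 :=
      intervalIntegral.integral_nonneg hxy fun _ _ => sq_nonneg _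
    have h4 : ∫ t in x..y, (deriv φ t - J / (y - x))^2
        = (∫ t in x..y, (deriv φ t)^2) - 2 * (J/(y-x)) * J + (y - x) * (J/(y-x))^2 := by
      have e : ∀ t, (deriv φ t - J / (y - x))^2
        = ((deriv φ t)^2 - 2 * (J/(y-x)) * deriv φ t) + (J/(y-x))^2 := fun t => by ring
      simp_rw [e]
      rw [intervalIntegral.integral_add, intervalIntegral.integral_sub,
        intervalIntegral.integral_const_mul, intervalIntegral.integral_const, smul_eq_mul]
      all_goals exact Continuous.intervalIntegrable (by fun_prop) _ _
    rw [h4] at h3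
    have hp : 0 < y - x := sub_pos.2 hlt
    have e5 : (y - x) * (J/(y-x))^2 = J^2/(y-x) := by field_simp
    have e6 : 2 * (J/(y-x)) * J = 2 * (J^2/(y-x)) := by ring
    rw [e5, e6] at h3
    have h7 : J^2/(y-x) ≤ ∫ t in x..y, (deriv φ t)^2 := by linarith
    rw [div_le_iff₀ hp] at h7
    linarith

/-! ### The stray-field seminorm -/

/-- The integrand of the stray-field energy. Division by zero makes it vanish on the diagonal, a
null set. -/
def strayKer (m : ℝ → ℝ) (p : ℝ × ℝ) : ℝ≥0∞ :=
  ENNReal.ofReal ((m p.1 - m p.2)^2 / (p.1 - p.2)^2)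

/-- The squared Gagliardo `H^{1/2}` seminorm of `m` on `S`: the double integral over `S × S`. -/
def NL (m : ℝ → ℝ) (S : Set ℝ) : ℝ≥0∞ := ∫⁻ p in S ×ˢ S, strayKer m p

lemma measurable_strayKer {m : ℝ → ℝ} (hm : Measurable m) : Measurable (strayKer m) := by
  unfold strayKer
  fun_prop

lemma strayKer_swap (m : ℝ → ℝ) (p : ℝ × ℝ) : strayKer m p.swap = strayKer m p := by
  unfold strayKer
  congr 1
  simp only [Prod.fst_swap, Prod.snd_swap]
  congr 1 <;> ring

lemma NL_univ {m : ℝ → ℝ} (hm : Measurable m) :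
    NL m Set.univ = ∫⁻ s, ∫⁻ t, ENNReal.ofReal ((m s - m t)^2 / (s - t)^2) := by
  unfold NL
  rw [Set.univ_prod_univ, Measure.restrict_univ, Measure.volume_eq_prod,
    lintegral_prod _ (measurable_strayKer hm).aemeasurable]
  rfl

lemma NL_mono (m : ℝ → ℝ) {S T : Set ℝ} (h : S ⊆ T) : NL m S ≤ NL m T :=
  lintegral_mono_set (Set.prod_mono h h)

lemma lintegral_shear {q : ℝ × ℝ → ℝ≥0∞} (hq : Measurable q) :
    ∫⁻ p, q p = ∫⁻ u, ∫⁻ s, q (s, s + u) := by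
  rw [Measure.volume_eq_prod, lintegral_prod _ hq.aemeasurable]
  rw [lintegral_lintegral_swap (f := fun u s => q (s, s + u))]
  · refine lintegral_congr fun s => ?_
    exact (lintegral_add_left_eq_self (fun t => q (s, t)) s).symm
  · exact (by fun_prop : Measurable (Function.uncurry fun u s => q (s, s + u))).aemeasurable

/-- The near-diagonal part of the seminorm is controlled by the gauge mass. -/
lemma near_le {m G : ℝ → ℝ} {B ρ : ℝ} (hg : Gauge m G B) :
    ∫⁻ p in {p : ℝ × ℝ | |p.1 - p.2| < ρ}, strayKer m p ≤ ENNReal.ofReal (2 * ρ * B) := by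
  have hm : Measurable m := hg.continuous.measurable
  have hS : MeasurableSet {p : ℝ × ℝ | |p.1 - p.2| < ρ} :=
    measurableSet_lt (by fun_prop) (by fun_prop)
  rw [← lintegral_indicator hS, lintegral_shear ((measurable_strayKer hm).indicator hS)]
  calc _ ≤ ∫⁻ u, (Set.Ioo (-ρ) ρ).indicator (fun _ => ENNReal.ofReal B) u := by
        refine lintegral_mono fun u => ?_
        by_cases hu : u ∈ Set.Ioo (-ρ) ρ
        · rw [Set.indicator_of_mem hu]
          have e : ∀ s, Set.indicator {p : ℝ × ℝ | |p.1 - p.2| < ρ} (strayKer m) (s, s+u)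
              ≤ ENNReal.ofReal (1/u^2) * ENNReal.ofReal ((m (s+u) - m s)^2) := by
            intro s
            refine (Set.indicator_le_self _ _ _).trans ?_
            rw [← ENNReal.ofReal_mul (by positivity)]
            apply le_of_eq
            unfold strayKer
            congr 1
            simp only [sub_add_cancel_left, neg_sq]
            ring
          refine (lintegral_mono e).trans ?_
          rw [lintegral_const_mul' _ _ ENNReal.ofReal_ne_top]
          refine (mul_le_mul_right (hg.lintegral_sq_incr_neg u) _).trans ?_
          rw [← ENNReal.ofReal_mul (by positivity)]
          apply ENNReal.ofReal_le_ofReal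
          rcases eq_or_ne u 0 with rfl | h0
          · simpa using hg.nonneg
          · field_simp; exact le_rfl
        · have : ∀ s, Set.indicator {p : ℝ × ℝ | |p.1 - p.2| < ρ} (strayKer m) (s, s+u) = 0 := by
            intro s
            refine Set.indicator_of_notMem (fun h => hu ?_) _
            have h2 : |s - (s+u)| < ρ := h
            rw [sub_add_cancel_left, abs_neg, abs_lt] at h2
            exact h2
          simp [this]
    _ = ENNReal.ofReal (2 * ρ * B) := by
        rw [lintegral_indicator measurableSet_Ioo, setLIntegral_const, Real.volume_Ioo,
          ← ENNReal.ofReal_mul hg.nonneg]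
        congr 1; ring

/-- Integral of a translation-invariant weight against a function of one variable. -/
lemma lintegral_weight {a w : ℝ → ℝ≥0∞} (ha : Measurable a) (hw : Measurable w) :
    ∫⁻ p : ℝ × ℝ, a p.1 * w (p.2 - p.1) = (∫⁻ s, a s) * ∫⁻ u, w u := by
  rw [lintegral_shear (by fun_prop)]
  simp only [add_sub_cancel_left]
  simp_rw [lintegral_mul_const _ ha]
  rw [lintegral_const_mul _ hw]

/-- Power weights away from the origin. -/
lemma lintegral_abs_rpow {s ρ : ℝ} (hs : s < -1) (hρ : 0 < ρ) :
    ∫⁻ u in {u : ℝ | ρ ≤ |u|}, ENNReal.ofReal (|u|^s) = ENNReal.ofReal (2 * (-ρ^(s+1)/(s+1))) := by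
  have hsplit : {u : ℝ | ρ ≤ |u|} = Set.Iic (-ρ) ∪ Set.Ici ρ := by
    ext u; simp only [Set.mem_ofPred_eq, Set.mem_union, Set.mem_Iic, Set.mem_Ici, le_abs]
    constructor
    · rintro (h | h)
      · exact Or.inr h
      · exact Or.inl (by linarith)
    · rintro (h | h)
      · exact Or.inr (by linarith)
      · exact Or.inl h
  have hpos : 0 ≤ -ρ^(s+1)/(s+1) := by
    have : 0 < ρ^(s+1) := Real.rpow_pos_of_pos hρ _
    exact div_nonneg_of_nonpos (by linarith) (by linarith)
  have h1 : ∫⁻ u in Set.Ici ρ, ENNReal.ofReal (|u|^s) = ENNReal.ofReal (-ρ^(s+1)/(s+1)) := by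
    rw [setLIntegral_congr Ioi_ae_eq_Ici.symm]
    have hi : IntegrableOn (fun u : ℝ => u ^ s) (Set.Ioi ρ) := integrableOn_Ioi_rpow_of_lt hs hρ
    have e : ∫⁻ u in Set.Ioi ρ, ENNReal.ofReal (|u|^s) = ∫⁻ u in Set.Ioi ρ, ENNReal.ofReal (u^s) := by
      refine setLIntegral_congr_fun measurableSet_Ioi fun u hu => ?_
      rw [abs_of_pos (hρ.trans hu)]
    rw [e, ← ofReal_integral_eq_lintegral_ofReal hi, integral_Ioi_rpow_of_lt hs hρ]
    refine (ae_restrict_mem measurableSet_Ioi).mono fun u hu => ?_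
    exact Real.rpow_nonneg (hρ.trans hu).le _
  have h2 : ∫⁻ u in Set.Iic (-ρ), ENNReal.ofReal (|u|^s) = ENNReal.ofReal (-ρ^(s+1)/(s+1)) := by
    rw [← h1, ← lintegral_indicator measurableSet_Iic, ← lintegral_indicator measurableSet_Ici,
      ← lintegral_neg_eq_self]
    refine lintegral_congr fun u => ?_
    by_cases hu : ρ ≤ u
    · rw [Set.indicator_of_mem (by simpa using hu), Set.indicator_of_mem (by simpa using hu), abs_neg]
    · rw [Set.indicator_of_notMem (by simpa using hu), Set.indicator_of_notMem (by simpa using hu)]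
  rw [hsplit, lintegral_union measurableSet_Ici, h1, h2, ← ENNReal.ofReal_add hpos hpos]
  · congr 1; ring
  · rw [Set.disjoint_left]; intro u hu hu'
    simp only [Set.mem_Iic, Set.mem_Ici] at hu hu'; linarith

lemma lintegral_inv_sq {ρ : ℝ} (hρ : 0 < ρ) :
    ∫⁻ u in {u : ℝ | ρ ≤ |u|}, ENNReal.ofReal (1/u^2) = ENNReal.ofReal (2/ρ) := by
  have h := lintegral_abs_rpow (s := -2) (by norm_num) hρ
  have e : 2 * (-ρ^((-2:ℝ)+1)/((-2:ℝ)+1)) = 2/ρ := by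
    rw [show (-2:ℝ)+1 = -1 by norm_num, Real.rpow_neg_one]
    ring
  rw [e] at h
  rw [← h]
  refine lintegral_congr fun u => ?_
  rw [Real.rpow_neg (abs_nonneg u), one_div]
  norm_num

/-- The weight `|u|^(-3/2)` away from the origin. -/
lemma lintegral_rpow_three_half {q : ℝ} (hq : 0 < q) :
    ∫⁻ u in {u : ℝ | q^6 ≤ |u|}, ENNReal.ofReal (|u|^(-(3/2):ℝ)) = ENNReal.ofReal (4/q^3) := by
  rw [lintegral_abs_rpow (by norm_num) (by positivity)]
  congr 1
  rw [show (-(3/2):ℝ)+1 = -(1/2) by norm_num, Real.rpow_neg (by positivity), ← Real.sqrt_eq_rpow,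
    show q^6 = (q^3)^2 by ring, Real.sqrt_sq (by positivity)]
  ring

/-- Interpolation: the seminorm on `S` is controlled by a gauge and by the `L²` norm on `S`. -/
lemma NL_le {m G : ℝ → ℝ} {B β ρ : ℝ} (hg : Gauge m G B) (hρ : 0 < ρ) {S : Set ℝ}
    (hS : MeasurableSet S) (hβ : ∫⁻ s in S, ENNReal.ofReal ((m s)^2) ≤ ENNReal.ofReal β)
    (hβ0 : 0 ≤ β) :
    NL m S ≤ ENNReal.ofReal (2 * ρ * B + 8 * β / ρ) := by
  have hm : Measurable m := hg.continuous.measurable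
  set N : Set (ℝ × ℝ) := {p : ℝ × ℝ | |p.1 - p.2| < ρ} with hN
  have hNm : MeasurableSet N := measurableSet_lt (by fun_prop) (by fun_prop)
  set a : ℝ → ℝ≥0∞ := S.indicator (fun s => ENNReal.ofReal (2 * (m s)^2)) with ha
  set w : ℝ → ℝ≥0∞ := {u : ℝ | ρ ≤ |u|}.indicator (fun u => ENNReal.ofReal (1/u^2)) with hw
  have hset : MeasurableSet {u : ℝ | ρ ≤ |u|} := measurableSet_le (by fun_prop) (by fun_prop)
  have ham : Measurable a := Measurable.indicator (by fun_prop) hS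
  have hwm : Measurable w := Measurable.indicator (by fun_prop) hset
  have hwn : ∀ u, w (-u) = w u := by
    intro u
    simp only [hw, Set.indicator, Set.mem_ofPred_eq, abs_neg, neg_sq]
  -- Pairs at distance less than `ρ` are left to `near_le`; for the others `(m s - m t)²` is at most
  -- `2 (m s)² + 2 (m t)²` and the weight `1 / u²` is integrable on `ρ ≤ |u|`.
  have hpt : ∀ p, (S ×ˢ S).indicator (strayKer m) p ≤
      N.indicator (strayKer m) p + (a p.1 * w (p.2 - p.1) + a p.2 * w (p.2 - p.1)) := by
    intro p
    by_cases hp : p ∈ S ×ˢ S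
    · by_cases hpN : p ∈ N
      · rw [Set.indicator_of_mem hp, Set.indicator_of_mem hpN]
        exact le_self_add
      · rw [Set.indicator_of_mem hp, Set.indicator_of_notMem hpN, zero_add]
        have h1 : ρ ≤ |p.2 - p.1| := by
          rw [abs_sub_comm]; exact not_lt.1 hpN
        have h1' : p.2 - p.1 ∈ {u : ℝ | ρ ≤ |u|} := h1
        simp only [ha, hw]
        rw [Set.indicator_of_mem hp.1, Set.indicator_of_mem hp.2, Set.indicator_of_mem h1',
          ← ENNReal.ofReal_mul (by positivity), ← ENNReal.ofReal_mul (by positivity),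
          ← ENNReal.ofReal_add (by positivity) (by positivity)]
        apply ENNReal.ofReal_le_ofReal
        have e : 2 * m p.1 ^ 2 * (1 / (p.2 - p.1) ^ 2) + 2 * m p.2 ^ 2 * (1 / (p.2 - p.1) ^ 2)
          = (2 * m p.1 ^ 2 + 2 * m p.2 ^ 2) / (p.1 - p.2)^2 := by
          rw [show (p.2 - p.1)^2 = (p.1-p.2)^2 by ring]; ring
        rw [e]
        gcongr
        nlinarith [sq_nonneg (m p.1 + m p.2)]
    · rw [Set.indicator_of_notMem hp]; exact zero_le
  have hsw : ∫⁻ p : ℝ × ℝ, a p.2 * w (p.2 - p.1) = ∫⁻ p : ℝ × ℝ, a p.1 * w (p.2 - p.1) := by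
    rw [Measure.volume_eq_prod, ← lintegral_prod_swap]
    refine lintegral_congr fun p => ?_
    simp only [Prod.fst_swap, Prod.snd_swap]
    rw [← hwn, neg_sub]
  have hwt : ∫⁻ p : ℝ × ℝ, a p.1 * w (p.2 - p.1) ≤ ENNReal.ofReal (4 * β / ρ) := by
    rw [lintegral_weight ham hwm, hw, lintegral_indicator hset, lintegral_inv_sq hρ, ha,
      lintegral_indicator hS]
    have : ∫⁻ s in S, ENNReal.ofReal (2 * (m s)^2) ≤ ENNReal.ofReal (2 * β) := by
      simp_rw [ENNReal.ofReal_mul (zero_le_two : (0:ℝ) ≤ 2)]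
      rw [lintegral_const_mul' _ _ ENNReal.ofReal_ne_top]
      gcongr
    refine (mul_le_mul_left this _).trans ?_
    rw [← ENNReal.ofReal_mul (by positivity)]
    apply le_of_eq; congr 1; ring
  calc NL m S = ∫⁻ p, (S ×ˢ S).indicator (strayKer m) p := by
        rw [lintegral_indicator (hS.prod hS)]; rfl
    _ ≤ ∫⁻ p, (N.indicator (strayKer m) p + (a p.1 * w (p.2 - p.1) + a p.2 * w (p.2 - p.1))) :=
        lintegral_mono hpt
    _ = (∫⁻ p in N, strayKer m p) + ((∫⁻ p : ℝ × ℝ, a p.1 * w (p.2 - p.1)) + ∫⁻ p : ℝ × ℝ, a p.1 * w (p.2 - p.1)) := by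
        rw [lintegral_add_left ((measurable_strayKer hm).indicator hNm), lintegral_indicator hNm,
          lintegral_add_left (by fun_prop), hsw]
    _ ≤ ENNReal.ofReal (2 * ρ * B) + (ENNReal.ofReal (4 * β / ρ) + ENNReal.ofReal (4 * β / ρ)) := by
        gcongr
        exact near_le hg
    _ = _ := by
        have := hg.nonneg
        rw [← ENNReal.ofReal_add (by positivity) (by positivity),
          ← ENNReal.ofReal_add (by positivity) (by positivity)]
        congr 1; ring

/-- Young's inequality for the seminorm: `m'` as a perturbation of `m`. -/
lemma NL_le_add {m m' : ℝ → ℝ} (hm : Measurable m) (hm' : Measurable m') {S : Set ℝ} {δ : ℝ} (hδ : 0 < δ) :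
    NL m' S ≤ ENNReal.ofReal (1 + δ) * NL m S
      + ENNReal.ofReal (1 + 1/δ) * NL (fun x => m' x - m x) S := by
  unfold NL
  rw [← lintegral_const_mul _ (measurable_strayKer hm),
    ← lintegral_const_mul _ (measurable_strayKer (by fun_prop : Measurable fun x => m' x - m x)), ← lintegral_add_left
      ((measurable_strayKer hm).const_mul _)]
  refine lintegral_mono fun p => ?_
  unfold strayKer
  rw [← ENNReal.ofReal_mul (by positivity), ← ENNReal.ofReal_mul (by positivity),
    ← ENNReal.ofReal_add (by positivity) (by positivity)]
  apply ENNReal.ofReal_le_ofReal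
  rw [← mul_div_assoc, ← mul_div_assoc, ← add_div]
  gcongr
  set x := m p.1 - m p.2
  set y := m' p.1 - m p.1 - (m' p.2 - m p.2) with hy
  have : m' p.1 - m' p.2 = x + y := by simp only [x, y]; ring
  rw [this]
  have h2 : 0 ≤ (1/δ) * (δ * x - y)^2 := by positivity
  have h3 : (1/δ) * (δ * x - y)^2 = δ * x^2 - 2 * x * y + (1/δ) * y^2 := by
    field_simp; ring
  nlinarith

/-! ### Reflection positivity -/

/-- Reflection positivity: `(s, t) ↦ (s + t)⁻²` is a positive definite kernel on `(0, ∞)`,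
being a superposition of the rank-one kernels `e^(-λ s) e^(-λ t)`. -/
lemma reflection_positive {f : ℝ → ℝ} (hf : Measurable f) {K δ R : ℝ} (hK : ∀ x, |f x| ≤ K)
    (hδ : 0 < δ) :
    0 ≤ ∫ p : ℝ × ℝ, f p.1 * f p.2 / (p.1 + p.2)^2
      ∂((volume.restrict (Set.Ioc δ R)).prod (volume.restrict (Set.Ioc δ R))) := by
  set μ : Measure ℝ := volume.restrict (Set.Ioc δ R) with hμ
  set ν : Measure ℝ := volume.restrict (Set.Ioi 0) with hν
  have hK0 : 0 ≤ K := (abs_nonneg _).trans (hK 0)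
  -- The superposition: `1 / r² = ∫ l e^(-r l) dl` over `l > 0`, which calls for Fubini.
  have hgam : ∀ r : ℝ, 0 < r → ∫ l, l * Real.exp (-(r * l)) ∂ν = 1 / r^2 := by
    intro r hr
    have h := Real.integral_rpow_mul_exp_neg_mul_Ioi (a := 2) (r := r) (by norm_num) hr
    rw [Real.Gamma_two, mul_one] at h
    rw [hν]
    have h2 : (1 / r)^(2:ℝ) = 1/r^2 := by
      rw [show (2:ℝ) = ((2:ℕ):ℝ) by norm_num, Real.rpow_natCast]; simp
    rw [h2] at h
    rw [← h]
    refine setIntegral_congr_fun measurableSet_Ioi fun l hl => ?_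
    norm_num
  have hgi : ∀ r : ℝ, 0 < r → Integrable (fun l => l * Real.exp (-(r * l))) ν := by
    intro r hr
    by_contra hcon
    have := hgam r hr
    rw [integral_undef hcon] at this
    have : 0 < 1/r^2 := by positivity
    linarith
  have hae : ∀ᵐ p ∂(μ.prod μ), δ < p.1 ∧ δ < p.2 := by
    rw [hμ, Measure.prod_restrict]
    refine (ae_restrict_mem (measurableSet_Ioc.prod measurableSet_Ioc)).mono fun p hp => ?_
    exact ⟨hp.1.1, hp.2.1⟩
  have hae3 : ∀ᵐ z ∂((μ.prod μ).prod ν), (δ < z.1.1 ∧ δ < z.1.2) ∧ 0 < z.2 := by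
    rw [hμ, hν, Measure.prod_restrict, Measure.prod_restrict]
    refine (ae_restrict_mem ((measurableSet_Ioc.prod measurableSet_Ioc).prod measurableSet_Ioi)).mono fun z hz => ?_
    exact ⟨⟨hz.1.1.1, hz.1.2.1⟩, hz.2⟩
  have hint : Integrable (Function.uncurry fun (p : ℝ × ℝ) (l : ℝ) =>
      f p.1 * f p.2 * (l * Real.exp (-((p.1 + p.2) * l)))) ((μ.prod μ).prod ν) := by
    have hb : Integrable (fun z : (ℝ × ℝ) × ℝ => K^2 * (z.2 * Real.exp (-((2*δ) * z.2))))
        ((μ.prod μ).prod ν) :=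
      Integrable.mul_prod (f := fun _ : ℝ × ℝ => K^2) (integrable_const _) (hgi (2*δ) (by positivity))
    refine hb.mono' ?_ ?_
    · refine Measurable.aestronglyMeasurable ?_
      simp only [Function.uncurry_def]
      fun_prop
    · filter_upwards [hae3] with z hz
      obtain ⟨⟨h1, h2⟩, h3⟩ := hz
      simp only [Function.uncurry_def, Real.norm_eq_abs, abs_mul, Real.abs_exp, abs_of_pos h3]
      have hx : -((z.1.1 + z.1.2) * z.2) ≤ -((2*δ) * z.2) := by nlinarith
      have he := Real.exp_le_exp.2 hx
      have := hK z.1.1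
      have := hK z.1.2
      rw [sq]
      gcongr
  have h1 : ∫ p, f p.1 * f p.2 / (p.1 + p.2)^2 ∂(μ.prod μ)
      = ∫ p, ∫ l, f p.1 * f p.2 * (l * Real.exp (-((p.1 + p.2) * l))) ∂ν ∂(μ.prod μ) := by
    refine integral_congr_ae (hae.mono fun p hp => ?_)
    simp only
    rw [integral_const_mul, hgam _ (by linarith [hp.1, hp.2])]
    ring
  rw [h1, integral_integral_swap hint]
  -- For fixed `l` the double integral factors into a square.
  have h2 : ∀ l, ∫ p, f p.1 * f p.2 * (l * Real.exp (-((p.1 + p.2) * l))) ∂(μ.prod μ)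
      = l * (∫ s, f s * Real.exp (-(s * l)) ∂μ)^2 := by
    intro l
    rw [sq, ← integral_prod_mul, ← integral_const_mul]
    refine integral_congr_ae (ae_of_all _ fun p => ?_)
    simp only
    rw [show -((p.1 + p.2) * l) = -(p.1 * l) + -(p.2*l) by ring, Real.exp_add]
    ring
  simp_rw [h2]
  refine integral_nonneg_of_ae ?_
  rw [hν]
  refine (ae_restrict_mem measurableSet_Ioi).mono fun l hl => ?_
  have : (0:ℝ) < l := hl
  simp only [Pi.zero_apply]
  positivity

/-- Reflection positivity applied to `a - b`: for the kernel `(s + t)⁻²`, pairing `a` with `a` and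
`b` with `b` costs no more than pairing `a` with `b`. Here on a bounded interval away from `0`. -/
lemma cross_le_Ioc {a b : ℝ → ℝ} (ha : Measurable a) (hb : Measurable b) {K δ R : ℝ}
    (haK : ∀ x, |a x| ≤ K) (hbK : ∀ x, |b x| ≤ K) (hδ : 0 < δ) :
    ∫⁻ p in Set.Ioc δ R ×ˢ Set.Ioc δ R,
      ENNReal.ofReal (((a p.1 - a p.2)^2 + (b p.1 - b p.2)^2) / (p.1 + p.2)^2)
    ≤ ∫⁻ p in Set.Ioc δ R ×ˢ Set.Ioc δ R,
      ENNReal.ofReal (((a p.1 - b p.2)^2 + (b p.1 - a p.2)^2) / (p.1 + p.2)^2) := by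
  have hK0 : 0 ≤ K := (abs_nonneg _).trans (haK 0)
  have hrp := reflection_positive (f := fun x => a x - b x) (by fun_prop) (K := 2*K) (R := R)
    (fun x => by have := abs_sub (a x) (b x); have := haK x; have := hbK x; linarith) hδ
  rw [Measure.prod_restrict, ← Measure.volume_eq_prod] at hrp
  set S := Set.Ioc δ R ×ˢ Set.Ioc δ R with hS
  have hSm : MeasurableSet S := measurableSet_Ioc.prod measurableSet_Ioc
  have hfin : volume S < ⊤ := by
    rw [hS, Measure.volume_eq_prod, Measure.prod_prod]
    exact ENNReal.mul_lt_top (by simp) (by simp)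
  have hI : ∀ q : ℝ × ℝ → ℝ, Measurable q → (∀ p, |q p| ≤ 8 * K^2) →
      IntegrableOn (fun p : ℝ × ℝ => q p / (p.1 + p.2)^2) S := by
    intro q hq hqb
    refine IntegrableOn.of_bound hfin (Measurable.aestronglyMeasurable (by fun_prop)) (8*K^2/δ^2) ?_
    refine (ae_restrict_mem hSm).mono fun p hp => ?_
    have h1 : δ < p.1 := hp.1.1
    have h2 : δ < p.2 := hp.2.1
    rw [Real.norm_eq_abs, abs_div, abs_of_nonneg (sq_nonneg (p.1 + p.2))]
    have := hqb p
    gcongr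
    linarith
  have hsq : ∀ x y : ℝ, |x| ≤ K → |y| ≤ K → (x - y)^2 ≤ 4 * K^2 := by
    intro x y hx hy
    have h1 := abs_le.1 hx
    have h2 := abs_le.1 hy
    have : |x - y| ≤ 2 * K := by rw [abs_le]; constructor <;> linarith
    have := sq_le_sq' (by linarith [abs_le.1 this]) (abs_le.1 this).2
    nlinarith
  have i1 := hI (fun p => (a p.1 - a p.2)^2 + (b p.1 - b p.2)^2) (by fun_prop) (fun p => by
    rw [abs_of_nonneg (by positivity)]
    linarith [hsq _ _ (haK p.1) (haK p.2), hsq _ _ (hbK p.1) (hbK p.2)])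
  have i2 := hI (fun p => (a p.1 - b p.2)^2 + (b p.1 - a p.2)^2) (by fun_prop) (fun p => by
    rw [abs_of_nonneg (by positivity)]
    linarith [hsq _ _ (haK p.1) (hbK p.2), hsq _ _ (hbK p.1) (haK p.2)])
  rw [← ofReal_integral_eq_lintegral_ofReal i1 (ae_of_all _ fun p => by positivity),
    ← ofReal_integral_eq_lintegral_ofReal i2 (ae_of_all _ fun p => by positivity)]
  apply ENNReal.ofReal_le_ofReal
  rw [← sub_nonneg, ← integral_sub i2 i1]
  have : ∀ p : ℝ × ℝ, ((a p.1 - b p.2)^2 + (b p.1 - a p.2)^2) / (p.1 + p.2)^2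
      - ((a p.1 - a p.2)^2 + (b p.1 - b p.2)^2) / (p.1 + p.2)^2
      = 2 * ((a p.1 - b p.1) * (a p.2 - b p.2) / (p.1 + p.2)^2) := fun p => by ring
  simp_rw [this]
  rw [integral_const_mul]
  linarith

/-- The inequality `cross_le_Ioc` on the whole half-line, by monotone convergence. -/
lemma cross_le {a b : ℝ → ℝ} (ha : Measurable a) (hb : Measurable b) {K : ℝ}
    (haK : ∀ x, |a x| ≤ K) (hbK : ∀ x, |b x| ≤ K) :
    ∫⁻ p in Set.Ioi (0:ℝ) ×ˢ Set.Ioi (0:ℝ),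
      ENNReal.ofReal (((a p.1 - a p.2)^2 + (b p.1 - b p.2)^2) / (p.1 + p.2)^2)
    ≤ ∫⁻ p in Set.Ioi (0:ℝ) ×ˢ Set.Ioi (0:ℝ),
      ENNReal.ofReal (((a p.1 - b p.2)^2 + (b p.1 - a p.2)^2) / (p.1 + p.2)^2) := by
  set T : ℕ → Set ℝ := fun n => Set.Ioc (1/((n:ℝ)+1)) n with hT
  have hmono : Monotone T := by
    intro n m h
    have : (n:ℝ) ≤ m := by exact_mod_cast h
    refine Set.Ioc_subset_Ioc ?_ this
    apply one_div_le_one_div_of_le <;> [positivity; linarith]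
  have hU : (⋃ n, T n ×ˢ T n) = Set.Ioi (0:ℝ) ×ˢ Set.Ioi (0:ℝ) := by
    rw [Set.iUnion_prod_of_monotone hmono hmono]
    have : (⋃ n, T n) = Set.Ioi 0 := by
      ext x
      simp only [Set.mem_iUnion, Set.mem_Ioi, hT, Set.mem_Ioc]
      constructor
      · rintro ⟨n, h1, _⟩
        exact lt_trans (by positivity) h1
      · intro hx
        obtain ⟨n, hn⟩ := exists_nat_one_div_lt hx
        obtain ⟨m, hm⟩ := exists_nat_ge x
        refine ⟨max n m, lt_of_le_of_lt ?_ hn, hm.trans (by simp)⟩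
        apply one_div_le_one_div_of_le (by positivity)
        have : (n:ℝ) ≤ ((max n m : ℕ) : ℝ) := by exact_mod_cast le_max_left _ _
        linarith
    rw [this]
  have hd : Directed (· ⊆ ·) (fun n => T n ×ˢ T n) :=
    (show Monotone fun n => T n ×ˢ T n from fun n m h => Set.prod_mono (hmono h) (hmono h)).directed_le
  rw [← hU, setLIntegral_iUnion_of_directed _ hd, setLIntegral_iUnion_of_directed _ hd]
  exact iSup_mono fun n => cross_le_Ioc ha hb haK hbK (by positivity)

/-- An integral over the line, folded onto the half-line `(0, ∞)`. -/
lemma lintegral_fold {g : ℝ → ℝ≥0∞} (hg : Measurable g) :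
    ∫⁻ s, g s = ∫⁻ s in Set.Ioi 0, (g s + g (-s)) := by
  rw [lintegral_add_left hg]
  have h1 : ∫⁻ s in Set.Ioi 0, g (-s) = ∫⁻ s in Set.Iio 0, g s := by
    rw [← lintegral_indicator measurableSet_Iio, ← lintegral_indicator measurableSet_Ioi,
      ← lintegral_neg_eq_self]
    refine lintegral_congr fun u => ?_
    by_cases hu : u < 0
    · rw [Set.indicator_of_mem (by simpa using hu), Set.indicator_of_mem (by simpa using hu), neg_neg]
    · rw [Set.indicator_of_notMem (by simpa using hu), Set.indicator_of_notMem (by simpa using hu)]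
  rw [h1, setLIntegral_congr (Iio_ae_eq_Iic (a := (0:ℝ))), add_comm, ← lintegral_add_compl g measurableSet_Iic,
    Set.compl_Iic]

/-- An integral over the plane, folded onto the open first quadrant. -/
lemma lintegral_fold₂ {q : ℝ × ℝ → ℝ≥0∞} (hq : Measurable q) :
    ∫⁻ p, q p = ∫⁻ p in Set.Ioi (0:ℝ) ×ˢ Set.Ioi (0:ℝ),
      (q (p.1, p.2) + q (p.1, -p.2) + (q (-p.1, p.2) + q (-p.1, -p.2))) := by
  rw [Measure.volume_eq_prod, lintegral_prod _ hq.aemeasurable, setLIntegral_prod _ (by fun_prop)]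
  have h1 : ∀ s, ∫⁻ t, q (s, t) = ∫⁻ t in Set.Ioi 0, (q (s, t) + q (s, -t)) := fun s =>
    lintegral_fold (by fun_prop)
  simp_rw [h1]
  rw [lintegral_fold (g := fun s => ∫⁻ t in Set.Ioi 0, (q (s, t) + q (s, -t)))]
  · refine lintegral_congr fun s => ?_
    rw [← lintegral_add_left (by fun_prop)]
  · exact Measurable.lintegral_prod_right' (f := fun p : ℝ × ℝ => q (p.1, p.2) + q (p.1, -p.2)) (by fun_prop)

/-- The two even rearrangements of `M`, obtained by reflecting either of its halves, have together at
most twice the stray-field energy of `M`. This is where reflection positivity enters. -/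
lemma NL_symm_le {M : ℝ → ℝ} (hM : Measurable M) {K : ℝ} (hK : ∀ x, |M x| ≤ K) :
    NL (fun x => M |x|) Set.univ + NL (fun x => M (-|x|)) Set.univ ≤ 2 * NL M Set.univ := by
  set b : ℝ → ℝ := fun x => M (-x) with hb
  have hbm : Measurable b := by fun_prop
  set Q := Set.Ioi (0:ℝ) ×ˢ Set.Ioi (0:ℝ) with hQ
  have hQm : MeasurableSet Q := measurableSet_Ioi.prod measurableSet_Ioi
  -- Folded to the quadrant `Q`, each energy is made of interactions of points on the same side
  -- (`X1`, kernel `(s - t)⁻²`) and on opposite sides (kernel `(s + t)⁻²`). The latter are `Y` for `M`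
  -- and `X2` for the even rearrangements, and `cross_le` compares `X2` with `Y`.
  set X1 : ℝ × ℝ → ℝ≥0∞ := fun p =>
    ENNReal.ofReal (((M p.1 - M p.2)^2 + (b p.1 - b p.2)^2) / (p.1 - p.2)^2) with hX1
  set X2 : ℝ × ℝ → ℝ≥0∞ := fun p =>
    ENNReal.ofReal (((M p.1 - M p.2)^2 + (b p.1 - b p.2)^2) / (p.1 + p.2)^2) with hX2
  set Y : ℝ × ℝ → ℝ≥0∞ := fun p =>
    ENNReal.ofReal (((M p.1 - b p.2)^2 + (b p.1 - M p.2)^2) / (p.1 + p.2)^2) with hY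
  have hX1m : Measurable X1 := by fun_prop
  have hX2m : Measurable X2 := by fun_prop
  have hNL : ∀ m : ℝ → ℝ, Measurable m → NL m Set.univ = ∫⁻ p in Q,
      (strayKer m (p.1, p.2) + strayKer m (p.1, -p.2) + (strayKer m (-p.1, p.2) + strayKer m (-p.1, -p.2))) := by
    intro m hm
    rw [← lintegral_fold₂ (measurable_strayKer hm), NL, Set.univ_prod_univ, Measure.restrict_univ]
  have e0 : NL M Set.univ = ∫⁻ p in Q, (X1 p + Y p) := by
    rw [hNL M hM]
    refine lintegral_congr fun p => ?_
    simp only [strayKer, hX1, hY, hb]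
    rw [← ENNReal.ofReal_add (by positivity) (by positivity),
      ← ENNReal.ofReal_add (by positivity) (by positivity),
      ← ENNReal.ofReal_add (by positivity) (by positivity),
      ← ENNReal.ofReal_add (by positivity) (by positivity)]
    congr 1
    rw [show (-p.1 - p.2)^2 = (p.1 + p.2)^2 by ring, show (-p.1 - -p.2)^2 = (p.1 - p.2)^2 by ring,
      show (p.1 - -p.2)^2 = (p.1 + p.2)^2 by ring]
    ring
  have e1 : NL (fun x => M |x|) Set.univ + NL (fun x => M (-|x|)) Set.univ
      = ∫⁻ p in Q, 2 * (X1 p + X2 p) := by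
    rw [hNL _ (by fun_prop), hNL _ (by fun_prop), ← lintegral_add_left]
    · refine setLIntegral_congr_fun hQm fun p hp => ?_
      have h1 : 0 < p.1 := hp.1
      have h2 : 0 < p.2 := hp.2
      simp only [strayKer, hX1, hX2, hb, abs_neg, abs_of_pos h1, abs_of_pos h2]
      rw [show (2:ℝ≥0∞) = ENNReal.ofReal 2 by norm_num]
      simp (discharger := positivity) only [← ENNReal.ofReal_add, ← ENNReal.ofReal_mul]
      congr 1
      rw [show (-p.1 - p.2)^2 = (p.1 + p.2)^2 by ring, show (-p.1 - -p.2)^2 = (p.1 - p.2)^2 by ring,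
        show (p.1 - -p.2)^2 = (p.1 + p.2)^2 by ring]
      ring
    · have : Measurable (strayKer fun x => M |x|) := measurable_strayKer (by fun_prop)
      fun_prop
  rw [e0, e1, lintegral_const_mul _ (by fun_prop : Measurable fun p => X1 p + X2 p), lintegral_add_left hX1m, lintegral_add_left hX1m]
  exact mul_le_mul_right (add_le_add le_rfl (cross_le hM hbm hK (fun x => hK _))) _

/-! ### The potential, the relaxed energy and the density of `C¹` phases -/

lemma kparam_nonneg {h : ℝ} (h0 : 0 ≤ h) : 0 ≤ kparam h := le_min h0 zero_le_one

lemma kparam_le_one (h : ℝ) : kparam h ≤ 1 := min_le_right _ _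

lemma cos_alphaParam {h : ℝ} (h0 : 0 ≤ h) : Real.cos (alphaParam h) = kparam h :=
  Real.cos_arccos (by linarith [kparam_nonneg h0]) (kparam_le_one h)

lemma alphaParam_nonneg (h : ℝ) : 0 ≤ alphaParam h := Real.arccos_nonneg _

lemma alphaParam_le {h : ℝ} (h0 : 0 ≤ h) : alphaParam h ≤ π / 2 :=
  Real.arccos_le_pi_div_two.2 (kparam_nonneg h0)

lemma mem_limSet_iff {h : ℝ} (h0 : 0 ≤ h) {θ : ℝ} : θ ∈ limSet h ↔ Real.cos θ = kparam h := by
  rw [← cos_alphaParam h0, eq_comm, Real.cos_eq_cos_iff]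
  unfold limSet
  simp only [Set.mem_ofPred_eq]
  constructor
  · rintro ⟨n, hn | hn⟩
    · exact ⟨n, Or.inl (by rw [hn]; ring)⟩
    · exact ⟨n, Or.inr (by rw [hn]; ring)⟩
  · rintro ⟨n, hn | hn⟩
    · exact ⟨n, Or.inl (by rw [hn]; ring)⟩
    · exact ⟨n, Or.inr (by rw [hn]; ring)⟩

lemma two_Wpot (h θ : ℝ) : 2 * Wpot h θ =
    (Real.cos θ - kparam h)^2 + 2 * (h - kparam h) * (kparam h - Real.cos θ) := by
  unfold Wpot
  ring

lemma Wpot_lower (h θ : ℝ) : (Real.cos θ - kparam h)^2 ≤ 2 * Wpot h θ := by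
  rw [two_Wpot]
  rcases le_total h 1 with hh | hh
  · simp [kparam, min_eq_left hh]
  · have : kparam h = 1 := min_eq_right hh
    rw [this]
    have := Real.cos_le_one θ
    nlinarith

lemma Wpot_nonneg (h θ : ℝ) : 0 ≤ Wpot h θ := by
  have := Wpot_lower h θ
  nlinarith [sq_nonneg (Real.cos θ - kparam h)]

lemma Wpot_eq_zero {h θ : ℝ} (hθ : Real.cos θ = kparam h) : Wpot h θ = 0 := by
  have := two_Wpot h θ
  rw [hθ] at this
  linarith

lemma Wpot_congr {h x y : ℝ} (hc : Real.cos x = Real.cos y) : Wpot h x = Wpot h y := by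
  unfold Wpot
  rw [hc]

lemma continuous_Wpot (h : ℝ) : Continuous (Wpot h) := by
  unfold Wpot
  fun_prop

lemma young_sq (p q : ℝ) {δ : ℝ} (hδ : 0 < δ) :
    p^2 ≤ (1 + δ) * q^2 + (1 + 1/δ) * (p - q)^2 := by
  have : (1 + δ) * q^2 + (1 + 1/δ) * (p - q)^2 - p^2 = (δ * q - (p - q))^2/δ := by
    field_simp
    ring
  have h2 : 0 ≤ (δ * q - (p - q))^2/δ := by positivity
  linarith

lemma cos_sub_sq_le (x y : ℝ) : (Real.cos x - Real.cos y)^2 ≤ (x - y)^2 := by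
  rw [sq_le_sq]
  simpa [Real.dist_eq] using Real.lipschitzWith_cos.dist_le_mul x y

lemma sin_sub_sq_le (x y : ℝ) : (Real.sin x - Real.sin y)^2 ≤ (x - y)^2 := by
  rw [sq_le_sq]
  simpa [Real.dist_eq] using Real.lipschitzWith_sin.dist_le_mul x y

lemma Wpot_le_add {h : ℝ} (h0 : 0 ≤ h) (x y : ℝ) {δ : ℝ} (hδ : 0 < δ) :
    Wpot h y ≤ (1 + δ) * Wpot h x + (1 + 1/δ) * ((1 + h) * (x - y)^2) := by
  have a1 := young_sq (Real.cos y - kparam h) (Real.cos x - kparam h) hδ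
  have a2 := cos_sub_sq_le y x
  have hd : 0 ≤ 1 + 1/δ := by positivity
  have e : (Real.cos y - kparam h - (Real.cos x - kparam h))^2 = (Real.cos y - Real.cos x)^2 := by ring
  rw [e] at a1
  have a3 := mul_le_mul_of_nonneg_left a2 hd
  have e2 : (y - x)^2 = (x-y)^2 := by ring
  rw [e2] at a3
  suffices hs : 2 * (h - kparam h) * (kparam h - Real.cos y) ≤
      (1 + δ) * (2 * (h - kparam h) * (kparam h - Real.cos x)) + (1 + 1/δ) * (h * (x-y)^2) by
    have b1 := two_Wpot h x
    have b2 := two_Wpot h y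
    have hp : 0 ≤ (1 + 1/δ) * (x-y)^2 := by positivity
    have hp' : 0 ≤ (1 + 1/δ) * (h*(x-y)^2) := by positivity
    nlinarith
  rcases le_total h 1 with hh | hh
  · simp only [kparam, min_eq_left hh, sub_self, mul_zero, zero_mul, zero_add]
    positivity
  · have hk : kparam h = 1 := min_eq_right hh
    rw [hk]
    have c1 : ∀ z, 1 - Real.cos z = 2 * (Real.sin (z/2))^2 := by
      intro z
      have := Real.cos_sq (z/2)
      have h2 := Real.sin_sq_add_cos_sq (z/2)
      rw [show 2 * (z/2) = z by ring] at this
      linarith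
    rw [c1, c1]
    have d1 := young_sq (Real.sin (y/2)) (Real.sin (x/2)) hδ
    have d2 := mul_le_mul_of_nonneg_left (sin_sub_sq_le (y/2) (x/2)) hd
    have e3 : (y/2 - x/2)^2 = (x-y)^2/4 := by ring
    rw [e3] at d2
    have hh' : 0 ≤ h - 1 := by linarith
    have d3 := mul_le_mul_of_nonneg_left (d1.trans (add_le_add_right d2 _)) hh'
    have hp : 0 ≤ (1 + 1/δ) * (x-y)^2 := by positivity
    nlinarith

lemma Wpot_le_sq {h : ℝ} (h0 : 0 ≤ h) {b : ℝ} (hb : Real.cos b = kparam h) (y : ℝ) :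
    Wpot h y ≤ 2 * ((1 + h) * (y - b)^2) := by
  have := Wpot_le_add h0 b y one_pos
  rw [Wpot_eq_zero hb] at this
  nlinarith

/-- The relaxed energy of a phase with a gauge of mass `A`: the exchange term `½ ∫ φ'²` is replaced
by `A / 2`, so that no differentiability is needed. -/
def relE (h : ℝ) (φ : ℝ → ℝ) (A : ℝ) : ℝ≥0∞ :=
  ENNReal.ofReal (A/2) + (∫⁻ x, ENNReal.ofReal (Wpot h (φ x))) +
    ENNReal.ofReal (1/(4*π)) * NL (fun x => Real.cos (φ x)) Set.univ

lemma energy_eq {h : ℝ} {φ : ℝ → ℝ} (hφ : ContDiff ℝ 1 φ) : energy h φ =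
    ENNReal.ofReal (1/2) * (∫⁻ x, ENNReal.ofReal ((deriv φ x)^2)) +
    (∫⁻ x, ENNReal.ofReal (Wpot h (φ x))) +
    ENNReal.ofReal (1/(4*π)) * NL (fun x => Real.cos (φ x)) Set.univ := by
  have hc : Continuous φ := hφ.continuous
  have hd : Continuous (deriv φ) := hφ.continuous_deriv le_rfl
  have hW := continuous_Wpot h
  rw [NL_univ (by fun_prop)]
  unfold energy
  congr 1
  have : ∀ x, ENNReal.ofReal ((deriv φ x)^2 + 2 * Wpot h (φ x)) =
      ENNReal.ofReal ((deriv φ x)^2) + ENNReal.ofReal 2 * ENNReal.ofReal (Wpot h (φ x)) := by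
    intro x
    rw [ENNReal.ofReal_add (sq_nonneg _) (by linarith [Wpot_nonneg h (φ x)]),
      ENNReal.ofReal_mul zero_le_two]
  simp_rw [this]
  rw [lintegral_add_left (by fun_prop), lintegral_const_mul _ (by fun_prop), mul_add, ← mul_assoc,
    ← ENNReal.ofReal_mul (by norm_num)]
  norm_num

/-- Removal of a relative and an absolute error, both of order `δ`. -/
lemma le_of_forall_delta {a b : ℝ≥0∞} {K : ℝ}
    (hab : ∀ δ : ℝ, 0 < δ → δ ≤ 1 → a ≤ ENNReal.ofReal (1 + δ) * b + ENNReal.ofReal (δ * K)) :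
    a ≤ b := by
  have h1 : Tendsto (fun δ : ℝ => ENNReal.ofReal (1 + δ) * b + ENNReal.ofReal (δ * K)) (𝓝[>] 0)
      (𝓝 (ENNReal.ofReal (1 + 0) * b + ENNReal.ofReal (0 * K))) := by
    refine tendsto_nhdsWithin_of_tendsto_nhds ?_
    refine Tendsto.add (ENNReal.Tendsto.mul_const ?_ (Or.inl (by simp))) ?_
    · exact (ENNReal.continuous_ofReal.comp (by fun_prop : Continuous fun δ : ℝ => 1 + δ)).tendsto 0
    · exact (ENNReal.continuous_ofReal.comp (by fun_prop : Continuous fun δ : ℝ => δ * K)).tendsto 0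
  have h2 : ENNReal.ofReal (1 + 0) * b + ENNReal.ofReal (0 * K) = b := by simp
  rw [h2] at h1
  refine ge_of_tendsto h1 ?_
  filter_upwards [Ioc_mem_nhdsGT (zero_lt_one' ℝ)] with δ hδ
  exact hab δ hδ.1 hδ.2

lemma deg_eq {φ : ℝ → ℝ} {a b d : ℝ} (ha : Tendsto φ atTop (𝓝 a)) (hb : Tendsto φ atBot (𝓝 b))
    (hd : a - b = 2 * π * d) : deg φ = d := by
  unfold deg
  rw [ha.limUnder_eq, hb.limUnder_eq, hd]
  field_simp

/-- Steklov average: smoothing a phase with a gauge at scale `ε`. -/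
lemma exists_steklov {φ F : ℝ → ℝ} {A ε : ℝ} (hg : Gauge φ F A) (hε : 0 < ε) :
    ∃ u : ℝ → ℝ, ContDiff ℝ 1 u ∧ (∀ x, ∃ c ∈ Set.Ioo x (x + ε), u x = φ c) ∧
      ∫⁻ x, ENNReal.ofReal ((deriv u x)^2) ≤ ENNReal.ofReal A := by
  have hc := hg.continuous
  set P : ℝ → ℝ := fun x => ∫ t in (0:ℝ)..x, φ t with hP
  have hP' : ∀ x, HasDerivAt P (φ x) x := fun x =>
    intervalIntegral.integral_hasDerivAt_right (hc.intervalIntegrable _ _)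
      (hc.stronglyMeasurableAtFilter _ _) hc.continuousAt
  have hu : ∀ x, HasDerivAt (fun x => (P (x + ε) - P x)/ε) ((φ (x + ε) - φ x)/ε) x := fun x =>
    (((hP' (x+ε)).comp_add_const x ε).sub (hP' x)).div_const ε
  have hder : deriv (fun x => (P (x + ε) - P x)/ε) = fun x => (φ (x + ε) - φ x)/ε :=
    funext fun x => (hu x).deriv
  refine ⟨fun x => (P (x + ε) - P x)/ε, ?_, ?_, ?_⟩
  · rw [contDiff_one_iff_deriv]
    refine ⟨fun x => (hu x).differentiableAt, ?_⟩
    rw [hder]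
    fun_prop
  · intro x
    obtain ⟨c, hc1, hc2⟩ := exists_hasDerivAt_eq_slope P φ (show x < x + ε by linarith)
      (fun y _ => (hP' y).continuousAt.continuousWithinAt) (fun y _ => hP' y)
    refine ⟨c, hc1, ?_⟩
    rw [hc2]
    simp
  · rw [hder]
    have h1 := hg.lintegral_sq_incr hε.le
    calc ∫⁻ x, ENNReal.ofReal (((φ (x + ε) - φ x)/ε)^2)
        = ∫⁻ x, ENNReal.ofReal (1/ε^2) * ENNReal.ofReal ((φ (x + ε) - φ x)^2) := by
          refine lintegral_congr fun x => ?_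
          rw [← ENNReal.ofReal_mul (by positivity)]
          congr 1
          ring
      _ = ENNReal.ofReal (1/ε^2) * ∫⁻ x, ENNReal.ofReal ((φ (x + ε) - φ x)^2) :=
          lintegral_const_mul _ (by fun_prop)
      _ ≤ ENNReal.ofReal (1/ε^2) * ENNReal.ofReal (ε^2*A) := mul_le_mul_right h1 _
      _ = ENNReal.ofReal A := by
          rw [← ENNReal.ofReal_mul (by positivity)]
          congr 1
          field_simp

/-- Density of `C¹` phases: relaxing them to phases with a gauge does not lower the infimum
`ℰ_h`. -/
lemma Einf_le_relE {h : ℝ} (h0 : 0 ≤ h) {φ F : ℝ → ℝ} {A Lp Lm d : ℝ} (hg : Gauge φ F A)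
    (hLp : Real.cos Lp = kparam h) (hLm : Real.cos Lm = kparam h)
    (hp : Tendsto φ atTop (𝓝 Lp)) (hm : Tendsto φ atBot (𝓝 Lm)) (hd : Lp - Lm = 2 * π * d) :
    Einf h d ≤ relE h φ A := by
  rcases eq_or_ne (relE h φ A) ⊤ with htop | htop
  · rw [htop]; exact le_top
  have hA := hg.nonneg
  have hc := hg.continuous
  have hWc := continuous_Wpot h
  refine le_of_forall_delta (K := 2 * ((1 + h) * A) + 32 * A) fun δ hδ hδ1 => ?_
  have hδ2 : 0 < δ^2 := by positivity
  -- The average at scale `δ²` is within `δ² √A` of `φ` in `L²`, so by Young's inequality with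
  -- parameter `δ` all the error terms are `O(δ)`.
  obtain ⟨u, hu, hmv, hud⟩ := exists_steklov hg hδ2
  obtain ⟨G, hG, hGB⟩ := exists_gauge_of_contDiff hu (lt_of_le_of_lt hud ENNReal.ofReal_lt_top)
  set B := (∫⁻ x, ENNReal.ofReal ((deriv u x)^2)).toReal with hB
  have hBA : B ≤ A := by
    rw [← hGB] at hud
    exact (ENNReal.ofReal_le_ofReal_iff hA).1 hud
  have huc := hu.continuous
  have hsq : ∀ x, (u x - φ x)^2 ≤ δ^2 * (F (x + δ^2) - F x) := by
    intro x
    obtain ⟨c, hc1, hc2⟩ := hmv x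
    rw [hc2]
    refine (hg.2 x c hc1.1.le).trans ?_
    have h1 := hg.monotone hc1.1.le
    have h2 := hg.monotone hc1.2.le
    have h3 := hc1.2
    gcongr <;> linarith
  have hL2 : ∫⁻ x, ENNReal.ofReal ((u x - φ x)^2) ≤ ENNReal.ofReal (δ^4 * A) := by
    calc ∫⁻ x, ENNReal.ofReal ((u x - φ x)^2)
        ≤ ∫⁻ x, ENNReal.ofReal (δ^2) * ENNReal.ofReal (F (x + δ^2) - F x) := by
          refine lintegral_mono fun x => ?_
          rw [← ENNReal.ofReal_mul hδ2.le]
          exact ENNReal.ofReal_le_ofReal (hsq x)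
      _ = ENNReal.ofReal (δ^2) * ∫⁻ x, ENNReal.ofReal (F (x + δ^2) - F x) :=
          lintegral_const_mul' _ _ ENNReal.ofReal_ne_top
      _ ≤ ENNReal.ofReal (δ^2) * ENNReal.ofReal (δ^2 * A) := mul_le_mul_right (hg.lintegral_incr hδ2.le) _
      _ = ENNReal.ofReal (δ^4 * A) := by
          rw [← ENNReal.ofReal_mul hδ2.le]
          congr 1
          ring
  have hup : Tendsto u atTop (𝓝 Lp) := by
    choose c hc1 hc2 using hmv
    have : u = φ ∘ c := funext hc2
    rw [this]
    exact hp.comp (tendsto_atTop_mono (fun x => (hc1 x).1.le) tendsto_id)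
  have hum : Tendsto u atBot (𝓝 Lm) := by
    choose c hc1 hc2 using hmv
    have : u = φ ∘ c := funext hc2
    rw [this]
    refine hm.comp (tendsto_atBot_mono (fun x => (hc1 x).2.le) ?_)
    exact tendsto_atBot_add_const_right _ _ tendsto_id
  have hi : 0 ≤ 1 + 1/δ := by positivity
  have hW : ∫⁻ x, ENNReal.ofReal (Wpot h (u x)) ≤
      ENNReal.ofReal (1+δ) * (∫⁻ x, ENNReal.ofReal (Wpot h (φ x)))
        + ENNReal.ofReal ((1 + 1/δ) * ((1 + h) * (δ^4 * A))) := by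
    calc ∫⁻ x, ENNReal.ofReal (Wpot h (u x)) ≤
        ∫⁻ x, (ENNReal.ofReal (1+δ) * ENNReal.ofReal (Wpot h (φ x))
          + ENNReal.ofReal ((1 + 1/δ) * (1 + h)) * ENNReal.ofReal ((u x - φ x)^2)) := by
          refine lintegral_mono fun x => ?_
          rw [← ENNReal.ofReal_mul (by positivity), ← ENNReal.ofReal_mul (by positivity),
            ← ENNReal.ofReal_add (mul_nonneg (by positivity) (Wpot_nonneg _ _)) (by positivity)]
          apply ENNReal.ofReal_le_ofReal
          refine (Wpot_le_add h0 (φ x) (u x) hδ).trans (le_of_eq ?_)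
          ring
      _ = ENNReal.ofReal (1+δ) * (∫⁻ x, ENNReal.ofReal (Wpot h (φ x))) +
          ENNReal.ofReal ((1 + 1/δ) * (1 + h)) * ∫⁻ x, ENNReal.ofReal ((u x - φ x)^2) := by
          rw [lintegral_add_left (by fun_prop), lintegral_const_mul _ (by fun_prop),
            lintegral_const_mul _ (by fun_prop)]
      _ ≤ ENNReal.ofReal (1+δ) * (∫⁻ x, ENNReal.ofReal (Wpot h (φ x))) +
          ENNReal.ofReal ((1 + 1/δ) * (1 + h)) * ENNReal.ofReal (δ^4 * A) :=
          add_le_add_right (mul_le_mul_right hL2 _) _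
      _ = _ := by
          rw [← ENNReal.ofReal_mul (by positivity)]
          congr 2
          ring
  have hN : NL (fun x => Real.cos (u x)) Set.univ ≤
      ENNReal.ofReal (1+δ) * NL (fun x => Real.cos (φ x)) Set.univ
        + ENNReal.ofReal ((1 + 1/δ) * (16 * δ^2 * A)) := by
    refine (NL_le_add (m := fun x => Real.cos (φ x)) (by fun_prop) (by fun_prop) hδ).trans ?_
    rw [ENNReal.ofReal_mul hi]
    refine add_le_add_right (mul_le_mul_right ?_ _) _
    refine (NL_le (hG.cos.sub hg.cos) hδ2 MeasurableSet.univ (β := δ^4 * A) ?_ (by positivity)).trans ?_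
    · rw [Measure.restrict_univ]
      refine le_trans (lintegral_mono fun x => ?_) hL2
      exact ENNReal.ofReal_le_ofReal (cos_sub_sq_le _ _)
    · apply ENNReal.ofReal_le_ofReal
      have : 8 * (δ^4*A)/δ^2 = 8 * δ^2 * A := by field_simp
      rw [this]
      nlinarith
  have hπ : 1/(4*π) ≤ 1 := by
    rw [div_le_one (by positivity)]
    linarith [Real.pi_gt_three]
  have hE : energy h u ≤ ENNReal.ofReal (1+δ) * relE h φ A
      + ENNReal.ofReal (δ * (2 * ((1 + h) * A) + 32 * A)) := by
    rw [energy_eq hu]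
    have hx : ENNReal.ofReal (1/2) * (∫⁻ x, ENNReal.ofReal ((deriv u x)^2)) ≤
        ENNReal.ofReal (1+δ) * ENNReal.ofReal (A/2) := by
      refine (mul_le_mul_right hud _).trans ?_
      rw [← ENNReal.ofReal_mul (by norm_num), ← ENNReal.ofReal_mul (by positivity)]
      apply ENNReal.ofReal_le_ofReal
      nlinarith
    have hN2 := mul_le_mul_right hN (ENNReal.ofReal (1/(4*π)))
    refine (add_le_add (add_le_add hx hW) hN2).trans ?_
    have h1d : 1 + 1/δ ≤ 2/δ := by
      rw [le_div_iff₀ hδ, add_mul, div_mul_cancel₀ _ hδ.ne']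
      linarith
    have hfin : ENNReal.ofReal ((1 + 1/δ) * ((1 + h) * (δ^4 * A))) +
        ENNReal.ofReal (1/(4*π)) * ENNReal.ofReal ((1 + 1/δ) * (16 * δ^2 * A)) ≤
        ENNReal.ofReal (δ * (2 * ((1 + h) * A) + 32 * A)) := by
      rw [← ENNReal.ofReal_mul (by positivity), ← ENNReal.ofReal_add (by positivity) (by positivity)]
      apply ENNReal.ofReal_le_ofReal
      have i1 : (1 + 1/δ) * ((1 + h) * (δ^4 * A)) ≤ 2/δ * ((1 + h) * (δ^4 * A)) := by gcongr
      have i2 : 1/(4*π) * ((1 + 1/δ) * (16 * δ^2 * A)) ≤ 1 * (2/δ * (16 * δ^2 * A)) := by gcongr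
      have i3 : 2/δ * ((1 + h) * (δ^4 * A)) = δ^3 * (2 * ((1 + h) * A)) := by field_simp
      have i4 : 1 * (2/δ * (16 * δ^2 * A)) = δ * (32 * A) := by field_simp; ring
      have i5 : δ^3 * (2 * ((1 + h) * A)) ≤ δ * (2 * ((1 + h) * A)) := by
        gcongr
        nlinarith
      linarith
    calc _ = ENNReal.ofReal (1+δ) * relE h φ A +
          (ENNReal.ofReal ((1 + 1/δ) * ((1 + h) * (δ^4 * A))) +
        ENNReal.ofReal (1/(4*π)) * ENNReal.ofReal ((1 + 1/δ) * (16 * δ^2 * A))) := by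
          unfold relE; ring
      _ ≤ _ := add_le_add_right hfin _
  have hmem : u ∈ AA h d := by
    refine ⟨⟨hu, ⟨Lp, (mem_limSet_iff h0).2 hLp, hup⟩, ⟨Lm, (mem_limSet_iff h0).2 hLm, hum⟩, ?_⟩,
      deg_eq hup hum hd⟩
    exact lt_of_le_of_lt hE (ENNReal.add_lt_top.2
      ⟨ENNReal.mul_lt_top ENNReal.ofReal_lt_top htop.lt_top, ENNReal.ofReal_lt_top⟩)
  exact (iInf₂_le u hmem).trans hE

/-! ### Gluing, finiteness and folding -/

lemma cs_glue {p q u v a b : ℝ} (hu : 0 ≤ u) (hv : 0 ≤ v) (ha : 0 ≤ a) (hb : 0 ≤ b)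
    (hp : p^2 ≤ u * a) (hq : q^2 ≤ v * b) : (p + q)^2 ≤ (u + v) * (a + b) := by
  have h1 : (2 * (p * q))^2 ≤ (u * b + v * a)^2 := by
    have := mul_le_mul hp hq (sq_nonneg _) (by positivity)
    nlinarith [sq_nonneg (u * b - v * a)]
  have h2 := abs_le_of_sq_le_sq h1 (by positivity)
  nlinarith [(abs_le.1 (abs_le_of_sq_le_sq h1 (by positivity))).2]

/-- The gauge inequality may be checked separately on both sides of a point. -/
lemma gauge_glue {φ F : ℝ → ℝ} (c : ℝ)
    (h1 : ∀ x y, x ≤ y → y ≤ c → F x ≤ F y ∧ (φ y - φ x)^2 ≤ (y - x) * (F y - F x))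
    (h2 : ∀ x y, c ≤ x → x ≤ y → F x ≤ F y ∧ (φ y - φ x)^2 ≤ (y - x) * (F y - F x)) :
    ∀ x y, x ≤ y → F x ≤ F y ∧ (φ y - φ x)^2 ≤ (y - x) * (F y - F x) := by
  intro x y hxy
  rcases le_total y c with hy | hy
  · exact h1 x y hxy hy
  rcases le_total c x with hx | hx
  · exact h2 x y hx hxy
  obtain ⟨a1, a2⟩ := h1 x c hx le_rfl
  obtain ⟨b1, b2⟩ := h2 c y le_rfl hy
  refine ⟨a1.trans b1, ?_⟩
  have := cs_glue (sub_nonneg.2 hy) (sub_nonneg.2 hx) (sub_nonneg.2 b1) (sub_nonneg.2 a1) b2 a2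
  calc (φ y - φ x)^2 = (φ y - φ c + (φ c - φ x))^2 := by ring
    _ ≤ _ := this
    _ = _ := by ring

lemma NL_sub_const (m : ℝ → ℝ) (k : ℝ) (S : Set ℝ) : NL (fun x => m x - k) S = NL m S := by
  unfold NL strayKer
  simp

lemma lintegral_cos_sub_sq_le {h : ℝ} {φ : ℝ → ℝ} (hφ : Measurable φ) (S : Set ℝ) :
    ∫⁻ x in S, ENNReal.ofReal ((Real.cos (φ x) - kparam h)^2)
      ≤ 2 * ∫⁻ x in S, ENNReal.ofReal (Wpot h (φ x)) := by
  have := continuous_Wpot h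
  rw [← lintegral_const_mul _ (by fun_prop)]
  refine lintegral_mono fun x => ?_
  rw [show (2:ℝ≥0∞) = ENNReal.ofReal 2 by norm_num, ← ENNReal.ofReal_mul zero_le_two]
  exact ENNReal.ofReal_le_ofReal (Wpot_lower h _)

section params
variable {h : ℝ} {ℓ : ℕ} {d : ℝ}

lemma pi_mul_d (hd : d = (ℓ : ℝ) - alphaParam h / π) : π * d = π * ℓ - alphaParam h := by
  rw [hd, mul_sub, mul_div_cancel₀ _ Real.pi_ne_zero]

lemma pi_d_pos (h0 : 0 ≤ h) (hℓ : 1 ≤ ℓ) (hd : d = (ℓ : ℝ) - alphaParam h / π) :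
    0 < π * d := by
  rw [pi_mul_d hd]
  have h1 := alphaParam_le h0
  have h2 : (1:ℝ) ≤ ℓ := by exact_mod_cast hℓ
  nlinarith [Real.pi_pos]

lemma pi_d_le (hd : d = (ℓ : ℝ) - alphaParam h / π) : π * d ≤ π * ℓ := by
  rw [pi_mul_d hd]
  linarith [alphaParam_nonneg h]

lemma cos_add_end (h0 : 0 ≤ h) (hd : d = (ℓ : ℝ) - alphaParam h / π) :
    Real.cos (π * d + π * ℓ) = kparam h := by
  rw [pi_mul_d hd, ← cos_alphaParam h0,
    show π * ℓ - alphaParam h + π * ℓ = (ℓ : ℝ) * (2 * π) - alphaParam h by ring,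
    Real.cos_nat_mul_two_pi_sub]

lemma cos_neg_add (ℓ : ℕ) (y : ℝ) : Real.cos (-y + π * ℓ) = Real.cos (y + π * ℓ) := by
  rw [show -y + π * ℓ = (ℓ : ℝ) * (2 * π) - (y + π * ℓ) by ring, Real.cos_nat_mul_two_pi_sub]

lemma cos_sub_end (h0 : 0 ≤ h) (hd : d = (ℓ : ℝ) - alphaParam h / π) :
    Real.cos (-(π * d) + π * ℓ) = kparam h := by
  rw [cos_neg_add, cos_add_end h0 hd]

lemma Einf_lt_top (h0 : 0 ≤ h) (hℓ : 1 ≤ ℓ) (hd : d = (ℓ : ℝ) - alphaParam h / π) :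
    Einf h d < ⊤ := by
  have hD := pi_d_pos h0 hℓ hd
  set D := π * d with hDdef
  -- The piecewise linear transition from `-D` to `D` has finite relaxed energy.
  set cl : ℝ → ℝ := fun x => max (-D) (min x D) with hcl
  have hcl1 : ∀ x, -D ≤ cl x ∧ cl x ≤ D := fun x =>
    ⟨le_max_left _ _, max_le (by linarith) (min_le_right _ _)⟩
  have hcl2 : ∀ x y, x ≤ y → 0 ≤ cl y - cl x ∧ cl y - cl x ≤ y - x := by
    intro x y hxy
    simp only [hcl]
    rcases max_cases (-D) (min x D) with ⟨e1, e2⟩ | ⟨e1, e2⟩ <;>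
    rcases max_cases (-D) (min y D) with ⟨f1, f2⟩ | ⟨f1, f2⟩ <;>
    rcases min_cases x D with ⟨g1, g2⟩ | ⟨g1, g2⟩ <;>
    rcases min_cases y D with ⟨i1, i2⟩ | ⟨i1, i2⟩ <;>
    rw [e1, f1] <;> constructor <;> linarith
  have hg : Gauge (fun x => cl x + π * ℓ) (fun x => cl x + D) (2 * D) := by
    refine ⟨fun x => ⟨by linarith [hcl1 x], by linarith [hcl1 x]⟩, fun x y hxy => ?_⟩
    obtain ⟨h1, h2⟩ := hcl2 x y hxy
    have := mul_le_mul_of_nonneg_right h2 h1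
    calc _ = (cl y - cl x) * (cl y - cl x) := by ring
      _ ≤ _ := this
      _ = _ := by ring
  have hp : Tendsto (fun x => cl x + π * ℓ) atTop (𝓝 (D + π * ℓ)) := by
    refine tendsto_const_nhds.congr' ?_
    filter_upwards [eventually_ge_atTop D] with x hx
    simp only [hcl]
    rw [min_eq_right hx, max_eq_right (by linarith)]
  have hm : Tendsto (fun x => cl x + π * ℓ) atBot (𝓝 (-D + π * ℓ)) := by
    refine tendsto_const_nhds.congr' ?_
    filter_upwards [eventually_le_atBot (-D)] with x hx
    simp only [hcl]
    rw [min_eq_left (by linarith), max_eq_left (by linarith)]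
  refine lt_of_le_of_lt (Einf_le_relE h0 hg (cos_add_end h0 hd) (cos_sub_end h0 hd) hp hm
    (by ring)) ?_
  have hclc : Continuous cl := by fun_prop
  have hW : ∫⁻ x, ENNReal.ofReal (Wpot h (cl x + π * ℓ)) < ⊤ := by
    have hb : ∀ x, ENNReal.ofReal (Wpot h (cl x + π * ℓ)) ≤
        (Set.Icc (-D) D).indicator (fun _ => ENNReal.ofReal (2 * ((1 + h) * (2*D)^2))) x := by
      intro x
      by_cases hx : x ∈ Set.Icc (-D) D
      · rw [Set.indicator_of_mem hx]
        apply ENNReal.ofReal_le_ofReal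
        refine (Wpot_le_sq h0 (cos_add_end h0 hd) _).trans ?_
        have : (cl x + π * ℓ - (π * d + π * ℓ))^2 ≤ (2*D)^2 := by
          apply sq_le_sq'
          · linarith [hcl1 x]
          · linarith [hcl1 x]
        gcongr
      · have h1 : cl x = D ∨ cl x = -D := by
          simp only [hcl]
          rw [Set.mem_Icc, not_and_or, not_le, not_le] at hx
          rcases hx with hx | hx
          · right
            rw [min_eq_left (by linarith), max_eq_left (by linarith)]
          · left
            rw [min_eq_right hx.le, max_eq_right (by linarith)]
        have : Wpot h (cl x + π * ℓ) = 0 := by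
          apply Wpot_eq_zero
          rcases h1 with h1 | h1 <;> rw [h1]
          · exact cos_add_end h0 hd
          · exact cos_sub_end h0 hd
        rw [this]
        simp
    refine lt_of_le_of_lt (lintegral_mono hb) ?_
    rw [lintegral_indicator_const measurableSet_Icc]
    exact ENNReal.mul_lt_top ENNReal.ofReal_lt_top (by simp)
  have hN : NL (fun x => Real.cos (cl x + π * ℓ)) Set.univ < ⊤ := by
    rw [← NL_sub_const _ (kparam h)]
    have hl := lintegral_cos_sub_sq_le (h := h) hg.continuous.measurable Set.univ
    rw [Measure.restrict_univ] at hl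
    have hfin := ENNReal.mul_lt_top (a := 2) (by simp) hW
    refine lt_of_le_of_lt (NL_le (hg.cos.of_le (fun x y => by simp)) one_pos MeasurableSet.univ
      (β := (2 * ∫⁻ x, ENNReal.ofReal (Wpot h (cl x + π * ℓ))).toReal) ?_ (by positivity))
      ENNReal.ofReal_lt_top
    rw [Measure.restrict_univ, ENNReal.ofReal_toReal hfin.ne]
    exact hl
  exact ENNReal.add_lt_top.2 ⟨ENNReal.add_lt_top.2 ⟨ENNReal.ofReal_lt_top, hW⟩,
    ENNReal.mul_lt_top ENNReal.ofReal_lt_top hN⟩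

/-- The fold `y ↦ dist(y, 2πℓℤ)`. -/
def fold (ℓ : ℕ) (y : ℝ) : ℝ := ‖(y : AddCircle (2 * π * ℓ))‖

lemma fold_nonneg (ℓ : ℕ) (y : ℝ) : 0 ≤ fold ℓ y := norm_nonneg _

lemma fold_le (hℓ : 1 ≤ ℓ) (y : ℝ) : fold ℓ y ≤ π * ℓ := by
  have hp : (0:ℝ) < 2 * π * ℓ := by
    have : (0:ℝ) < ℓ := by exact_mod_cast hℓ
    positivity
  have := AddCircle.norm_le_half_period (2 * π * ℓ) (x := (y : AddCircle (2 * π * ℓ))) hp.ne'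
  unfold fold
  rw [abs_of_pos hp] at this
  linarith

lemma fold_lip (ℓ : ℕ) (x y : ℝ) : |fold ℓ y - fold ℓ x| ≤ |y - x| := by
  unfold fold
  refine (abs_norm_sub_norm_le _ _).trans ?_
  rw [← AddCircle.coe_sub]
  exact QuotientAddGroup.norm_mk_le_norm

lemma fold_eq_self (hℓ : 1 ≤ ℓ) {y : ℝ} (h1 : 0 ≤ y) (h2 : y ≤ π * ℓ) : fold ℓ y = y := by
  have hp : (0:ℝ) < 2 * π * ℓ := by
    have : (0:ℝ) < ℓ := by exact_mod_cast hℓ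
    positivity
  unfold fold
  rw [(AddCircle.norm_coe_eq_abs_iff _ hp.ne').2, abs_of_nonneg h1]
  rw [abs_of_nonneg h1, abs_of_pos hp]
  linarith

lemma fold_neg (ℓ : ℕ) (y : ℝ) : fold ℓ (-y) = fold ℓ y := by
  unfold fold
  rw [AddCircle.coe_neg, norm_neg]

lemma cos_fold (ℓ : ℕ) (y : ℝ) : Real.cos (fold ℓ y + π * ℓ) = Real.cos (y + π * ℓ) := by
  have : ∃ n : ℤ, fold ℓ y = |y - n * (2 * π * ℓ)| := ⟨_, AddCircle.norm_eq _⟩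
  obtain ⟨n, hn⟩ := this
  have key : Real.cos (y - n * (2 * π * ℓ) + π * ℓ) = Real.cos (y + π * ℓ) := by
    rw [show y - n * (2 * π * ℓ) + π * ℓ = (y + π * ℓ) - ((n * ℓ : ℤ) : ℝ) * (2 * π) by push_cast; ring,
      Real.cos_sub_int_mul_two_pi]
  rw [hn]
  rcases abs_choice (y - n * (2 * π * ℓ)) with e | e <;> rw [e]
  · exact key
  · rw [cos_neg_add, key]

end params

/-! ### Symmetrization -/

/-- An odd phase `ψ` (centred at `πℓ`) with `0 ≤ ψ ≤ πℓ` on the right half-line, connecting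
`-πd` to `πd`, together with a gauge compatible with the symmetry. -/
def SymPhase (ℓ : ℕ) (d : ℝ) (ψ F : ℝ → ℝ) (A : ℝ) : Prop :=
  Gauge ψ F A ∧ (∀ x, ψ (-x) = -ψ x) ∧ (∀ x, F (-x) = A - F x) ∧
    (∀ x, 0 ≤ x → 0 ≤ ψ x ∧ ψ x ≤ π * ℓ) ∧ Tendsto ψ atTop (𝓝 (π * d))

/-- The odd extension of the folded right half of a phase vanishing at `0`. Its gauge has twice the
mass carried by the right half, and its cosine is the even extension. -/
lemma exists_sym_half {h : ℝ} {ℓ : ℕ} (hℓ : 1 ≤ ℓ) {d : ℝ} {ψ F : ℝ → ℝ} {A : ℝ} (hg : Gauge ψ F A)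
    (hz : ψ 0 = 0) (hlim : Tendsto (fun x => fold ℓ (ψ x)) atTop (𝓝 (π * d))) :
    ∃ ψ' F', SymPhase ℓ d ψ' F' (2 * (A - F 0)) ∧
      relE h (fun x => ψ' x + π * ℓ) (2 * (A - F 0)) = ENNReal.ofReal (A - F 0) +
        (∫⁻ x, ENNReal.ofReal (Wpot h (ψ |x| + π * ℓ))) +
        ENNReal.ofReal (1/(4*π)) * NL (fun x => Real.cos (ψ |x| + π * ℓ)) Set.univ := by
  have hf0 : fold ℓ 0 = 0 := fold_eq_self hℓ le_rfl (by positivity)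
  set ψ' : ℝ → ℝ := fun x => if 0 ≤ x then fold ℓ (ψ x) else -fold ℓ (ψ (-x)) with hψ'
  set F' : ℝ → ℝ := fun x => if 0 ≤ x then (A - F 0) + (F x - F 0) else (A - F 0) - (F (-x) - F 0)
    with hF'
  have hp : ∀ x, 0 ≤ x → ψ' x = fold ℓ (ψ x) := fun x hx => if_pos hx
  have hn : ∀ x, x ≤ 0 → ψ' x = -fold ℓ (ψ (-x)) := by
    intro x hx
    rcases hx.eq_or_lt with rfl | hx
    · rw [hp 0 le_rfl, neg_zero, hz, hf0, neg_zero]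
    · exact if_neg (not_le.2 hx)
  have Fp : ∀ x, 0 ≤ x → F' x = (A - F 0) + (F x - F 0) := fun x hx => if_pos hx
  have Fn : ∀ x, x ≤ 0 → F' x = (A - F 0) - (F (-x) - F 0) := by
    intro x hx
    rcases hx.eq_or_lt with rfl | hx
    · rw [Fp 0 le_rfl, neg_zero]; ring
    · exact if_neg (not_le.2 hx)
  have hmono := hg.monotone
  have hsq : ∀ x y, x ≤ y → (fold ℓ (ψ y) - fold ℓ (ψ x))^2 ≤ (y - x) * (F y - F x) := fun x y hxy =>
    (sq_le_sq.2 (fold_lip ℓ _ _)).trans (hg.2 x y hxy)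
  have hsym : SymPhase ℓ d ψ' F' (2 * (A - F 0)) := by
    refine ⟨⟨fun x => ?_, fun x y hxy => (gauge_glue 0 ?_ ?_ x y hxy).2⟩, fun x => ?_, fun x => ?_, fun x hx => ?_, ?_⟩
    · rcases le_total 0 x with hx | hx
      · rw [Fp x hx]
        have := hmono hx
        have := (hg.1 x).2
        constructor <;> linarith
      · rw [Fn x hx]
        have := hmono (neg_nonneg.2 hx)
        have := (hg.1 (-x)).2
        constructor <;> linarith
    · intro x y hxy hy
      rw [hn x (hxy.trans hy), hn y hy, Fn x (hxy.trans hy), Fn y hy]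
      have h1 := hmono (neg_le_neg hxy)
      have h2 := hsq (-y) (-x) (neg_le_neg hxy)
      refine ⟨by linarith, ?_⟩
      calc _ = (fold ℓ (ψ (-x)) - fold ℓ (ψ (-y)))^2 := by ring
        _ ≤ _ := h2
        _ = _ := by ring
    · intro x y hx hxy
      rw [hp x hx, hp y (hx.trans hxy), Fp x hx, Fp y (hx.trans hxy)]
      have h1 := hmono hxy
      refine ⟨by linarith, (hsq x y hxy).trans (le_of_eq (by ring))⟩
    · rcases le_total 0 x with hx | hx
      · rw [hp x hx, hn (-x) (by linarith), neg_neg]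
      · rw [hn x hx, hp (-x) (by linarith), neg_neg]
    · rcases le_total 0 x with hx | hx
      · rw [Fp x hx, Fn (-x) (by linarith), neg_neg]; ring
      · rw [Fn x hx, Fp (-x) (by linarith)]; ring
    · rw [hp x hx]
      exact ⟨fold_nonneg _ _, fold_le hℓ _⟩
    · refine hlim.congr' ?_
      filter_upwards [eventually_ge_atTop 0] with x hx
      exact (hp x hx).symm
  have hcos : ∀ x, Real.cos (ψ' x + π * ℓ) = Real.cos (ψ |x| + π * ℓ) := by
    intro x
    rcases le_total 0 x with hx | hx
    · rw [hp x hx, abs_of_nonneg hx, cos_fold]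
    · rw [hn x hx, abs_of_nonpos hx, cos_neg_add, cos_fold]
  refine ⟨ψ', F', hsym, ?_⟩
  unfold relE
  simp_rw [hcos, Wpot_congr (hcos _)]
  rw [mul_div_cancel_left₀ _ two_ne_zero]

lemma lintegral_abs_add {g : ℝ → ℝ≥0∞} (hg : Measurable g) :
    (∫⁻ x, g |x|) + ∫⁻ x, g (-|x|) = 2 * ∫⁻ x, g x := by
  rw [lintegral_fold (g := fun x => g |x|) (by fun_prop),
    lintegral_fold (g := fun x => g (-|x|)) (by fun_prop), lintegral_fold hg,
    ← lintegral_const_mul _ (by fun_prop), ← lintegral_add_left (by fun_prop)]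
  refine setLIntegral_congr_fun measurableSet_Ioi fun x hx => ?_
  have : (0:ℝ) < x := hx
  simp only [abs_neg, abs_of_pos this]
  ring

/-- Symmetrisation: one of the two odd extensions does not have larger energy. -/
lemma exists_sym {h : ℝ} {ℓ : ℕ} (hℓ : 1 ≤ ℓ) {d : ℝ} {ψ F : ℝ → ℝ} {A : ℝ} (hg : Gauge ψ F A)
    (hz : ψ 0 = 0) (hR : Tendsto (fun x => fold ℓ (ψ x)) atTop (𝓝 (π * d)))
    (hL : Tendsto (fun x => fold ℓ (ψ x)) atBot (𝓝 (π * d))) :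
    ∃ ψ' F' A', SymPhase ℓ d ψ' F' A' ∧
      relE h (fun x => ψ' x + π * ℓ) A' ≤ relE h (fun x => ψ x + π * ℓ) A := by
  have hg' : Gauge (fun x => ψ (-x)) (fun x => A - F (-x)) A := by
    refine ⟨fun x => ⟨by linarith [(hg.1 (-x)).2], by linarith [(hg.1 (-x)).1]⟩, fun x y hxy => ?_⟩
    have := hg.2 (-y) (-x) (neg_le_neg hxy)
    calc _ = (ψ (-x) - ψ (-y))^2 := by ring
      _ ≤ _ := this
      _ = _ := by ring
  obtain ⟨ψ1, F1, s1, e1⟩ := exists_sym_half (h := h) hℓ hg hz hR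
  obtain ⟨ψ2, F2, s2, e2⟩ := exists_sym_half (h := h) hℓ hg' (by simpa using hz)
    (hL.comp tendsto_neg_atTop_atBot)
  have hc := hg.continuous
  have hW := continuous_Wpot h
  have key : relE h (fun x => ψ1 x + π * ℓ) (2 * (A - F 0)) +
      relE h (fun x => ψ2 x + π * ℓ) (2 * (A - (A - F (-0)))) ≤ 2 * relE h (fun x => ψ x + π * ℓ) A := by
    rw [e1, e2]
    unfold relE
    have w := lintegral_abs_add (g := fun x => ENNReal.ofReal (Wpot h (ψ x + π * ℓ))) (by fun_prop)
    have n := NL_symm_le (M := fun x => Real.cos (ψ x + π * ℓ)) (by fun_prop) (K := 1)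
      (fun x => Real.abs_cos_le_one _)
    have a : ENNReal.ofReal (A - F 0) + ENNReal.ofReal (A - (A - F (-0))) = 2 * ENNReal.ofReal (A/2) := by
      rw [← ENNReal.ofReal_add (by linarith [(hg.1 0).2]) (by rw [neg_zero]; linarith [(hg.1 0).1]),
        show (2:ℝ≥0∞) = ENNReal.ofReal 2 by norm_num, ← ENNReal.ofReal_mul zero_le_two]
      congr 1
      rw [neg_zero]
      ring
    have n2 := mul_le_mul_right n (ENNReal.ofReal (1/(4*π)))
    calc _ = (ENNReal.ofReal (A - F 0) + ENNReal.ofReal (A - (A - F (-0)))) +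
          ((∫⁻ x, ENNReal.ofReal (Wpot h (ψ |x| + π * ℓ))) + ∫⁻ x, ENNReal.ofReal (Wpot h (ψ (-|x|) + π * ℓ))) +
          ENNReal.ofReal (1/(4*π)) * (NL (fun x => Real.cos (ψ |x| + π * ℓ)) Set.univ +
            NL (fun x => Real.cos (ψ (-|x|) + π * ℓ)) Set.univ) := by
          ring
      _ ≤ 2 * ENNReal.ofReal (A/2) + 2 * (∫⁻ x, ENNReal.ofReal (Wpot h (ψ x + π * ℓ))) +
          ENNReal.ofReal (1/(4*π)) * (2 * NL (fun x => Real.cos (ψ x + π * ℓ)) Set.univ) := by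
          rw [a, w]
          exact add_le_add le_rfl n2
      _ = _ := by ring
  by_contra hcon
  push Not at hcon
  have c1 := hcon _ _ _ s1
  have c2 := hcon _ _ _ s2
  have := ENNReal.add_lt_add c1 c2
  rw [← two_mul] at this
  exact absurd key (not_le.2 this)

lemma relE_translate {h : ℝ} {φ : ℝ → ℝ} (hφ : Continuous φ) (A x₀ : ℝ) :
    relE h (fun x => φ (x + x₀)) A = relE h φ A := by
  unfold relE
  congr 2
  · exact lintegral_add_right_eq_self (fun x => ENNReal.ofReal (Wpot h (φ x))) x₀
  · rw [NL_univ (by fun_prop), NL_univ (by fun_prop), ← lintegral_add_right_eq_self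
      (fun s => ∫⁻ t, ENNReal.ofReal ((Real.cos (φ s) - Real.cos (φ t))^2 / (s - t)^2)) x₀]
    refine lintegral_congr fun s => ?_
    rw [← lintegral_add_right_eq_self
      (fun t => ENNReal.ofReal ((Real.cos (φ (s + x₀)) - Real.cos (φ t))^2 / (s + x₀ - t)^2)) x₀]
    simp

lemma Gauge.translate {φ F : ℝ → ℝ} {A : ℝ} (hg : Gauge φ F A) (x₀ : ℝ) :
    Gauge (fun x => φ (x + x₀)) (fun x => F (x + x₀)) A :=
  ⟨fun x => hg.1 _, fun x y hxy => (hg.2 _ _ (by linarith : x + x₀ ≤ y + x₀)).trans (le_of_eq (by ring))⟩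

/-- Up to a translation of phases that preserves the energy, the limit at `+∞` of a phase of winding
number `d` is `πd + πℓ`, so that its limits are centred at `πℓ`. The limit is congruent to `-α`
modulo `2π`, except possibly for `α = 0`, where the two wells coincide, and for `α = π/2`, that is
`h = 0`, where the translation by `π` is a symmetry of the energy. -/
lemma exists_shift {h : ℝ} (h0 : 0 ≤ h) {ℓ : ℕ} {d : ℝ}
    (hd : d = (ℓ : ℝ) - alphaParam h / π) {Lp Lm : ℝ} (hLp : Real.cos Lp = kparam h)
    (hLm : Real.cos Lm = kparam h) (hL : Lp - Lm = 2 * π * d) :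
    ∃ s, Lp + s = π * d + π * ℓ ∧ ∀ φ A, relE h (fun x => φ x + s) A = relE h φ A := by
  have hπd := pi_mul_d hd
  set α := alphaParam h with hα
  have hca : Real.cos α = kparam h := cos_alphaParam h0
  refine ⟨π * d + π * ℓ - Lp, by ring, ?_⟩
  obtain ⟨n, hn⟩ := Real.cos_eq_cos_iff.1 (hca.trans hLp.symm)
  have hper : ∀ m : ℤ, ∀ φ : ℝ → ℝ, ∀ A, relE h (fun x => φ x + m * (2 * π)) A = relE h φ A := by
    intro m φ A
    have hc : ∀ x, Real.cos (φ x + m * (2 * π)) = Real.cos (φ x) := fun x =>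
      Real.cos_add_int_mul_two_pi _ _
    unfold relE
    simp_rw [hc, Wpot_congr (hc _)]
  rcases hn with hn | hn
  · have hk3 : 4 * kparam h ^ 3 - 3 * kparam h = kparam h := by
      rw [← hca, ← Real.cos_three_mul, hca, ← hLm]
      rw [show Lm = (3 * α) + ((n - ℓ : ℤ) : ℝ) * (2 * π) by
        push_cast; linarith, Real.cos_add_int_mul_two_pi]
    have hk0 := kparam_nonneg h0
    have hk : kparam h = 0 ∨ kparam h = 1 := by
      have : kparam h * ((kparam h - 1) * (kparam h + 1)) = 0 := by nlinarith
      rcases mul_eq_zero.1 this with e | e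
      · exact Or.inl e
      · rcases mul_eq_zero.1 e with e | e
        · right; linarith
        · linarith
    rcases hk with hk | hk
    · have hh : h = 0 := by
        rcases min_choice h 1 with e | e
        · exact e.symm.trans hk
        · have : kparam h = 1 := e
          linarith
      have hαv : α = π / 2 := by
        rw [hα, alphaParam, hk, Real.arccos_zero]
      have hc : ∀ y, Real.cos (y + (π * d + π * ℓ - Lp)) = - Real.cos y := by
        intro y
        rw [show y + (π * d + π * ℓ - Lp) = y + π + ((ℓ - n - 1 : ℤ) : ℝ) * (2 * π) by
          push_cast; rw [hn, hπd, hαv]; ring, Real.cos_add_int_mul_two_pi, Real.cos_add_pi]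
      intro φ A
      have hW : ∀ y, Wpot h (y + (π * d + π * ℓ - Lp)) = Wpot h y := by
        intro y
        unfold Wpot
        rw [hc, hh]
        ring
      unfold relE NL strayKer
      simp_rw [hc, hW]
      congr 3
      funext p
      congr 1
      ring
    · have hαv : α = 0 := by
        rw [hα, alphaParam, hk, Real.arccos_one]
      intro φ A
      rw [← hper (ℓ - n) φ A]
      congr 1
      funext x
      push_cast
      rw [hn, hπd, hαv]
      ring
  · intro φ A
    rw [← hper (ℓ - n) φ A]
    congr 1
    funext x
    push_cast
    rw [hn, hπd]
    ring

/-- Almost minimizing phases can be taken odd and confined to `[0, πℓ]` on the right half-line. -/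
lemma exists_sym_phase {h : ℝ} (h0 : 0 ≤ h) {ℓ : ℕ} (hℓ : 1 ≤ ℓ) {d : ℝ}
    (hd : d = (ℓ : ℝ) - alphaParam h / π) {e : ℝ≥0∞} (he : Einf h d < e) :
    ∃ ψ F A, SymPhase ℓ d ψ F A ∧ relE h (fun x => ψ x + π * ℓ) A < e := by
  obtain ⟨φ, hφ⟩ := iInf_lt_iff.1 he
  obtain ⟨⟨⟨hc1, ⟨Lp, hLp, htp⟩, ⟨Lm, hLm, htm⟩, hfin⟩, hdeg⟩, hlt⟩ := iInf_lt_iff.1 hφ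
  rw [mem_limSet_iff h0] at hLp hLm
  have hL : Lp - Lm = 2 * π * d := by
    rw [← hdeg, deg, htp.limUnder_eq, htm.limUnder_eq]
    field_simp
  rw [energy_eq hc1] at hlt hfin
  have hdfin : ∫⁻ x, ENNReal.ofReal ((deriv φ x)^2) < ⊤ := by
    have := (ENNReal.add_lt_top.1 (ENNReal.add_lt_top.1 hfin).1).1
    by_contra hcon
    rw [not_lt_top_iff] at hcon
    rw [hcon, ENNReal.mul_top (by simp)] at this
    exact lt_irrefl _ this
  obtain ⟨F, hg, hFA⟩ := exists_gauge_of_contDiff hc1 hdfin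
  set A := (∫⁻ x, ENNReal.ofReal ((deriv φ x)^2)).toReal with hA
  have hrel : relE h φ A < e := by
    refine lt_of_le_of_lt (le_of_eq ?_) hlt
    unfold relE
    rw [← hFA, ← ENNReal.ofReal_mul (by norm_num)]
    congr 3
    ring
  obtain ⟨s, hs, hinv⟩ := exists_shift h0 hd hLp hLm hL
  have hD := pi_d_pos h0 hℓ hd
  have hcont := hg.continuous
  set u : ℝ → ℝ := fun x => φ x + s - π * ℓ with hu
  have hup : Tendsto u atTop (𝓝 (π * d)) := by
    have := (htp.add_const s).sub_const (π * ℓ)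
    rwa [hs, add_sub_cancel_right] at this
  have hum : Tendsto u atBot (𝓝 (-(π * d))) := by
    have := (htm.add_const s).sub_const (π * ℓ)
    rwa [show Lm + s - π * ℓ = -(π * d) by linarith] at this
  have huc : Continuous u := by fun_prop
  -- The centred phase `u` goes from `-πd` to `πd`, so it vanishes at some `x₀`; the reflection is
  -- performed there.
  obtain ⟨x₀, hx₀⟩ : ∃ x₀, u x₀ = 0 := by
    obtain ⟨a, ha⟩ := (hup.eventually (lt_mem_nhds hD)).exists
    obtain ⟨b, hb⟩ := (hum.eventually (gt_mem_nhds (neg_lt_zero.2 hD))).exists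
    exact mem_range_of_exists_le_of_exists_ge huc ⟨b, hb.le⟩ ⟨a, ha.le⟩
  have hgu : Gauge u F A := hg.of_le (fun x y => by simp [hu])
  have hfc : Continuous (fold ℓ) := by
    unfold fold
    exact continuous_norm.comp (AddCircle.continuous_mk' _)
  have hfd : fold ℓ (π * d) = π * d := fold_eq_self hℓ hD.le (pi_d_le hd)
  have hR : Tendsto (fun x => fold ℓ (u (x + x₀))) atTop (𝓝 (π * d)) := by
    have := (hfc.tendsto (π * d)).comp (hup.comp (tendsto_atTop_add_const_right _ x₀ tendsto_id))
    rwa [hfd] at this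
  have hLt : Tendsto (fun x => fold ℓ (u (x + x₀))) atBot (𝓝 (π * d)) := by
    have := (hfc.tendsto (-(π * d))).comp (hum.comp (tendsto_atBot_add_const_right _ x₀ tendsto_id))
    rwa [fold_neg, hfd] at this
  obtain ⟨ψ, F', A', hsym, hle⟩ := exists_sym (h := h) hℓ (hgu.translate x₀) (by simpa using hx₀) hR hLt
  refine ⟨ψ, F', A', hsym, lt_of_le_of_lt hle ?_⟩
  have e1 := relE_translate (h := h) (φ := fun x => u x + π * ℓ) (by fun_prop) A x₀
  rw [e1]
  have e2 : (fun x => u x + π * ℓ) = fun x => φ x + s := by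
    funext x; simp [hu]
  rw [e2, hinv]
  exact hrel

/-! ### Compactness and limits at infinity -/

/-- Compactness: a bounded sequence of phases with gauges of bounded mass converges, along a
subsequence, pointwise and locally uniformly. -/
lemma exists_subseq_limit {u F : ℕ → ℝ → ℝ} {A : ℕ → ℝ} {B K : ℝ} (hg : ∀ n, Gauge (u n) (F n) (A n))
    (hA : ∀ n, A n ≤ B) (hK : ∀ n x, |u n x| ≤ K) :
    ∃ σ : ℕ → ℕ, StrictMono σ ∧ ∃ v : ℝ → ℝ,
      (∀ x, Tendsto (fun n => u (σ n) x) atTop (𝓝 (v x))) ∧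
      TendstoLocallyUniformly (fun n => u (σ n)) v atTop := by
  have hB : 0 ≤ B := (hg 0).nonneg.trans (hA 0)
  have hmod : ∀ n x y, |u n y - u n x| ≤ Real.sqrt (|y - x| * B) := fun n x y =>
    Real.abs_le_sqrt (((hg n).sq_le x y).trans (by have := hA n; gcongr))
  have hsmall : ∀ ε, 0 < ε → ∃ τ, 0 < τ ∧ ∀ x y : ℝ, |y - x| < τ → Real.sqrt (|y - x| * B) < ε := by
    intro ε hε
    refine ⟨ε^2/(B+1), by positivity, fun x y hxy => ?_⟩
    rw [Real.sqrt_lt' hε]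
    rw [lt_div_iff₀ (by positivity)] at hxy
    nlinarith [abs_nonneg (y - x)]
  -- A subsequence converging at all rational points, upgraded by equicontinuity.
  have hcomp : IsCompact (Set.univ.pi fun _ : ℚ => Set.Icc (-K) K) :=
    isCompact_univ_pi fun _ => isCompact_Icc
  obtain ⟨g, -, σ, hσ, hlim⟩ := hcomp.tendsto_subseq (x := fun n (q : ℚ) => u n q)
    (fun n q _ => abs_le.1 (hK n q))
  rw [tendsto_pi_nhds] at hlim
  have hcau : ∀ x, ∃ l, Tendsto (fun n => u (σ n) x) atTop (𝓝 l) := by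
    intro x
    apply cauchySeq_tendsto_of_complete
    rw [Metric.cauchySeq_iff']
    intro ε hε
    obtain ⟨τ, hτ, hτ'⟩ := hsmall (ε/3) (by positivity)
    obtain ⟨q, hq1, hq2⟩ := exists_rat_btwn (show x < x + τ by linarith)
    have hqx : |(q:ℝ) - x| < τ := by rw [abs_of_pos (by linarith)]; linarith
    obtain ⟨N, hN⟩ := Metric.cauchySeq_iff'.1 (hlim q).cauchySeq (ε/3) (by positivity)
    refine ⟨N, fun n hn => ?_⟩
    have h1 := (hmod (σ n) x q).trans_lt (hτ' x q hqx)
    have h2 := (hmod (σ N) x q).trans_lt (hτ' x q hqx)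
    have h3 := hN n hn
    rw [Real.dist_eq] at h3 ⊢
    simp only [Function.comp] at h3
    rw [abs_lt] at *
    constructor <;> linarith
  choose v hv using hcau
  have hvmod : ∀ x y, |v y - v x| ≤ Real.sqrt (|y - x| * B) := fun x y =>
    le_of_tendsto ((hv y).sub (hv x)).abs (Eventually.of_forall fun n => hmod _ _ _)
  refine ⟨σ, hσ, v, hv, ?_⟩
  rw [Metric.tendstoLocallyUniformly_iff]
  intro ε hε x
  obtain ⟨τ, hτ, hτ'⟩ := hsmall (ε/3) (by positivity)
  refine ⟨Metric.ball x τ, Metric.ball_mem_nhds x hτ, ?_⟩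
  filter_upwards [(Metric.tendsto_nhds.1 (hv x)) (ε/3) (by positivity)] with n hn y hy
  rw [Metric.mem_ball, Real.dist_eq] at hy
  have h1 := (hmod (σ n) x y).trans_lt (hτ' x y hy)
  have h2 := (hvmod x y).trans_lt (hτ' x y hy)
  rw [Real.dist_eq] at hn ⊢
  rw [abs_lt] at *
  constructor <;> linarith

lemma cos_not_const {k a b : ℝ} (hab : a < b) : ¬ ∀ y ∈ Set.Ioo a b, Real.cos y = k := by
  intro hc
  set t := min ((b - a)/4) 1 with ht
  have ht0 : 0 < t := lt_min (by linarith) one_pos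
  have ht1 : t ≤ 1 := min_le_right _ _
  have ht2 : t ≤ (b-a)/4 := min_le_left _ _
  set y := (a + b)/2 with hy
  have e1 := hc y ⟨by linarith, by linarith⟩
  have e2 := hc (y + t) ⟨by linarith, by linarith⟩
  have e3 := hc (y - t) ⟨by linarith, by linarith⟩
  rw [Real.cos_add] at e2
  rw [Real.cos_sub] at e3
  have hs : 0 < Real.sin t := Real.sin_pos_of_pos_of_lt_pi ht0 (by linarith [Real.pi_gt_three])
  have h1 : Real.sin y * Real.sin t = 0 := by linarith
  have h2 : Real.sin y = 0 := (mul_eq_zero.1 h1).resolve_right hs.ne'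
  have h3 := Real.sin_sq_add_cos_sq y
  have h4 := Real.sin_sq_add_cos_sq t
  rw [h2] at h3 e2
  have h5 : Real.cos y * Real.cos t = Real.cos y := by rw [e1] at e2 ⊢; linarith
  have h6 : Real.cos y ≠ 0 := by intro h; rw [h] at h3; norm_num at h3
  have h7 : Real.cos t = 1 := by
    apply mul_left_cancel₀ h6
    rw [h5, mul_one]
  rw [h7] at h4
  nlinarith

/-- A phase with finite mass and finite anisotropy energy satisfies `cos φ → k`. -/
lemma tendsto_cos_sub {h : ℝ} {φ F : ℝ → ℝ} {A : ℝ} (hg : Gauge φ F A)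
    (hW : ∫⁻ x, ENNReal.ofReal (Wpot h (φ x)) < ⊤) :
    Tendsto (fun x => Real.cos (φ x) - kparam h) atTop (𝓝 0) := by
  have hc := hg.continuous
  have hA := hg.nonneg
  set q : ℝ → ℝ := fun x => Real.cos (φ x) - kparam h with hq
  have hqc : Continuous q := by fun_prop
  have hint : Integrable (fun x => (q x)^2) := by
    refine ⟨by fun_prop, ?_⟩
    rw [hasFiniteIntegral_iff_ofReal (ae_of_all _ fun x => sq_nonneg _)]
    have := lintegral_cos_sub_sq_le (h := h) hc.measurable Set.univ
    rw [Measure.restrict_univ] at this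
    exact this.trans_lt (ENNReal.mul_lt_top (by simp) hW)
  set Q : ℝ → ℝ := fun x => ∫ t in (0:ℝ)..x, (q t)^2 with hQ
  have hQl : Tendsto Q atTop (𝓝 (∫ t in Set.Ioi 0, (q t)^2)) :=
    intervalIntegral_tendsto_integral_Ioi 0 hint.integrableOn tendsto_id
  -- Averaging over `[x, x + τ]`: the increment of `Q` tends to zero since `q` is square integrable,
  -- and the oscillation of `q` is bounded by the gauge.
  have key : ∀ τ, 0 < τ → ∀ x, (q x)^2 ≤ 2/τ * (Q (x + τ) - Q x) + 2 * τ * A := by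
    intro τ hτ x
    have h1 : ∀ y ∈ Set.Icc x (x+τ), (q x)^2 ≤ 2 * (q y)^2 + 2 * (τ * A) := by
      intro y hy
      have h2 := hg.cos.sq_le x y
      rw [abs_of_nonneg (by linarith [hy.1])] at h2
      have h3 : (y - x) * A ≤ τ * A := by
        apply mul_le_mul_of_nonneg_right _ hA
        linarith [hy.2]
      have h4 : (q x)^2 ≤ 2 * (q y)^2 + 2 * (Real.cos (φ y) - Real.cos (φ x))^2 := by
        simp only [hq]
        nlinarith [sq_nonneg ((Real.cos (φ y) - kparam h) + (Real.cos (φ y) - Real.cos (φ x)))]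
      linarith
    have h5 : Q (x + τ) - Q x = ∫ t in x..(x+τ), (q t)^2 :=
      intervalIntegral.integral_interval_sub_left (hint.intervalIntegrable) (hint.intervalIntegrable)
    have h6 := intervalIntegral.integral_mono_on (show x ≤ x + τ by linarith)
      (f := fun _ => (q x)^2) (g := fun y => 2 * (q y)^2 + 2 * (τ * A)) (μ := volume)
      (by simp) ((by fun_prop : Continuous fun y => 2 * (q y)^2 + 2 * (τ * A)).intervalIntegrable _ _) h1
    rw [intervalIntegral.integral_const, intervalIntegral.integral_add
      ((by fun_prop : Continuous fun y => 2 * (q y)^2).intervalIntegrable _ _) (by simp),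
      intervalIntegral.integral_const, intervalIntegral.integral_const_mul, ← h5] at h6
    simp only [add_sub_cancel_left, smul_eq_mul] at h6
    have h7 : (q x)^2 = (τ * (q x)^2)/τ := by field_simp
    rw [h7, div_le_iff₀ hτ]
    refine h6.trans (le_of_eq ?_)
    field_simp
  have hsq : Tendsto (fun x => (q x)^2) atTop (𝓝 0) := by
    rw [Metric.tendsto_nhds]
    intro ε hε
    set τ := ε/(4*(A+1)) with hτd
    have hτ : 0 < τ := by positivity
    have hτA : 2 * τ * A ≤ ε/2 := by
      have : 2 * τ * (A+1) = ε/2 := by rw [hτd]; field_simp; norm_num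
      nlinarith
    have hdiff : Tendsto (fun x => 2/τ * (Q (x + τ) - Q x)) atTop (𝓝 0) := by
      have h1 := hQl.comp (tendsto_atTop_add_const_right _ τ tendsto_id)
      have h2 := (h1.sub hQl).const_mul (2/τ)
      rw [sub_self, mul_zero] at h2
      exact h2
    filter_upwards [hdiff.eventually (gt_mem_nhds (half_pos hε))] with x hx
    rw [Real.dist_eq, sub_zero, abs_of_nonneg (sq_nonneg _)]
    linarith [key τ hτ x]
  have := (Real.continuous_sqrt.tendsto 0).comp hsq
  rw [Real.sqrt_zero] at this
  have h2 : (Real.sqrt ∘ fun x => (q x)^2) = fun x => |q x| := by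
    funext x
    exact Real.sqrt_sq_eq_abs _
  rw [h2] at this
  exact (tendsto_zero_iff_abs_tendsto_zero q).2 this

/-- A bounded phase of finite energy has limits in the wells. -/
lemma exists_limit {h : ℝ} {φ F : ℝ → ℝ} {A K : ℝ} (hg : Gauge φ F A)
    (hW : ∫⁻ x, ENNReal.ofReal (Wpot h (φ x)) < ⊤) (hK : ∀ x, |φ x| ≤ K) :
    ∃ L, Tendsto φ atTop (𝓝 L) ∧ Real.cos L = kparam h := by
  have hq := tendsto_cos_sub hg hW
  have hc := hg.continuous
  have hex : ∃ L, Tendsto φ atTop (𝓝 L) := by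
    refine tendsto_of_no_upcrossings dense_univ ?_
      (isBoundedUnder_of ⟨K, fun x => (abs_le.1 (hK x)).2⟩)
      (isBoundedUnder_of ⟨-K, fun x => (abs_le.1 (hK x)).1⟩)
    -- A persistent oscillation across `[a, b]` would make every value `y ∈ (a, b)` recurrent, whence
    -- `cos y = k` on a whole interval.
    rintro a - b - hab ⟨ha, hb⟩
    refine cos_not_const (k := kparam h) hab fun y hy => ?_
    have hf : ∃ᶠ x in atTop, φ x = y := by
      rw [frequently_atTop] at ha hb ⊢
      intro N
      obtain ⟨x₁, h1, h1'⟩ := ha N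
      obtain ⟨x₂, h2, h2'⟩ := hb N
      have hpre : IsPreconnected (Set.Ici N) := isPreconnected_Ici
      obtain ⟨x, hx, hxy⟩ := hpre.intermediate_value h1 h2 hc.continuousOn
        ⟨(h1'.trans hy.1).le, (hy.2.trans h2').le⟩
      exact ⟨x, hx, hxy⟩
    by_contra hne
    have hne' : Real.cos y - kparam h ≠ 0 := sub_ne_zero.2 hne
    have hev := hq.eventually (isOpen_ne.mem_nhds hne'.symm)
    obtain ⟨x, hx1, hx2⟩ := (hf.and_eventually hev).exists
    rw [hx1] at hx2
    exact hx2 rfl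
  obtain ⟨L, hL⟩ := hex
  refine ⟨L, hL, ?_⟩
  have h1 := ((Real.continuous_cos.tendsto L).comp hL).sub_const (kparam h)
  have := tendsto_nhds_unique h1 hq
  linarith

/-- The possible limits at infinity of a limit of symmetric phases: other than the expected `πd`, only
those leaving `2πj` or `2(πj - α)` of the winding to infinity. -/
lemma limit_cases {h : ℝ} (h0 : 0 ≤ h) {ℓ : ℕ} {d : ℝ} (hd : d = (ℓ : ℝ) - alphaParam h / π)
    {L : ℝ} (hL1 : L ≤ π * ℓ) (hc : Real.cos (L + π * ℓ) = kparam h) :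
    L = π * d ∨ ∃ j : ℕ, 1 ≤ j ∧ (L = π * (d - 2 * j) ∨ L = π * (d - 2 * (j - alphaParam h / π))) := by
  have hπd := pi_mul_d hd
  have ha0 := alphaParam_nonneg h
  have ha1 := alphaParam_le h0
  have hpi := Real.pi_pos
  have hdiv : π * (alphaParam h / π) = alphaParam h := by field_simp
  rw [← cos_alphaParam h0] at hc
  obtain ⟨n, hn⟩ := Real.cos_eq_cos_iff.1 hc.symm
  have hnl : n ≤ ℓ := by
    by_contra hcon
    push Not at hcon
    have h1 : ((ℓ:ℝ) + 1) ≤ n := by exact_mod_cast hcon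
    have h2 := mul_le_mul_of_nonneg_left h1 hpi.le
    rcases hn with hn | hn <;> nlinarith
  rcases hnl.eq_or_lt with heq | hlt
  · left
    have h1 : (n:ℝ) = ℓ := by exact_mod_cast heq
    rw [h1] at hn
    rcases hn with hn | hn <;> linarith
  · right
    obtain ⟨j, hj⟩ := Int.eq_ofNat_of_zero_le (show 0 ≤ (ℓ:ℤ) - n by omega)
    refine ⟨j, by omega, ?_⟩
    have h1 : (n:ℝ) = ℓ - j := by
      have : n = (ℓ:ℤ) - j := by omega
      rw [this]; push_cast; ring
    rw [h1] at hn
    rcases hn with hn | hn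
    · right; nlinarith
    · left; nlinarith

/-! ### Cutting off -/

/-- Stray-field energy of a profile that is constant on `(-∞, R]`: the interaction of the two
half-lines reduces to a single integral with weight `1 / (s - R)`. -/
lemma NL_univ_le_of_const {m : ℝ → ℝ} (hm : Measurable m) {k R : ℝ} (hk : ∀ x ≤ R, m x = k) :
    NL m Set.univ ≤ NL m (Set.Ioi R) +
      2 * ∫⁻ s in Set.Ioi R, ENNReal.ofReal (2 * ((m s - k)^2 / (s - R))) := by
  have hsm := measurable_strayKer hm
  have hcr : ∫⁻ p in Set.Ioi R ×ˢ Set.Iic R, strayKer m p ≤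
      ∫⁻ s in Set.Ioi R, ENNReal.ofReal (2 * ((m s - k)^2 / (s - R))) := by
    rw [Measure.volume_eq_prod, setLIntegral_prod _ hsm.aemeasurable]
    refine setLIntegral_mono' measurableSet_Ioi fun s hs => ?_
    have hs' : 0 < s - R := sub_pos.2 hs
    calc ∫⁻ t in Set.Iic R, strayKer m (s, t)
        = ∫⁻ t in Set.Iic R, ENNReal.ofReal ((m s - k)^2) * ENNReal.ofReal (1/(s - t)^2) := by
          refine setLIntegral_congr_fun measurableSet_Iic fun t ht => ?_
          simp only [strayKer]
          rw [hk t ht, ← ENNReal.ofReal_mul (sq_nonneg _)]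
          congr 1
          ring
      _ = ENNReal.ofReal ((m s - k)^2) * ∫⁻ t in Set.Iic R, ENNReal.ofReal (1/(s - t)^2) :=
          lintegral_const_mul _ (by fun_prop)
      _ ≤ ENNReal.ofReal ((m s - k)^2) * ENNReal.ofReal (2/(s - R)) := by
          refine mul_le_mul_right ?_ _
          rw [← lintegral_inv_sq hs', ← lintegral_indicator measurableSet_Iic,
            ← lintegral_indicator (measurableSet_le (by fun_prop) (by fun_prop)),
            ← lintegral_sub_left_eq_self ({u : ℝ | s - R ≤ |u|}.indicator _) s]
          refine lintegral_mono fun t => ?_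
          by_cases ht : t ∈ Set.Iic R
          · rw [Set.indicator_of_mem ht, Set.indicator_of_mem]
            have : t ≤ R := ht
            show s - R ≤ |s - t|
            exact le_trans (by linarith) (le_abs_self _)
          · rw [Set.indicator_of_notMem ht]
            exact zero_le
      _ = _ := by
          rw [← ENNReal.ofReal_mul (sq_nonneg _)]
          congr 1
          ring
  have hcr2 : ∫⁻ p in Set.Iic R ×ˢ Set.Ioi R, strayKer m p = ∫⁻ p in Set.Ioi R ×ˢ Set.Iic R, strayKer m p := by
    have hmp : MeasurePreserving (Prod.swap : ℝ × ℝ → ℝ × ℝ) volume volume :=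
      Measure.measurePreserving_swap
    rw [← hmp.setLIntegral_comp_preimage (measurableSet_Iic.prod measurableSet_Ioi) hsm,
      Set.preimage_swap_prod]
    exact lintegral_congr fun p => strayKer_swap m p
  have h0 : ∫⁻ p in Set.Iic R ×ˢ Set.Iic R, strayKer m p = 0 := by
    rw [← lintegral_zero (μ := volume.restrict (Set.Iic R ×ˢ Set.Iic R))]
    refine setLIntegral_congr_fun (measurableSet_Iic.prod measurableSet_Iic) fun p hp => ?_
    simp only [strayKer]
    rw [hk _ hp.1, hk _ hp.2]
    simp
  have hU : Set.univ ×ˢ Set.univ ⊆ (Set.Ioi R ×ˢ Set.Ioi R ∪ Set.Ioi R ×ˢ Set.Iic R) ∪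
      (Set.Iic R ×ˢ Set.Ioi R ∪ Set.Iic R ×ˢ Set.Iic R) := by
    rintro ⟨x, y⟩ -
    rcases le_or_gt x R with hx | hx <;> rcases le_or_gt y R with hy | hy <;> simp [hx, hy]
  calc NL m Set.univ ≤ _ := lintegral_mono_set hU
    _ ≤ _ := lintegral_union_le _ _ _
    _ ≤ _ := add_le_add (lintegral_union_le _ _ _) (lintegral_union_le _ _ _)
    _ ≤ _ := by
      rw [hcr2, h0, add_zero, add_assoc, two_mul]
      exact add_le_add le_rfl (add_le_add hcr hcr)

lemma clamp_bounds {w r : ℝ} (hr : 0 ≤ r) : |max (-r) (min w r)| ≤ r ∧ |max (-r) (min w r) - w| ≤ |w| := by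
  rcases max_cases (-r) (min w r) with ⟨e1, e2⟩ | ⟨e1, e2⟩ <;>
  rcases min_cases w r with ⟨f1, f2⟩ | ⟨f1, f2⟩ <;> rw [e1] <;> try rw [f1]
  all_goals
    constructor
    · rw [abs_le]; constructor <;> linarith
    · rcases abs_cases w with ⟨g1, g2⟩ | ⟨g1, g2⟩ <;> rw [abs_le] <;> constructor <;> linarith

lemma clamp_lip (w r w' r' : ℝ) :
    (max (-r') (min w' r') - max (-r) (min w r))^2 ≤ (w' - w)^2 + (r' - r)^2 := by
  have h1 : |max (-r') (min w' r') - max (-r) (min w r)| ≤ max |w' - w| |r' - r| := by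
    refine (abs_max_sub_max_le_max _ _ _ _).trans (max_le ?_ (abs_min_sub_min_le_max _ _ _ _))
    rw [show -r' - -r = -(r' - r) by ring, abs_neg]
    exact le_max_right _ _
  rw [← sq_abs (max (-r') (min w' r') - max (-r) (min w r)), ← sq_abs (w' - w), ← sq_abs (r' - r)]
  have h2 := pow_le_pow_left₀ (abs_nonneg _) h1 2
  refine h2.trans ?_
  rcases max_choice |w' - w| |r' - r| with e | e <;> rw [e] <;> nlinarith [sq_nonneg |w' - w|, sq_nonneg |r' - r|]

/-- Error constant in the cut-off lemma, for gauge mass at most `A` and anisotropy energy at most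
`C`. -/
def cutConst (h A C : ℝ) : ℝ := 1/2 + 2*(1+h) + 2*(2*(4*A+2)+8) + 4*(1+2*C)

/-- Energy (with gauge `F` of mass `A`) carried by the half-line `(R, ∞)`. -/
def rightE (h : ℝ) (v F : ℝ → ℝ) (A R : ℝ) : ℝ≥0∞ :=
  ENNReal.ofReal ((A - F R)/2) + (∫⁻ x in Set.Ioi R, ENNReal.ofReal (Wpot h (v x))) +
    ENNReal.ofReal (1/(4*π)) * NL (fun x => Real.cos (v x)) (Set.Ioi R)

/-- Cutting off: a phase that stays within `δ²` of a well `b` on the long interval `[R, R + δ⁻²]`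
carries, on `(R, ∞)`, almost the energy needed to connect `b` to its limit. -/
lemma right_part {h : ℝ} (h0 : 0 ≤ h) {v F : ℝ → ℝ} {A A₀ C₀ δ R b L d : ℝ} (hg : Gauge v F A)
    (hA₀ : A ≤ A₀) (hC₀ : 0 ≤ C₀) (hW : ∫⁻ x, ENNReal.ofReal (Wpot h (v x)) ≤ ENNReal.ofReal C₀)
    (hδ : 0 < δ) (hδ1 : δ ≤ 1) (hL : Tendsto v atTop (𝓝 L)) (hLc : Real.cos L = kparam h)
    (hbc : Real.cos b = kparam h) (hb : ∀ x ∈ Set.Icc R (R + 1/δ^2), |v x - b| ≤ δ^2)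
    (hd : L - b = 2 * π * d) :
    Einf h d ≤ ENNReal.ofReal (1 + δ) * rightE h v F A R + ENNReal.ofReal (δ * cutConst h A₀ C₀) := by
  set η := δ^2 with hη
  have hη0 : 0 < η := by positivity
  have hη1 : η ≤ 1 := by nlinarith
  have hηδ : η ≤ δ := by nlinarith
  have h1η : 1 ≤ 1/η := by rw [le_div_iff₀ hη0]; linarith
  have hAnn := hg.nonneg
  have hvc := hg.continuous
  have hmono := hg.monotone
  have hFR := hg.1 R
  -- The competitor `w` equals `b` on `(-∞, R]` and `v` on `[R + 1, ∞)`; in between, `v` is clamped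
  -- to distance at most `η t` from `b`, where `t` is the unit ramp on `[R, R + 1]`.
  set t : ℝ → ℝ := fun x => max 0 (min (x - R) 1) with ht
  have ht0 : ∀ x ≤ R, t x = 0 := fun x hx => max_eq_left ((min_le_left _ _).trans (by linarith))
  have ht1 : ∀ x, R + 1 ≤ x → t x = 1 := fun x hx => by
    simp only [ht]; rw [min_eq_right (by linarith)]; exact max_eq_right zero_le_one
  have htm : ∀ x, R ≤ x → x ≤ R + 1 → t x = x - R := fun x hx hx' => by
    simp only [ht]; rw [min_eq_left (by linarith)]; exact max_eq_right (by linarith)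
  have htb : ∀ x, 0 ≤ t x ∧ t x ≤ 1 := fun x => ⟨le_max_left _ _, max_le zero_le_one (min_le_right _ _)⟩
  set w : ℝ → ℝ := fun x => if x ≤ R + 1 then
    b + max (-(η * t x)) (min (v x - b) (η * t x)) else v x with hw
  have hwR : ∀ x ≤ R, w x = b := by
    intro x hx
    simp only [hw]
    rw [if_pos (by linarith), ht0 x hx]
    simp
  have hw1 : ∀ x, x ≤ R + 1 → w x = b + max (-(η * t x)) (min (v x - b) (η * t x)) := fun x hx => if_pos hx
  have hw2 : ∀ x, R + 1 ≤ x → w x = v x := by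
    intro x hx
    rcases hx.eq_or_lt with rfl | hlt
    · rw [hw1 _ le_rfl, ht1 _ le_rfl, mul_one]
      have := abs_le.1 (hb (R + 1) ⟨by linarith, by linarith⟩)
      rw [min_eq_left this.2, max_eq_right this.1]
      ring
    · exact if_neg (not_le.2 hlt)
  set G : ℝ → ℝ := fun x => F (max x R) - F R + η^2 * t x with hG
  have hGw : Gauge w G (A - F R + η^2) := by
    refine ⟨fun x => ⟨?_, ?_⟩, fun x y hxy => (gauge_glue R ?_ (fun x y hx hxy => ?_) x y hxy).2⟩
    · have := hmono (le_max_right x R)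
      have := (htb x).1
      simp only [hG]
      have : 0 ≤ η^2 * t x := by positivity
      linarith
    · have := (hg.1 (max x R)).2
      have := (htb x).2
      simp only [hG]
      have : η^2 * t x ≤ η^2 * 1 := by gcongr
      linarith
    · intro x y hxy hy
      rw [hwR x (hxy.trans hy), hwR y hy]
      simp only [hG]
      rw [max_eq_right hy, max_eq_right (hxy.trans hy), ht0 x (hxy.trans hy), ht0 y hy]
      simp
    · have hGx : ∀ z, R ≤ z → G z = F z - F R + η^2 * t z := fun z hz => by
        simp only [hG]; rw [max_eq_left hz]
      have main : ∀ x y, x ≤ y → (R ≤ x → G x ≤ G y ∧ (w y - w x)^2 ≤ (y - x) * (G y - G x)) := by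
        intro x y hxy hx
        have := gauge_glue (φ := fun z => w (max z R)) (F := fun z => G (max z R)) (R + 1) ?_ ?_ x y hxy
        · simpa only [max_eq_left hx, max_eq_left (hx.trans hxy)] using this
        · intro x y hxy hy
          set x' := max x R with hx'
          set y' := max y R with hy'
          have hxy' : x' ≤ y' := max_le_max hxy le_rfl
          have hxR : R ≤ x' := le_max_right _ _
          have hyR : R ≤ y' := le_max_right _ _
          have hy1 : y' ≤ R + 1 := max_le hy (by linarith)
          rw [hGx _ hxR, hGx _ hyR, htm _ hxR (hxy'.trans hy1), htm _ hyR hy1, hw1 _ hy1,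
            hw1 _ (hxy'.trans hy1), htm _ hxR (hxy'.trans hy1), htm _ hyR hy1]
          have m1 := hmono hxy'
          have m2 : 0 ≤ η^2 * (y' - x') := mul_nonneg (by positivity) (by linarith)
          have hd1 : y' - x' ≤ y - x := by
            simp only [hx', hy']
            rcases max_cases x R with ⟨e, _⟩ | ⟨e, _⟩ <;> rcases max_cases y R with ⟨e', _⟩ | ⟨e', _⟩ <;>
              rw [e, e'] <;> linarith
          refine ⟨by linarith, ?_⟩
          have c := clamp_lip (v x' - b) (η * (x' - R)) (v y' - b) (η * (y' - R))
          have g := hg.2 _ _ hxy'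
          calc _ ≤ (v y' - v x')^2 + (η * (y' - x'))^2 := by
                refine le_trans (le_of_eq (by ring)) (c.trans (le_of_eq (by ring)))
            _ ≤ (y' - x') * (F y' - F x') + (y' - x') * (η^2 * (y' - x')) :=
                add_le_add g (le_of_eq (by ring))
            _ = (y' - x') * (F y' - F x' + η^2 * (y' - x')) := by ring
            _ ≤ (y - x) * (F y' - F x' + η^2 * (y' - x')) := by gcongr
            _ = _ := by ring
        · intro x y hx hxy
          simp only [max_eq_left (show R ≤ x by linarith), max_eq_left (show R ≤ y by linarith)]
          rw [hGx _ (by linarith), hGx _ (by linarith), ht1 x hx, ht1 y (by linarith), hw2 x hx,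
            hw2 y (by linarith)]
          have m1 := hmono hxy
          refine ⟨by linarith, (hg.2 x y hxy).trans (le_of_eq (by ring))⟩
      exact main x y hxy hx
  have hwc := hGw.continuous
  have hWc := continuous_Wpot h
  have hwp : Tendsto w atTop (𝓝 L) := by
    refine hL.congr' ?_
    filter_upwards [eventually_ge_atTop (R+1)] with x hx
    exact (hw2 x hx).symm
  have hwm : Tendsto w atBot (𝓝 b) := by
    refine tendsto_const_nhds.congr' ?_
    filter_upwards [eventually_le_atBot R] with x hx
    exact (hwR x hx).symm
  refine (Einf_le_relE h0 hGw hLc hbc hwp hwm hd).trans ?_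
  -- pointwise bounds on the modified part
  have hwb : ∀ x, R ≤ x → x ≤ R + 1 → |w x - b| ≤ η * (x - R) ∧ |w x - v x| ≤ η := by
    intro x hx hx'
    have hr : 0 ≤ η * (x - R) := mul_nonneg hη0.le (by linarith)
    obtain ⟨c1, c2⟩ := clamp_bounds (w := v x - b) hr
    rw [hw1 x hx', htm x hx hx']
    refine ⟨by rwa [add_sub_cancel_left], ?_⟩
    have := hb x ⟨hx, by linarith⟩
    rw [show b + max (-(η * (x - R))) (min (v x - b) (η * (x - R))) - v x =
      max (-(η * (x - R))) (min (v x - b) (η * (x - R))) - (v x - b) by ring]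
    exact c2.trans this
  have vol1 : ∀ c : ℝ, 0 ≤ c → ∀ S : Set ℝ, ∫⁻ x in S, (Set.Ioc R (R+1)).indicator (fun _ => ENNReal.ofReal c) x ≤
      ENNReal.ofReal c := by
    intro c hc S
    refine (lintegral_mono' Measure.restrict_le_self le_rfl).trans ?_
    rw [lintegral_indicator_const measurableSet_Ioc]
    simp
  have eW : ∫⁻ x, ENNReal.ofReal (Wpot h (w x)) ≤ (∫⁻ x in Set.Ioi R, ENNReal.ofReal (Wpot h (v x))) +
      ENNReal.ofReal (2 * (1 + h) * η^2) := by
    have hz : ∫⁻ x, ENNReal.ofReal (Wpot h (w x)) = ∫⁻ x in Set.Ioi R, ENNReal.ofReal (Wpot h (w x)) := by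
      rw [← lintegral_indicator measurableSet_Ioi]
      refine lintegral_congr fun x => ?_
      by_cases hx : x ∈ Set.Ioi R
      · rw [Set.indicator_of_mem hx]
      · rw [Set.indicator_of_notMem hx, hwR x (not_lt.1 hx), Wpot_eq_zero hbc, ENNReal.ofReal_zero]
    rw [hz]
    refine le_trans (setLIntegral_mono' measurableSet_Ioi (g := fun x => ENNReal.ofReal (Wpot h (v x)) +
      (Set.Ioc R (R+1)).indicator (fun _ => ENNReal.ofReal (2 * (1 + h) * η^2)) x) fun x hx => ?_) ?_
    · have hx' : R < x := hx
      rcases le_or_gt x (R+1) with hx1 | hx1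
      · have hmem : x ∈ Set.Ioc R (R+1) := ⟨hx', hx1⟩
        rw [Set.indicator_of_mem hmem]
        refine le_add_of_nonneg_of_le zero_le (ENNReal.ofReal_le_ofReal ?_)
        refine (Wpot_le_sq h0 hbc _).trans ?_
        have h2 : |w x - b| ≤ η := (hwb x hx'.le hx1).1.trans (by nlinarith)
        have h3 : (w x - b)^2 ≤ η^2 := sq_le_sq' (by linarith [(abs_le.1 h2).1]) (abs_le.1 h2).2
        have := mul_le_mul_of_nonneg_left h3 (show 0 ≤ 2 * (1+h) by positivity)
        linarith
      · rw [hw2 x hx1.le]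
        exact le_self_add
    · rw [lintegral_add_left (by fun_prop)]
      exact add_le_add le_rfl (vol1 _ (by positivity) _)
  -- The interaction with `(-∞, R]`: `w` is close to `b` up to `R + η⁻¹`, and beyond that point the
  -- weight `1 / (s - R)` is at most `η`.
  have eX : ∫⁻ s in Set.Ioi R, ENNReal.ofReal (2 * ((Real.cos (w s) - kparam h)^2 / (s - R))) ≤
      ENNReal.ofReal (2 * (η * (1 + 2 * C₀))) := by
    refine le_trans (setLIntegral_mono' measurableSet_Ioi (g := fun x =>
      (Set.Ioc R (R+1/η)).indicator (fun _ => ENNReal.ofReal (2 * η^2)) x +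
      ENNReal.ofReal (2 * η) * ENNReal.ofReal ((Real.cos (v x) - kparam h)^2)) fun x hx => ?_) ?_
    · have hx' : 0 < x - R := sub_pos.2 hx
      rcases le_or_gt x (R+1/η) with hx1 | hx1
      · have hmem : x ∈ Set.Ioc R (R+1/η) := ⟨hx, hx1⟩
        rw [Set.indicator_of_mem hmem]
        refine le_add_of_le_of_nonneg (ENNReal.ofReal_le_ofReal ?_) zero_le
        have hcb : (Real.cos (w x) - kparam h)^2 ≤ (w x - b)^2 := by
          rw [← hbc]; exact cos_sub_sq_le _ _
        have : (Real.cos (w x) - kparam h)^2 / (x - R) ≤ η^2 := by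
          rw [div_le_iff₀ hx']
          refine hcb.trans ?_
          rcases le_total x (R+1) with hx2 | hx2
          · have h2 := (hwb x (by linarith) hx2).1
            have h3 : (w x - b)^2 ≤ (η * (x - R))^2 := sq_le_sq' (by linarith [(abs_le.1 h2).1]) (abs_le.1 h2).2
            have h4 : (x - R)^2 ≤ x - R := by nlinarith
            have := mul_le_mul_of_nonneg_left h4 (sq_nonneg η)
            nlinarith
          · rw [hw2 x hx2]
            have h2 := hb x ⟨by linarith, hx1⟩
            have h3 : (v x - b)^2 ≤ η^2 := sq_le_sq' (by linarith [(abs_le.1 h2).1]) (abs_le.1 h2).2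
            have : η^2 * 1 ≤ η^2 * (x - R) := by
              apply mul_le_mul_of_nonneg_left _ (sq_nonneg η)
              linarith
            linarith
        linarith
      · refine le_add_of_nonneg_of_le zero_le ?_
        rw [← ENNReal.ofReal_mul (by positivity)]
        apply ENNReal.ofReal_le_ofReal
        rw [hw2 x (by linarith)]
        have : (Real.cos (v x) - kparam h)^2 / (x - R) ≤ η * (Real.cos (v x) - kparam h)^2 := by
          rw [div_le_iff₀ hx']
          have h3 : 1 ≤ η * (x - R) := by
            have : 1/η ≤ x - R := by linarith
            rw [div_le_iff₀ hη0] at this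
            linarith
          nlinarith [sq_nonneg (Real.cos (v x) - kparam h)]
        linarith
    · rw [lintegral_add_left (Measurable.indicator (by fun_prop) measurableSet_Ioc),
        lintegral_const_mul _ (by fun_prop)]
      have i1 : ∫⁻ x in Set.Ioi R, (Set.Ioc R (R+1/η)).indicator (fun _ => ENNReal.ofReal (2 * η^2)) x ≤
          ENNReal.ofReal (2 * η) := by
        refine (lintegral_mono' Measure.restrict_le_self le_rfl).trans ?_
        rw [lintegral_indicator_const measurableSet_Ioc, Real.volume_Ioc, ← ENNReal.ofReal_mul (by positivity)]
        apply ENNReal.ofReal_le_ofReal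
        rw [add_sub_cancel_left]
        apply le_of_eq
        field_simp
      have i2 : ∫⁻ x in Set.Ioi R, ENNReal.ofReal ((Real.cos (v x) - kparam h)^2) ≤ ENNReal.ofReal (2 * C₀) := by
        refine (lintegral_cos_sub_sq_le hvc.measurable _).trans ?_
        rw [ENNReal.ofReal_mul zero_le_two, ENNReal.ofReal_ofNat]
        exact mul_le_mul_right ((setLIntegral_le_lintegral _ _).trans hW) _
      refine (add_le_add i1 (mul_le_mul_right i2 _)).trans (le_of_eq ?_)
      rw [← ENNReal.ofReal_mul (by positivity), ← ENNReal.ofReal_add (by positivity) (by positivity)]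
      congr 1
      ring
  have eD : NL (fun x => Real.cos (w x) - Real.cos (v x)) (Set.Ioi R) ≤
      ENNReal.ofReal (η * (2 * (4 * A₀ + 2) + 8)) := by
    refine (NL_le (hGw.cos.sub hg.cos) hη0 measurableSet_Ioi (β := η^2) ?_ (by positivity)).trans ?_
    · refine le_trans (setLIntegral_mono' measurableSet_Ioi (g :=
        (Set.Ioc R (R+1)).indicator (fun _ => ENNReal.ofReal (η^2))) fun x hx => ?_) (vol1 _ (by positivity) _)
      have hx' : R < x := hx
      rcases le_or_gt x (R+1) with hx1 | hx1
      · have hmem : x ∈ Set.Ioc R (R+1) := ⟨hx', hx1⟩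
        rw [Set.indicator_of_mem hmem]
        apply ENNReal.ofReal_le_ofReal
        have h2 := (hwb x hx'.le hx1).2
        exact (cos_sub_sq_le _ _).trans (sq_le_sq' (by linarith [(abs_le.1 h2).1]) (abs_le.1 h2).2)
      · rw [hw2 x hx1.le]
        simp
    · apply ENNReal.ofReal_le_ofReal
      have : 8 * η^2/η = 8 * η := by field_simp
      rw [this]
      have h3 : 2 * (A - F R + η^2) + 2 * A ≤ 4 * A₀ + 2 := by nlinarith [hFR.1]
      have := mul_le_mul_of_nonneg_left h3 (show 0 ≤ 2 * η by positivity)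
      linarith
  have hA₀n : 0 ≤ A₀ := hAnn.trans hA₀
  have eN := (NL_univ_le_of_const (m := fun x => Real.cos (w x)) (by fun_prop) (k := kparam h) (R := R)
    (fun x hx => by rw [hwR x hx, hbc])).trans (add_le_add
      ((NL_le_add (m := fun x => Real.cos (v x)) (by fun_prop) (by fun_prop) hδ).trans
        (add_le_add le_rfl (mul_le_mul_right eD _))) (mul_le_mul_right eX 2))
  have eN2 := mul_le_mul_right eN (ENNReal.ofReal (1/(4*π)))
  have hκ : 1/(4*π) ≤ 1 := by
    rw [div_le_one (by positivity)]
    linarith [Real.pi_gt_three]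
  have hone : (1:ℝ≥0∞) ≤ ENNReal.ofReal (1 + δ) := by
    rw [← ENNReal.ofReal_one]; exact ENNReal.ofReal_le_ofReal (by linarith)
  have e1 : ENNReal.ofReal ((A - F R + η^2)/2) ≤
      ENNReal.ofReal (1+δ) * ENNReal.ofReal ((A - F R)/2) + ENNReal.ofReal (η^2/2) := by
    rw [add_div, ENNReal.ofReal_add (by linarith) (by positivity)]
    exact add_le_add (le_mul_of_one_le_left zero_le hone) le_rfl
  have e2 := eW.trans (add_le_add (le_mul_of_one_le_left zero_le hone) le_rfl)
  unfold relE
  refine (add_le_add (add_le_add e1 e2) eN2).trans ?_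
  have herr : ENNReal.ofReal (η^2/2) + ENNReal.ofReal (2 * (1 + h) * η^2) +
      ENNReal.ofReal (1/(4*π)) * (ENNReal.ofReal (1 + 1/δ) * ENNReal.ofReal (η * (2 * (4 * A₀ + 2) + 8)) +
        2 * ENNReal.ofReal (2 * (η * (1 + 2 * C₀)))) ≤ ENNReal.ofReal (δ * cutConst h A₀ C₀) := by
    rw [show (2:ℝ≥0∞) = ENNReal.ofReal 2 by norm_num]
    simp (discharger := positivity) only [← ENNReal.ofReal_mul, ← ENNReal.ofReal_add]
    apply ENNReal.ofReal_le_ofReal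
    have h1d : 1 + 1/δ ≤ 2/δ := by
      rw [le_div_iff₀ hδ, add_mul, div_mul_cancel₀ _ hδ.ne']
      linarith
    have i1 : 1/(4*π) * ((1 + 1/δ) * (η * (2 * (4 * A₀ + 2) + 8)) + 2 * (2 * (η * (1 + 2 * C₀)))) ≤
        1 * ((2/δ) * (η * (2 * (4 * A₀ + 2) + 8)) + 2 * (2 * (δ * (1 + 2 * C₀)))) := by gcongr
    have i2 : (2/δ) * (η * (2 * (4 * A₀ + 2) + 8)) = δ * (2 * (2 * (4 * A₀ + 2) + 8)) := by
      rw [hη]; field_simp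
    have i3 : η^2 ≤ δ := by nlinarith
    have i4 : 2 * (1 + h) * η^2 ≤ 2 * (1 + h) * δ := by gcongr
    unfold cutConst
    rw [i2] at i1
    linarith
  calc _ = ENNReal.ofReal (1+δ) * rightE h v F A R + (ENNReal.ofReal (η^2/2) + ENNReal.ofReal (2 * (1 + h) * η^2) +
      ENNReal.ofReal (1/(4*π)) * (ENNReal.ofReal (1 + 1/δ) * ENNReal.ofReal (η * (2 * (4 * A₀ + 2) + 8)) +
        2 * ENNReal.ofReal (2 * (η * (1 + 2 * C₀))))) := by
        unfold rightE; ring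
    _ ≤ _ := add_le_add le_rfl herr

/-! ### Splitting the energy into window and tails -/

/-- Energy (with gauge `F`) carried by the window `[-R, R]`. -/
def centerE (h : ℝ) (v F : ℝ → ℝ) (R : ℝ) : ℝ≥0∞ :=
  ENNReal.ofReal ((F R - F (-R))/2) + (∫⁻ x in Set.Icc (-R) R, ENNReal.ofReal (Wpot h (v x))) +
    ENNReal.ofReal (1/(4*π)) * NL (fun x => Real.cos (v x)) (Set.Icc (-R) R)

lemma setLIntegral_neg {f : ℝ → ℝ≥0∞} (hf : Measurable f) (hs : ∀ x, f (-x) = f x) (R : ℝ) :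
    ∫⁻ x in Set.Iio (-R), f x = ∫⁻ x in Set.Ioi R, f x := by
  have hmp : MeasurePreserving (fun x : ℝ => -x) volume volume := Measure.measurePreserving_neg volume
  rw [← hmp.setLIntegral_comp_preimage measurableSet_Iio hf]
  have : (fun x : ℝ => -x) ⁻¹' Set.Iio (-R) = Set.Ioi R := by
    ext x; simp
  rw [this]
  exact lintegral_congr hs

lemma NL_neg {m : ℝ → ℝ} (hm : Measurable m) (hs : ∀ x, m (-x) = m x) (R : ℝ) :
    NL m (Set.Iio (-R)) = NL m (Set.Ioi R) := by
  have hmp1 : MeasurePreserving (fun x : ℝ => -x) volume volume := Measure.measurePreserving_neg volume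
  have hmp : MeasurePreserving (Prod.map (fun x : ℝ => -x) (fun x : ℝ => -x)) volume volume :=
    hmp1.prod hmp1
  unfold NL
  rw [← hmp.setLIntegral_comp_preimage (measurableSet_Iio.prod measurableSet_Iio) (measurable_strayKer hm)]
  have : Prod.map (fun x : ℝ => -x) (fun x : ℝ => -x) ⁻¹' (Set.Iio (-R) ×ˢ Set.Iio (-R)) =
      Set.Ioi R ×ˢ Set.Ioi R := by
    ext ⟨x, y⟩; simp
  rw [this]
  refine lintegral_congr fun p => ?_
  simp only [strayKer, Prod.map_fst, Prod.map_snd, hs]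
  congr 2
  ring

lemma lintegral_three_le {Ω : Type*} [MeasurableSpace Ω] {μ : Measure Ω} (f : Ω → ℝ≥0∞) {S T U : Set Ω}
    (hT : MeasurableSet T) (hU : MeasurableSet U)
    (h1 : Disjoint S T) (h2 : Disjoint (S ∪ T) U) :
    (∫⁻ x in S, f x ∂μ) + (∫⁻ x in T, f x ∂μ) + (∫⁻ x in U, f x ∂μ) ≤ ∫⁻ x, f x ∂μ := by
  rw [← lintegral_union hT h1, ← lintegral_union hU h2]
  exact setLIntegral_le_lintegral _ _

/-- An even profile spends its energy in the window `[-R, R]` and, twice, on `(R, ∞)`; the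
interaction between these pieces only adds energy. -/
lemma center_add_right_le {h : ℝ} {v F : ℝ → ℝ} {A : ℝ} (hg : Gauge v F A)
    (hs : ∀ x, Real.cos (v (-x)) = Real.cos (v x)) (hF : ∀ x, F (-x) = A - F x) {R : ℝ} (hR : 0 ≤ R) :
    centerE h v F R + 2 * rightE h v F A R ≤ relE h v A := by
  have hvc := hg.continuous
  have hWc := continuous_Wpot h
  have hm := hg.monotone (show -R ≤ R by linarith)
  have hFR := hg.1 R
  have d1 : Disjoint (Set.Icc (-R) R) (Set.Ioi R) :=
    Set.disjoint_left.2 fun x hx hx' => absurd hx.2 (not_le.2 hx')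
  have d2 : Disjoint (Set.Icc (-R) R) (Set.Iio (-R)) :=
    Set.disjoint_left.2 fun x hx hx' => absurd hx.1 (not_le.2 hx')
  have d3 : Disjoint (Set.Ioi R) (Set.Iio (-R)) :=
    Set.disjoint_left.2 fun x hx hx' => by
      have h1 : R < x := hx
      have h2 : x < -R := hx'
      linarith
  have eA : ENNReal.ofReal ((F R - F (-R))/2) + 2 * ENNReal.ofReal ((A - F R)/2) = ENNReal.ofReal (A/2) := by
    rw [show (2:ℝ≥0∞) = ENNReal.ofReal 2 by norm_num, ← ENNReal.ofReal_mul zero_le_two,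
      ← ENNReal.ofReal_add (by linarith) (by linarith [hFR.2])]
    congr 1
    rw [hF]; ring
  have eW : (∫⁻ x in Set.Icc (-R) R, ENNReal.ofReal (Wpot h (v x))) +
      2 * (∫⁻ x in Set.Ioi R, ENNReal.ofReal (Wpot h (v x))) ≤ ∫⁻ x, ENNReal.ofReal (Wpot h (v x)) := by
    have := lintegral_three_le (μ := volume) (fun x => ENNReal.ofReal (Wpot h (v x))) measurableSet_Ioi
      measurableSet_Iio d1 (d2.union_left d3)
    rw [setLIntegral_neg (by fun_prop) (fun x => by rw [Wpot_congr (hs x)]) R] at this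
    rw [two_mul, ← add_assoc]
    exact this
  have eN : NL (fun x => Real.cos (v x)) (Set.Icc (-R) R) + 2 * NL (fun x => Real.cos (v x)) (Set.Ioi R) ≤
      NL (fun x => Real.cos (v x)) Set.univ := by
    have := lintegral_three_le (μ := volume) (strayKer fun x => Real.cos (v x))
      (S := Set.Icc (-R) R ×ˢ Set.Icc (-R) R) (measurableSet_Ioi.prod measurableSet_Ioi :
        MeasurableSet (Set.Ioi R ×ˢ Set.Ioi R)) (measurableSet_Iio.prod measurableSet_Iio :
        MeasurableSet (Set.Iio (-R) ×ˢ Set.Iio (-R))) (Set.disjoint_prod.2 (Or.inl d1))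
      ((Set.disjoint_prod.2 (Or.inl d2)).union_left (Set.disjoint_prod.2 (Or.inl d3)))
    have e := NL_neg (m := fun x => Real.cos (v x)) (by fun_prop) hs R
    rw [two_mul, ← add_assoc]
    nth_rewrite 2 [← e]
    unfold NL
    rw [Set.univ_prod_univ, Measure.restrict_univ]
    exact this
  unfold centerE rightE relE
  rw [← eA]
  calc _ = (ENNReal.ofReal ((F R - F (-R))/2) + 2 * ENNReal.ofReal ((A - F R)/2)) +
        ((∫⁻ x in Set.Icc (-R) R, ENNReal.ofReal (Wpot h (v x))) +
      2 * (∫⁻ x in Set.Ioi R, ENNReal.ofReal (Wpot h (v x)))) + ENNReal.ofReal (1/(4*π)) *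
        (NL (fun x => Real.cos (v x)) (Set.Icc (-R) R) + 2 * NL (fun x => Real.cos (v x)) (Set.Ioi R)) := by ring
    _ ≤ _ := add_le_add (add_le_add le_rfl eW) (mul_le_mul_right eN _)

lemma centerE_mono {h : ℝ} {v F : ℝ → ℝ} (hF : Monotone F) {R R' : ℝ} (hR : R ≤ R') :
    centerE h v F R ≤ centerE h v F R' := by
  have hI : Set.Icc (-R) R ⊆ Set.Icc (-R') R' := Set.Icc_subset_Icc (by linarith) hR
  have h1 := hF hR
  have h2 := hF (show -R' ≤ -R by linarith)
  exact add_le_add (add_le_add (ENNReal.ofReal_le_ofReal (by linarith)) (lintegral_mono_set hI))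
    (mul_le_mul_right (NL_mono _ hI) _)

lemma tendsto_lintegral_exhaust {Ω : Type*} [MeasurableSpace Ω] {μ : Measure Ω} {f : Ω → ℝ≥0∞}
    (hf : Measurable f) {S : ℕ → Set Ω} (hS : ∀ n, MeasurableSet (S n))
    (hx : ∀ x, ∀ᶠ n in atTop, x ∈ S n) :
    Tendsto (fun n => ∫⁻ x in S n, f x ∂μ) atTop (𝓝 (∫⁻ x, f x ∂μ)) := by
  have hcov : AECover μ atTop S := ⟨Eventually.of_forall hx, hS⟩
  exact hcov.lintegral_tendsto_of_countably_generated hf.aemeasurable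

/-- Bounds on all the window energies pass to the relaxed energy, for the normalized gauge
`F - F(-∞)`, whose mass is `F(+∞) - F(-∞)`. -/
lemma relE_le_of_centerE {h : ℝ} {v F : ℝ → ℝ} {A : ℝ} (hg : Gauge v F A) {X e : ℝ≥0∞}
    (hle : ∀ R, 0 ≤ R → centerE h v F R + X ≤ e) :
    ∃ F' A', Gauge v F' A' ∧ relE h v A' + X ≤ e := by
  have hmono := hg.monotone
  have hvc := hg.continuous
  have hWc := continuous_Wpot h
  have hba : BddAbove (Set.range F) := ⟨A, by rintro _ ⟨x, rfl⟩; exact (hg.1 x).2⟩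
  have hbb : BddBelow (Set.range F) := ⟨0, by rintro _ ⟨x, rfl⟩; exact (hg.1 x).1⟩
  have tp := tendsto_atTop_ciSup hmono hba
  have tm := tendsto_atBot_ciInf hmono hbb
  set Fp := ⨆ x, F x
  set Fm := ⨅ x, F x
  refine ⟨fun x => F x - Fm, Fp - Fm, ⟨fun x => ⟨sub_nonneg.2 (ciInf_le hbb x),
    sub_le_sub_right (le_ciSup hba x) _⟩, fun x y hxy => (hg.2 x y hxy).trans (le_of_eq (by ring))⟩, ?_⟩
  have hnat : Tendsto (fun n : ℕ => (n:ℝ)) atTop atTop := tendsto_natCast_atTop_atTop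
  have hmem : ∀ x : ℝ, ∀ᶠ n : ℕ in atTop, x ∈ Set.Icc (-(n:ℝ)) n := by
    intro x
    filter_upwards [hnat.eventually_ge_atTop |x|] with n hn
    exact abs_le.1 hn
  have l1 : Tendsto (fun n : ℕ => ENNReal.ofReal ((F n - F (-(n:ℝ)))/2)) atTop
      (𝓝 (ENNReal.ofReal ((Fp - Fm)/2))) :=
    ENNReal.tendsto_ofReal (((tp.comp hnat).sub (tm.comp (tendsto_neg_atTop_atBot.comp hnat))).div_const 2)
  have l2 : Tendsto (fun n : ℕ => ∫⁻ x in Set.Icc (-(n:ℝ)) n, ENNReal.ofReal (Wpot h (v x))) atTop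
      (𝓝 (∫⁻ x, ENNReal.ofReal (Wpot h (v x)))) :=
    tendsto_lintegral_exhaust (by fun_prop) (fun n => measurableSet_Icc) hmem
  have l3 : Tendsto (fun n : ℕ => NL (fun x => Real.cos (v x)) (Set.Icc (-(n:ℝ)) n)) atTop
      (𝓝 (NL (fun x => Real.cos (v x)) Set.univ)) := by
    unfold NL
    rw [Set.univ_prod_univ, Measure.restrict_univ]
    refine tendsto_lintegral_exhaust (measurable_strayKer (by fun_prop))
      (fun n => measurableSet_Icc.prod measurableSet_Icc) fun p => ?_
    filter_upwards [hmem p.1, hmem p.2] with n h1 h2 using ⟨h1, h2⟩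
  have l4 := ((l1.add l2).add (ENNReal.Tendsto.const_mul l3
    (Or.inr (ENNReal.ofReal_ne_top (r := 1/(4*π)))))).add_const X
  exact le_of_tendsto' l4 fun n => hle n n.cast_nonneg

/-! ### Existence of a relaxed minimizer -/

/-- Fatou's lemma along an ultrafilter. -/
lemma fatou_ultrafilter {Ω : Type*} [MeasurableSpace Ω] {μ : Measure Ω} (𝒰 : Ultrafilter ℕ)
    (h𝒰 : (𝒰 : Filter ℕ) ≤ atTop) {f : ℕ → Ω → ℝ≥0∞} {g : Ω → ℝ≥0∞} (hf : ∀ n, Measurable (f n))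
    (hlim : ∀ x, Tendsto (fun n => f n x) atTop (𝓝 (g x))) :
    ∃ c, Tendsto (fun n => ∫⁻ x, f n x ∂μ) 𝒰 (𝓝 c) ∧ ∫⁻ x, g x ∂μ ≤ c := by
  obtain ⟨c, -, hc⟩ := isCompact_univ.ultrafilter_le_nhds (𝒰.map fun n => ∫⁻ x, f n x ∂μ) (by simp)
  have hc' : Tendsto (fun n => ∫⁻ x, f n x ∂μ) 𝒰 (𝓝 c) := hc
  refine ⟨c, hc', ?_⟩
  calc ∫⁻ x, g x ∂μ = ∫⁻ x, liminf (fun n => f n x) atTop ∂μ :=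
        lintegral_congr fun x => (hlim x).liminf_eq.symm
    _ ≤ liminf (fun n => ∫⁻ x, f n x ∂μ) atTop := lintegral_liminf_le hf
    _ ≤ liminf (fun n => ∫⁻ x, f n x ∂μ) 𝒰 := liminf_le_liminf_of_le h𝒰
    _ = c := hc'.liminf_eq

/-- Lower semicontinuity of the window energy. -/
lemma centerE_le_of_tendsto {h : ℝ} (𝒰 : Ultrafilter ℕ) (h𝒰 : (𝒰 : Filter ℕ) ≤ atTop)
    {v F : ℕ → ℝ → ℝ} {w G : ℝ → ℝ} (hv : ∀ n, Continuous (v n))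
    (hvw : ∀ x, Tendsto (fun n => v n x) atTop (𝓝 (w x)))
    (hFG : ∀ x, Tendsto (fun n => F n x) 𝒰 (𝓝 (G x))) {R : ℝ} {X b : ℝ≥0∞} {c : ℕ → ℝ≥0∞}
    (hb : Tendsto c 𝒰 (𝓝 b)) (hle : ∀ᶠ n in 𝒰, centerE h (v n) (F n) R + X ≤ c n) :
    centerE h w G R + X ≤ b := by
  have hWc := continuous_Wpot h
  obtain ⟨c₁, h1, h1'⟩ := fatou_ultrafilter 𝒰 h𝒰 (μ := volume.restrict (Set.Icc (-R) R))
    (f := fun n x => ENNReal.ofReal (Wpot h (v n x))) (g := fun x => ENNReal.ofReal (Wpot h (w x)))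
    (fun n => by have := hv n; fun_prop)
    (fun x => ENNReal.tendsto_ofReal ((hWc.tendsto _).comp (hvw x)))
  obtain ⟨c₂, h2, h2'⟩ := fatou_ultrafilter 𝒰 h𝒰 (μ := volume.restrict (Set.Icc (-R) R ×ˢ Set.Icc (-R) R))
    (f := fun n => strayKer fun x => Real.cos (v n x)) (g := strayKer fun x => Real.cos (w x))
    (fun n => by have := hv n; exact measurable_strayKer (by fun_prop))
    (fun p => ENNReal.tendsto_ofReal (((((Real.continuous_cos.tendsto _).comp (hvw p.1)).sub
      ((Real.continuous_cos.tendsto _).comp (hvw p.2))).pow 2).div_const _))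
  have h3 := ((((ENNReal.tendsto_ofReal (((hFG R).sub (hFG (-R))).div_const 2)).add h1).add
    (ENNReal.Tendsto.const_mul h2 (Or.inr (ENNReal.ofReal_ne_top (r := 1/(4*π)))))).add_const X)
  refine le_trans ?_ (le_of_tendsto_of_tendsto h3 hb hle)
  exact add_le_add (add_le_add (add_le_add le_rfl h1') (mul_le_mul_right h2' _)) le_rfl

/-- The limit of a symmetric minimizing sequence: an odd profile with some limit `L` at infinity.
The energy lost at infinity pays twice for the missing transition from `L` to `πd`. -/
lemma exists_profile {h : ℝ} (h0 : 0 ≤ h) {ℓ : ℕ} (hℓ : 1 ≤ ℓ) {d : ℝ}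
    (hd : d = (ℓ : ℝ) - alphaParam h / π) :
    ∃ ψ F A L, Gauge ψ F A ∧ (∀ x, ψ (-x) = -ψ x) ∧ 0 ≤ L ∧ L ≤ π * ℓ ∧
      Tendsto ψ atTop (𝓝 L) ∧ Real.cos (L + π * ℓ) = kparam h ∧
      relE h (fun x => ψ x + π * ℓ) A + 2 * Einf h ((π * d - L) / (2 * π)) ≤ Einf h d := by
  have hfin := Einf_lt_top h0 hℓ hd
  set e := Einf h d with he
  have heε : ∀ n : ℕ, e < e + ENNReal.ofReal (1/((n:ℝ)+1)) := fun n =>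
    ENNReal.lt_add_right hfin.ne (ENNReal.ofReal_pos.2 (by positivity)).ne'
  choose u₀ F₀ A₀ hS₀ hlt₀ using fun n => exists_sym_phase h0 hℓ hd (heε n)
  set C₀ : ℝ := (e + 1).toReal with hC₀
  have hC₀e : ENNReal.ofReal C₀ = e + 1 := ENNReal.ofReal_toReal (by simp [hfin.ne])
  have hC₀n : 0 ≤ C₀ := ENNReal.toReal_nonneg
  have hrel₀ : ∀ n, relE h (fun x => u₀ n x + π * ℓ) (A₀ n) ≤ ENNReal.ofReal C₀ := fun n => by
    rw [hC₀e]
    refine (hlt₀ n).le.trans (add_le_add le_rfl ?_)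
    rw [← ENNReal.ofReal_one]
    apply ENNReal.ofReal_le_ofReal
    rw [div_le_one (by positivity)]
    linarith [n.cast_nonneg (α := ℝ)]
  have hA₀ : ∀ n, A₀ n ≤ 2 * C₀ := fun n => by
    have : ENNReal.ofReal (A₀ n / 2) ≤ ENNReal.ofReal C₀ :=
      (le_self_add.trans le_self_add).trans (hrel₀ n)
    have := (ENNReal.ofReal_le_ofReal_iff hC₀n).1 this
    linarith
  have hW₀ : ∀ n, ∫⁻ x, ENNReal.ofReal (Wpot h (u₀ n x + π * ℓ)) ≤ ENNReal.ofReal C₀ := fun n =>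
    (le_add_self.trans le_self_add).trans (hrel₀ n)
  have hK₀ : ∀ n x, |u₀ n x| ≤ π * ℓ := fun n x => by
    rcases le_total 0 x with hx | hx
    · have := (hS₀ n).2.2.2.1 x hx
      rw [abs_of_nonneg this.1]; exact this.2
    · have := (hS₀ n).2.2.2.1 (-x) (by linarith)
      rw [(hS₀ n).2.1 x] at this
      rw [abs_of_nonpos (by linarith)]; exact this.2
  obtain ⟨σ, hσ, ψ, hpt, hloc⟩ := exists_subseq_limit (fun n => (hS₀ n).1) hA₀ hK₀
  set u := fun n => u₀ (σ n) with hu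
  -- An ultrafilter makes the gauges converge pointwise without a further extraction.
  set 𝒰 : Ultrafilter ℕ := hyperfilter ℕ
  have h𝒰 : (𝒰 : Filter ℕ) ≤ atTop := by
    rw [← Nat.cofinite_eq_atTop]; exact hyperfilter_le_cofinite
  have hexF : ∀ x, ∃ y, Tendsto (fun n => F₀ (σ n) x) 𝒰 (𝓝 y) := fun x => by
    obtain ⟨y, -, hy⟩ := (isCompact_Icc (a := (0:ℝ)) (b := 2 * C₀)).ultrafilter_le_nhds
      (𝒰.map fun n => F₀ (σ n) x) (by
        rw [le_principal_iff, Ultrafilter.mem_coe, Ultrafilter.mem_map]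
        exact Filter.univ_mem' fun n => ⟨((hS₀ _).1.1 x).1, ((hS₀ _).1.1 x).2.trans (hA₀ _)⟩)
    exact ⟨y, hy⟩
  choose F hF using hexF
  have hpt𝒰 : ∀ x, Tendsto (fun n => u n x) 𝒰 (𝓝 (ψ x)) := fun x => (hpt x).mono_left h𝒰
  have hg : Gauge ψ F (2 * C₀) := by
    refine ⟨fun x => ⟨ge_of_tendsto' (hF x) fun n => ((hS₀ _).1.1 x).1,
      le_of_tendsto' (hF x) fun n => ((hS₀ _).1.1 x).2.trans (hA₀ _)⟩, fun x y hxy => ?_⟩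
    exact le_of_tendsto_of_tendsto' (((hpt𝒰 y).sub (hpt𝒰 x)).pow 2)
      (((hF y).sub (hF x)).const_mul (y - x)) fun n => (hS₀ _).1.2 x y hxy
  have hodd : ∀ x, ψ (-x) = -ψ x := fun x =>
    tendsto_nhds_unique (hpt (-x)) (by simpa only [(hS₀ _).2.1] using (hpt x).neg)
  have hpos : ∀ x, 0 ≤ x → 0 ≤ ψ x ∧ ψ x ≤ π * ℓ := fun x hx =>
    ⟨ge_of_tendsto' (hpt x) fun n => ((hS₀ _).2.2.2.1 x hx).1,
      le_of_tendsto' (hpt x) fun n => ((hS₀ _).2.2.2.1 x hx).2⟩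
  have hψc := hg.continuous
  have hWc := continuous_Wpot h
  have hg' : Gauge (fun x => ψ x + π * ℓ) F (2 * C₀) := hg.of_le fun x y => by simp
  have hWψ : ∫⁻ x, ENNReal.ofReal (Wpot h (ψ x + π * ℓ)) < ⊤ := by
    obtain ⟨c, hc, hc'⟩ := fatou_ultrafilter 𝒰 h𝒰 (μ := volume)
      (f := fun n x => ENNReal.ofReal (Wpot h (u n x + π * ℓ)))
      (g := fun x => ENNReal.ofReal (Wpot h (ψ x + π * ℓ)))
      (fun n => by have := (hS₀ (σ n)).1.continuous; fun_prop)
      (fun x => ENNReal.tendsto_ofReal ((hWc.tendsto _).comp ((hpt x).add_const _)))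
    exact (hc'.trans (le_of_tendsto' hc fun n => hW₀ (σ n))).trans_lt ENNReal.ofReal_lt_top
  obtain ⟨L₁, hL₁, hL₁c⟩ := exists_limit hg' hWψ (K := π * ℓ + π * ℓ) fun x => by
    rcases le_total 0 x with hx | hx
    · have := hpos x hx
      have : (0:ℝ) ≤ π * ℓ := by positivity
      rw [abs_of_nonneg] <;> linarith
    · have := hpos (-x) (by linarith)
      rw [hodd x] at this
      have : (0:ℝ) ≤ π * ℓ := by positivity
      rw [abs_of_nonneg] <;> linarith
  obtain ⟨L, rfl⟩ : ∃ L, L₁ = L + π * ℓ := ⟨L₁ - π * ℓ, by ring⟩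
  have hL : Tendsto ψ atTop (𝓝 L) := by simpa using hL₁.sub_const (π * ℓ)
  have hL0 : 0 ≤ L := ge_of_tendsto hL ((eventually_ge_atTop 0).mono fun x hx => (hpos x hx).1)
  have hL1 : L ≤ π * ℓ := le_of_tendsto hL ((eventually_ge_atTop 0).mono fun x hx => (hpos x hx).2)
  set X := Einf h ((π * d - L) / (2 * π)) with hX
  -- On `[R, R + δ⁻²]` with `R` large the phases are eventually close to the well `L + πℓ`, so
  -- `right_part` bounds the energy on `(R, ∞)` from below; by symmetry it is spent twice.
  have hcenter : ∀ R₀, 0 ≤ R₀ → centerE h (fun x => ψ x + π * ℓ) F R₀ + 2 * X ≤ e := by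
    intro R₀ hR₀
    refine le_of_forall_delta (K := 2 * cutConst h (2 * C₀) C₀) ?_
    intro δ hδ hδ1
    have hη : (0:ℝ) < δ^2 := by positivity
    obtain ⟨R₁, hR₁⟩ := (hL.eventually (Metric.closedBall_mem_nhds L (half_pos hη))).exists_forall_of_atTop
    set R := max R₀ R₁ with hR
    refine (add_le_add (centerE_mono hg.monotone (le_max_left R₀ R₁)) le_rfl).trans ?_
    have hclose : ∀ᶠ n in atTop, ∀ x ∈ Set.Icc R (R + 1/δ^2), |u n x - L| ≤ δ^2 := by
      have := (tendstoLocallyUniformly_iff_forall_isCompact.1 hloc) _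
        (isCompact_Icc (a := R) (b := R + 1/δ^2))
      have := Metric.tendstoUniformlyOn_iff.1 this _ (half_pos hη)
      filter_upwards [this] with n hn x hx
      have h1 := (hn x hx).le
      have h2 : dist (ψ x) L ≤ δ^2/2 := hR₁ x ((le_max_right _ _).trans hx.1)
      rw [dist_comm] at h1
      have := dist_triangle (u n x) (ψ x) L
      rw [← Real.dist_eq]
      linarith
    have hbt : Tendsto (fun n : ℕ => ENNReal.ofReal (1+δ) * (e + ENNReal.ofReal (1/((σ n:ℝ)+1))) +
        ENNReal.ofReal (δ * (2 * cutConst h (2 * C₀) C₀))) 𝒰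
        (𝓝 (ENNReal.ofReal (1+δ) * e + ENNReal.ofReal (δ * (2 * cutConst h (2 * C₀) C₀)))) := by
      refine Tendsto.add_const _ (ENNReal.Tendsto.const_mul ?_ (Or.inr ENNReal.ofReal_ne_top))
      have : Tendsto (fun n : ℕ => 1/((n:ℝ)+1)) atTop (𝓝 0) := tendsto_one_div_add_atTop_nhds_zero_nat
      have := (ENNReal.tendsto_ofReal ((this.comp hσ.tendsto_atTop).mono_left h𝒰)).const_add e
      simpa using this
    refine centerE_le_of_tendsto 𝒰 h𝒰 (v := fun n x => u n x + π * ℓ) (F := fun n => F₀ (σ n))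
      (fun n => (hS₀ (σ n)).1.continuous.add_const _) (fun x => (hpt x).add_const _) hF hbt ?_
    filter_upwards [h𝒰 hclose] with n hn
    obtain ⟨gn, on, Fn, bn, ln⟩ := hS₀ (σ n)
    have gn' : Gauge (fun x => u n x + π * ℓ) (F₀ (σ n)) (A₀ (σ n)) := gn.of_le fun x y => by simp [hu]
    have r1 : X ≤ _ := right_part h0 gn' (hA₀ (σ n)) hC₀n (hW₀ (σ n)) hδ hδ1 (ln.add_const (π * ℓ))
      (cos_add_end h0 hd) hL₁c (R := R) (fun x hx => by simpa using hn x hx)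
      (by field_simp; ring)
    have r2 := center_add_right_le (h := h) gn' (fun x => by
      simp only [hu]; rw [on, cos_neg_add]) Fn (R := R) (hR₀.trans (le_max_left _ _))
    have hone : (1:ℝ≥0∞) ≤ ENNReal.ofReal (1 + δ) := by
      rw [← ENNReal.ofReal_one]; exact ENNReal.ofReal_le_ofReal (by linarith)
    have hc0 : 0 ≤ cutConst h (2 * C₀) C₀ := by unfold cutConst; positivity
    calc _ ≤ ENNReal.ofReal (1+δ) * centerE h (fun x => u n x + π * ℓ) (F₀ (σ n)) R +
          2 * (ENNReal.ofReal (1 + δ) * rightE h (fun x => u n x + π * ℓ) (F₀ (σ n)) (A₀ (σ n)) R +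
            ENNReal.ofReal (δ * cutConst h (2 * C₀) C₀)) :=
          add_le_add (le_mul_of_one_le_left zero_le hone) (mul_le_mul_right r1 2)
      _ = ENNReal.ofReal (1+δ) * (centerE h (fun x => u n x + π * ℓ) (F₀ (σ n)) R +
          2 * rightE h (fun x => u n x + π * ℓ) (F₀ (σ n)) (A₀ (σ n)) R) +
            ENNReal.ofReal (δ * (2 * cutConst h (2 * C₀) C₀)) := by
          rw [show δ * (2 * cutConst h (2 * C₀) C₀) = 2 * (δ * cutConst h (2 * C₀) C₀) by ring,
            ENNReal.ofReal_mul zero_le_two, ENNReal.ofReal_ofNat]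
          ring
      _ ≤ _ := add_le_add (mul_le_mul_right (r2.trans (hlt₀ (σ n)).le) _) le_rfl
  obtain ⟨F', A', hgF, hrel⟩ := relE_le_of_centerE hg' hcenter
  exact ⟨ψ, F', A', L, hgF.of_le fun x y => by simp, hodd, hL0, hL1, hL, hL₁c, hrel⟩

/-- The strict subadditivity inequalities rule out any loss at infinity, so the infimum of the
relaxed energy is attained. -/
lemma exists_relaxed_minimizer {h : ℝ} (h0 : 0 ≤ h) {ℓ : ℕ} (hℓ : 1 ≤ ℓ) {d : ℝ}
    (hd : d = (ℓ : ℝ) - alphaParam h / π)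
    (H1 : ∀ j : ℕ, 1 ≤ j → 0 ≤ d - 2 * j → Einf h d < 2 * Einf h j + Einf h (d - 2 * j))
    (H2 : ∀ j : ℕ, 1 ≤ j → 0 ≤ d - 2 * (j - alphaParam h / π) →
      Einf h d < 2 * Einf h (j - alphaParam h / π) + Einf h (d - 2 * (j - alphaParam h / π))) :
    ∃ φ F A, Gauge φ F A ∧ Tendsto φ atTop (𝓝 (π * d + π * ℓ)) ∧
      Tendsto φ atBot (𝓝 (-(π * d) + π * ℓ)) ∧ relE h φ A ≤ Einf h d := by
  obtain ⟨ψ, F, A, L, hg, hodd, hL0, hL1, hL, hLc, hrel⟩ := exists_profile h0 hℓ hd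
  have hg' : Gauge (fun x => ψ x + π * ℓ) F A := hg.of_le fun x y => by simp
  have hLm : Tendsto ψ atBot (𝓝 (-L)) := by
    have := (hL.comp tendsto_neg_atBot_atTop).neg
    refine this.congr fun x => ?_
    simp [hodd]
  have hE : Einf h (L / π) ≤ relE h (fun x => ψ x + π * ℓ) A :=
    Einf_le_relE h0 hg' hLc (by rw [cos_neg_add, hLc]) (hL.add_const _) (hLm.add_const _)
      (by field_simp; ring)
  have hπ := Real.pi_pos
  rcases limit_cases h0 hd hL1 hLc with rfl | ⟨j, hj, rfl | rfl⟩
  · exact ⟨_, F, A, hg', hL.add_const _, hLm.add_const _, le_self_add.trans hrel⟩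
  · exfalso
    rw [mul_div_cancel_left₀ _ hπ.ne'] at hE
    rw [show (π * d - π * (d - 2 * j)) / (2 * π) = j by field_simp; ring] at hrel
    refine absurd (H1 j hj (nonneg_of_mul_nonneg_right hL0 hπ)) (not_lt.2 (le_trans ?_ hrel))
    rw [add_comm]
    exact add_le_add hE le_rfl
  · exfalso
    rw [mul_div_cancel_left₀ _ hπ.ne'] at hE
    rw [show (π * d - π * (d - 2 * (j - alphaParam h / π))) / (2 * π) = j - alphaParam h / π by
      field_simp; ring] at hrel
    refine absurd (H2 j hj (nonneg_of_mul_nonneg_right hL0 hπ)) (not_lt.2 (le_trans ?_ hrel))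
    rw [add_comm]
    exact add_le_add hE le_rfl

/-! ### Tent perturbations -/

/-- Adding a ramp of slope `s` on `[a, b]` to a gauged function. -/
lemma gauge_ramp {φ F : ℝ → ℝ} {A a b : ℝ} (hg : Gauge φ F A) (hab : a ≤ b) (s : ℝ) :
    ∃ G, Gauge (fun x => φ x + s * (max a (min b x) - a)) G
      (A + 2 * s * (φ b - φ a) + s^2 * (b - a)) := by
  set c : ℝ → ℝ := fun x => max a (min b x) with hc
  have c1 : ∀ x, x ≤ a → c x = a := fun x hx => max_eq_left ((min_le_right _ _).trans hx)
  have c2 : ∀ x, a ≤ x → x ≤ b → c x = x := fun x hx hx' => by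
    simp only [hc]; rw [min_eq_right hx', max_eq_right hx]
  have c3 : ∀ x, b ≤ x → c x = b := fun x hx => by
    simp only [hc]; rw [min_eq_left hx, max_eq_right hab]
  set G : ℝ → ℝ := fun x => F x + 2 * s * (φ (c x) - φ a) + s^2 * (c x - a) with hG
  have flat : ∀ x y, x ≤ y → c x = c y → G x ≤ G y ∧
      ((φ y + s * (c y - a)) - (φ x + s * (c x - a)))^2 ≤ (y - x) * (G y - G x) := by
    intro x y hxy h
    have := hg.monotone hxy
    simp only [hG, h]
    exact ⟨by linarith, (le_of_eq (by ring)).trans ((hg.2 x y hxy).trans (le_of_eq (by ring)))⟩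
  have slope : ∀ x y, x ≤ y → a ≤ x → y ≤ b → G x ≤ G y ∧
      ((φ y + s * (c y - a)) - (φ x + s * (c x - a)))^2 ≤ (y - x) * (G y - G x) := by
    intro x y hxy hx hy
    have h1 : ((φ y + s * (c y - a)) - (φ x + s * (c x - a)))^2 ≤ (y - x) * (G y - G x) := by
      simp only [hG]
      rw [c2 x hx (hxy.trans hy), c2 y (hx.trans hxy) hy]
      have := hg.2 x y hxy
      nlinarith
    refine ⟨?_, h1⟩
    rcases hxy.eq_or_lt with rfl | hlt
    · exact le_rfl
    · exact sub_nonneg.1 (nonneg_of_mul_nonneg_right ((sq_nonneg _).trans h1) (sub_pos.2 hlt))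
  have main := gauge_glue (φ := fun x => φ x + s * (c x - a)) (F := G) a
    (fun x y hxy hy => flat x y hxy (by rw [c1 x (hxy.trans hy), c1 y hy]))
    (fun x y hx hxy => by
      have := gauge_glue (φ := fun x => φ (max a x) + s * (c (max a x) - a)) (F := fun x => G (max a x)) b
        (fun x y hxy hy => by
          have hm : max a x ≤ max a y := max_le_max le_rfl hxy
          obtain ⟨i1, i2⟩ := slope _ _ hm (le_max_left _ _) (max_le hab hy)
          refine ⟨i1, i2.trans (mul_le_mul_of_nonneg_right ?_ (sub_nonneg.2 i1))⟩
          rcases max_cases a x with ⟨e, _⟩ | ⟨e, _⟩ <;> rcases max_cases a y with ⟨e', _⟩ | ⟨e', _⟩ <;>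
            rw [e, e'] <;> linarith)
        (fun x y hx hxy => by
          rw [max_eq_right (hab.trans hx), max_eq_right (hab.trans (hx.trans hxy))]
          exact flat x y hxy (by rw [c3 x hx, c3 y (hx.trans hxy)])) x y hxy
      simpa only [max_eq_right hx, max_eq_right (hx.trans hxy)] using this)
  refine ⟨G, fun x => ⟨?_, ?_⟩, fun x y hxy => (main x y hxy).2⟩
  · have h1 := (main (min x a) x (min_le_left _ _)).1
    have h2 : G (min x a) = F (min x a) := by
      simp only [hG]; rw [c1 _ (min_le_right _ _)]; ring
    have := (hg.1 (min x a)).1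
    linarith
  · have h1 := (main x (max x b) (le_max_left _ _)).1
    have h2 : G (max x b) = F (max x b) + 2 * s * (φ b - φ a) + s^2 * (b - a) := by
      simp only [hG]; rw [c3 _ (le_max_right _ _)]
    have := (hg.1 (max x b)).2
    linarith

/-- Tent of radius `r` and height `r` centred at `x₀`. -/
def tent (x₀ r x : ℝ) : ℝ := max 0 (r - |x - x₀|)

lemma tent_nonneg (x₀ r x : ℝ) : 0 ≤ tent x₀ r x := le_max_left _ _

lemma tent_eq_zero {x₀ r x : ℝ} (hx : r ≤ |x - x₀|) : tent x₀ r x = 0 := max_eq_left (by linarith)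

lemma tent_le {x₀ r x : ℝ} (hr : 0 ≤ r) : tent x₀ r x ≤ r := max_le hr (by linarith [abs_nonneg (x - x₀)])

lemma continuous_tent (x₀ r : ℝ) : Continuous (tent x₀ r) := by
  unfold tent; fun_prop

lemma tent_eq_ramps {x₀ r : ℝ} (hr : 0 ≤ r) (x : ℝ) : tent x₀ r x =
    (max (x₀ - r) (min x₀ x) - (x₀ - r)) - (max x₀ (min (x₀ + r) x) - x₀) := by
  unfold tent
  rcases le_total x x₀ with h1 | h1
  · rw [min_eq_right h1, min_eq_right (by linarith : x ≤ x₀ + r), max_eq_left h1,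
      abs_of_nonpos (by linarith)]
    rcases le_total x (x₀ - r) with h2 | h2
    · rw [max_eq_left h2, max_eq_left (by linarith)]; ring
    · rw [max_eq_right h2, max_eq_right (by linarith)]; ring
  · rw [min_eq_left h1, max_eq_right (by linarith : x₀ - r ≤ x₀), abs_of_nonneg (by linarith)]
    rcases le_total x (x₀ + r) with h2 | h2
    · rw [min_eq_right h2, max_eq_right h1, max_eq_right (by linarith)]; ring
    · rw [min_eq_left h2, max_eq_right (by linarith : x₀ ≤ x₀ + r), max_eq_left (by linarith)]; ring

/-- Adding a multiple of a tent changes the gauge mass by a second difference of the function. -/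
lemma gauge_tent {φ F : ℝ → ℝ} {A : ℝ} (hg : Gauge φ F A) (x₀ : ℝ) {r : ℝ} (hr : 0 ≤ r) (s : ℝ) :
    ∃ G, Gauge (fun x => φ x + s * tent x₀ r x) G
      (A - 2 * s * (φ (x₀ + r) + φ (x₀ - r) - 2 * φ x₀) + 2 * s^2 * r) := by
  obtain ⟨G₁, h1⟩ := gauge_ramp hg (show x₀ - r ≤ x₀ by linarith) s
  obtain ⟨G₂, h2⟩ := gauge_ramp h1 (show x₀ ≤ x₀ + r by linarith) (-s)
  refine ⟨G₂, ?_⟩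
  convert h2 using 1
  · funext x
    rw [tent_eq_ramps hr]
    ring
  · rw [min_eq_left (show x₀ ≤ x₀ + r by linarith), min_self]
    ring

lemma lintegral_tent_le {x₀ r : ℝ} (hr : 0 ≤ r) :
    ∫⁻ x, ENNReal.ofReal (tent x₀ r x) ≤ ENNReal.ofReal (2 * r^2) := by
  calc ∫⁻ x, ENNReal.ofReal (tent x₀ r x)
      ≤ ∫⁻ x, (Set.Icc (x₀ - r) (x₀ + r)).indicator (fun _ => ENNReal.ofReal r) x := by
        refine lintegral_mono fun x => ?_
        by_cases hx : x ∈ Set.Icc (x₀ - r) (x₀ + r)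
        · rw [Set.indicator_of_mem hx]
          exact ENNReal.ofReal_le_ofReal (tent_le hr)
        · rw [Set.indicator_of_notMem hx, tent_eq_zero, ENNReal.ofReal_zero]
          by_contra! h
          exact hx ⟨by linarith [(abs_lt.1 h).1], by linarith [(abs_lt.1 h).2]⟩
    _ = ENNReal.ofReal (2 * r^2) := by
        rw [lintegral_indicator_const measurableSet_Icc, Real.volume_Icc, ← ENNReal.ofReal_mul hr]
        congr 1; ring

/-- A perturbation of a gauged profile by at most `q⁵`, with integral at most `2 q⁹`, increases its
stray-field energy by `O(q⁶)`. -/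
lemma NL_perturb {m m' F G a : ℝ → ℝ} {A B q : ℝ} (hm : Gauge m F A) (hm' : Gauge m' G B)
    (hq : 0 < q) (hq1 : q ≤ 1) (ha : Measurable a) (ha0 : ∀ x, 0 ≤ a x) (ha1 : ∀ x, a x ≤ q^5)
    (hai : ∫⁻ x, ENNReal.ofReal (a x) ≤ ENNReal.ofReal (2 * q^9)) (hd : ∀ x, |m' x - m x| ≤ a x) :
    NL m' Set.univ ≤ NL m Set.univ + ENNReal.ofReal (q^6 * (2 * B + 32 * (Real.sqrt A + 1))) := by
  have hmm : Measurable m := hm.continuous.measurable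
  have hmm' : Measurable m' := hm'.continuous.measurable
  have hA := hm.nonneg
  have hB := hm'.nonneg
  set K := 2 * Real.sqrt A + 2 with hK
  have hK0 : 0 ≤ K := by positivity
  set N : Set (ℝ × ℝ) := {p : ℝ × ℝ | |p.1 - p.2| < q^6} with hN
  have hNm : MeasurableSet N := measurableSet_lt (by fun_prop) (by fun_prop)
  set b : ℝ → ℝ≥0∞ := fun s => ENNReal.ofReal (a s) with hb
  set w : ℝ → ℝ≥0∞ := {u : ℝ | q^6 ≤ |u|}.indicator
    (fun u => ENNReal.ofReal K * ENNReal.ofReal (|u|^(-(3/2):ℝ))) with hw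
  have hset : MeasurableSet {u : ℝ | q^6 ≤ |u|} := measurableSet_le (by fun_prop) (by fun_prop)
  have hbm : Measurable b := by fun_prop
  have hwm : Measurable w := Measurable.indicator (by fun_prop) hset
  have hwn : ∀ u, w (-u) = w u := by
    intro u
    simp only [hw, Set.indicator, Set.mem_ofPred_eq, abs_neg]
  -- The pairs at distance less than `q⁶` are controlled by the gauge of `m'`. At distance
  -- `|u| ≥ q⁶` both `m` and the perturbation have increments `O(√|u|)`, so the change of the kernel is
  -- at most the perturbation times `K |u|^(-3/2)`.
  have hpt : ∀ p, strayKer m' p ≤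
      N.indicator (strayKer m') p + (strayKer m p + (b p.1 * w (p.2 - p.1) + b p.2 * w (p.2 - p.1))) := by
    intro p
    by_cases hpN : p ∈ N
    · rw [Set.indicator_of_mem hpN]
      exact le_self_add
    · rw [Set.indicator_of_notMem hpN, zero_add]
      have h1 : q^6 ≤ |p.2 - p.1| := by
        rw [abs_sub_comm]; exact not_lt.1 hpN
      have h1' : p.2 - p.1 ∈ {u : ℝ | q^6 ≤ |u|} := h1
      set u := p.2 - p.1 with hu
      have hup : 0 < |u| := lt_of_lt_of_le (by positivity) h1
      have hrp : 0 ≤ |u|^(-(3/2):ℝ) := by positivity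
      have h01 := ha0 p.1
      have h02 := ha0 p.2
      simp only [hw, hb, strayKer]
      rw [Set.indicator_of_mem h1', ← ENNReal.ofReal_mul hK0, ← ENNReal.ofReal_mul h01,
        ← ENNReal.ofReal_mul h02, ← ENNReal.ofReal_add (by positivity) (by positivity),
        ← ENNReal.ofReal_add (by positivity) (by positivity)]
      apply ENNReal.ofReal_le_ofReal
      have hs : |u|^(-(3/2):ℝ) = Real.sqrt |u| / u^2 := by
        rw [← sq_abs u, Real.sqrt_eq_rpow, ← Real.rpow_natCast, ← Real.rpow_sub hup]
        norm_num
      have hX : |m p.1 - m p.2| ≤ Real.sqrt A * Real.sqrt |u| := by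
        rw [← Real.sqrt_mul hA, mul_comm A, hu, abs_sub_comm p.2]
        exact Real.abs_le_sqrt (hm.sq_le _ _)
      have hsq : q^5 ≤ Real.sqrt |u| := by
        apply Real.le_sqrt_of_sq_le
        refine le_trans ?_ h1
        rw [← pow_mul]
        exact pow_le_pow_of_le_one hq.le hq1 (by norm_num)
      have hY : |(m' p.1 - m p.1) - (m' p.2 - m p.2)| ≤ a p.1 + a p.2 :=
        (abs_sub _ _).trans (add_le_add (hd _) (hd _))
      set X := m p.1 - m p.2
      set Y := (m' p.1 - m p.1) - (m' p.2 - m p.2) with hYd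
      have e1 : m' p.1 - m' p.2 = X + Y := by simp only [X, hYd]; ring
      have hXY : X * Y ≤ Real.sqrt A * Real.sqrt |u| * (a p.1 + a p.2) := by
        refine (le_abs_self _).trans ?_
        rw [abs_mul]
        exact mul_le_mul hX hY (abs_nonneg _) (by positivity)
      have hYY : Y^2 ≤ (a p.1 + a p.2) * (2 * Real.sqrt |u|) := by
        rw [← sq_abs, sq]
        refine mul_le_mul hY (hY.trans ?_) (abs_nonneg _) (by positivity)
        linarith [ha1 p.1, ha1 p.2]
      rw [e1, hs, show (p.1 - p.2)^2 = u^2 by rw [hu]; ring]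
      have hu2 : 0 < u^2 := by rw [← sq_abs]; positivity
      rw [← sub_nonneg]
      have : X^2/u^2 + (a p.1 * (K * (Real.sqrt |u|/u^2)) + a p.2 * (K * (Real.sqrt |u|/u^2))) - (X+Y)^2/u^2 =
          (X^2 + (a p.1 + a p.2) * K * Real.sqrt |u| - (X+Y)^2)/u^2 := by ring
      rw [this]
      apply div_nonneg _ hu2.le
      rw [hK]
      nlinarith
  have hsw : ∫⁻ p : ℝ × ℝ, b p.2 * w (p.2 - p.1) = ∫⁻ p : ℝ × ℝ, b p.1 * w (p.2 - p.1) := by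
    rw [Measure.volume_eq_prod, ← lintegral_prod_swap]
    refine lintegral_congr fun p => ?_
    simp only [Prod.fst_swap, Prod.snd_swap]
    rw [← hwn, neg_sub]
  have hwt : ∫⁻ p : ℝ × ℝ, b p.1 * w (p.2 - p.1) ≤ ENNReal.ofReal (8 * K * q^6) := by
    rw [lintegral_weight hbm hwm, hw, lintegral_indicator hset, lintegral_const_mul _ (by fun_prop),
      lintegral_rpow_three_half hq]
    refine (mul_le_mul_left hai _).trans ?_
    rw [← ENNReal.ofReal_mul hK0, ← ENNReal.ofReal_mul (by positivity)]
    apply le_of_eq; congr 1; field_simp; ring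
  calc NL m' Set.univ = ∫⁻ p, strayKer m' p := by
        unfold NL; rw [Set.univ_prod_univ, Measure.restrict_univ]
    _ ≤ ∫⁻ p, (N.indicator (strayKer m') p + (strayKer m p + (b p.1 * w (p.2 - p.1) + b p.2 * w (p.2 - p.1)))) :=
        lintegral_mono hpt
    _ = (∫⁻ p in N, strayKer m' p) + (NL m Set.univ +
        ((∫⁻ p : ℝ × ℝ, b p.1 * w (p.2 - p.1)) + ∫⁻ p : ℝ × ℝ, b p.1 * w (p.2 - p.1))) := by
        rw [lintegral_add_left ((measurable_strayKer hmm').indicator hNm), lintegral_indicator hNm,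
          lintegral_add_left (measurable_strayKer hmm), lintegral_add_left (by fun_prop), hsw]
        unfold NL; rw [Set.univ_prod_univ, Measure.restrict_univ]
    _ ≤ ENNReal.ofReal (2 * q^6 * B) + (NL m Set.univ +
        (ENNReal.ofReal (8 * K * q^6) + ENNReal.ofReal (8 * K * q^6))) := by
        gcongr
        exact near_le hm'
    _ = _ := by
        rw [add_left_comm, ← ENNReal.ofReal_add (by positivity) (by positivity),
          ← ENNReal.ofReal_add (by positivity) (by positivity)]
        congr 2
        rw [hK]; ring

/-! ### Regularity from second differences -/

lemma Wpot_le_add_abs {h : ℝ} (h0 : 0 ≤ h) (x y : ℝ) : Wpot h y ≤ Wpot h x + (1 + h) * |y - x| := by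
  have e : Wpot h y = Wpot h x + (1/2) * ((Real.cos y - Real.cos x) * (Real.cos y + Real.cos x - 2 * h)) := by
    unfold Wpot; ring
  have h1 : |Real.cos y - Real.cos x| ≤ |y - x| := sq_le_sq.1 (cos_sub_sq_le y x)
  have h2 : |Real.cos y + Real.cos x - 2 * h| ≤ 2 * (1 + h) := by
    have := Real.cos_le_one y
    have := Real.cos_le_one x
    have := Real.neg_one_le_cos y
    have := Real.neg_one_le_cos x
    rw [abs_le]; constructor <;> linarith
  have h3 : (Real.cos y - Real.cos x) * (Real.cos y + Real.cos x - 2 * h) ≤ |y - x| * (2 * (1 + h)) := by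
    refine (le_abs_self _).trans ?_
    rw [abs_mul]
    exact mul_le_mul h1 h2 (abs_nonneg _) (abs_nonneg _)
  rw [e]; linarith

/-- Testing minimality with tents: the second differences of step `r = q⁴` of a relaxed minimizer
are `O(q⁵) = O(r^{5/4})`. Adding `s` times the tent of radius `r`, with `|s| = q`, changes the gauge
mass by `-2sD + 2s²r`, where `D` is the second difference, while the other terms grow by `O(q⁶)`;
hence `q |D| = O(q⁶)`. -/
lemma second_difference_le {h : ℝ} (h0 : 0 ≤ h) {φ F : ℝ → ℝ} {A : ℝ} {e : ℝ≥0∞} (he : e < ⊤)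
    (hg : Gauge φ F A) (hmin : relE h φ A ≤ e)
    (hcomp : ∀ χ G B, Gauge χ G B → χ =ᶠ[atTop] φ → χ =ᶠ[atBot] φ → e ≤ relE h χ B) :
    ∃ C, ∀ x q, 0 < q → q ≤ 1 → |φ (x + q^4) + φ (x - q^4) - 2 * φ x| ≤ C * q^5 := by
  have hA := hg.nonneg
  have hc := hg.continuous
  have hWc := continuous_Wpot h
  set B₀ := A + 4 * Real.sqrt A + 2 with hB₀
  set K := 2 * (1 + h) + (2 * B₀ + 32 * (Real.sqrt A + 1)) with hK
  have hK0 : 0 ≤ 2 * B₀ + 32 * (Real.sqrt A + 1) := by positivity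
  have key : ∀ x q s, 0 < q → q ≤ 1 → |s| = q →
      s * (φ (x + q^4) + φ (x - q^4) - 2 * φ x) ≤ (1 + K) * q^6 := by
    intro x q s hq hq1 hs
    set D := φ (x + q^4) + φ (x - q^4) - 2 * φ x with hD
    have hr : (0:ℝ) ≤ q^4 := by positivity
    have hs2 : s^2 = q^2 := by rw [← hs, sq_abs]
    have hq4 : q^4 ≤ 1 := pow_le_one₀ hq.le hq1
    have hDb : |D| ≤ 2 * Real.sqrt A := by
      have i1 : |φ (x + q^4) - φ x| ≤ Real.sqrt A := by
        refine Real.abs_le_sqrt ((hg.sq_le _ _).trans ?_)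
        rw [add_sub_cancel_left, abs_of_nonneg hr]
        exact mul_le_of_le_one_left hA hq4
      have i2 : |φ (x - q^4) - φ x| ≤ Real.sqrt A := by
        refine Real.abs_le_sqrt ((hg.sq_le _ _).trans ?_)
        rw [show x - q^4 - x = -q^4 by ring, abs_neg, abs_of_nonneg hr]
        exact mul_le_of_le_one_left hA hq4
      rw [show D = (φ (x + q^4) - φ x) + (φ (x - q^4) - φ x) by rw [hD]; ring]
      exact (abs_add_le _ _).trans (by linarith)
    obtain ⟨G, hG⟩ := gauge_tent hg x hr s
    set χ : ℝ → ℝ := fun y => φ y + s * tent x (q^4) y with hχ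
    rw [← hD] at hG
    set B := A - 2 * s * D + 2 * s^2 * q^4 with hB
    have hsD : |s * D| ≤ 2 * Real.sqrt A := by
      rw [abs_mul, hs]
      exact (mul_le_of_le_one_left (abs_nonneg _) hq1).trans hDb
    have hq6 : q^6 ≤ 1 := pow_le_one₀ hq.le hq1
    have hBB : B ≤ B₀ := by
      have : 2 * s^2 * q^4 = 2 * q^6 := by rw [hs2]; ring
      have := (abs_le.1 hsD).1
      rw [hB, hB₀]; linarith
    have htail : ∀ y, q^4 ≤ |y - x| → χ y = φ y := fun y hy => by
      simp only [hχ]; rw [tent_eq_zero hy]; ring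
    have hle := hcomp χ G B hG
      (by filter_upwards [eventually_ge_atTop (x + q^4)] with y hy
          exact htail y (le_trans (by linarith) (le_abs_self _)))
      (by filter_upwards [eventually_le_atBot (x - q^4)] with y hy
          exact htail y (le_trans (by linarith) (neg_le_abs _)))
    have hχc := hG.continuous
    have htc := continuous_tent x (q^4)
    have hint : ∫⁻ y, ENNReal.ofReal (q * tent x (q^4) y) ≤ ENNReal.ofReal (2 * q^9) := by
      simp_rw [ENNReal.ofReal_mul hq.le]
      rw [lintegral_const_mul _ (by fun_prop)]
      refine (mul_le_mul_right (lintegral_tent_le hr) _).trans ?_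
      rw [← ENNReal.ofReal_mul hq.le]
      apply le_of_eq; congr 1; ring
    have hdiff : ∀ y, |χ y - φ y| = q * tent x (q^4) y := fun y => by
      simp only [hχ]
      rw [add_sub_cancel_left, abs_mul, hs, abs_of_nonneg (tent_nonneg _ _ _)]
    have eW : ∫⁻ y, ENNReal.ofReal (Wpot h (χ y)) ≤
        (∫⁻ y, ENNReal.ofReal (Wpot h (φ y))) + ENNReal.ofReal (2 * (1 + h) * q^6) := by
      calc ∫⁻ y, ENNReal.ofReal (Wpot h (χ y))
          ≤ ∫⁻ y, (ENNReal.ofReal (Wpot h (φ y)) +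
              ENNReal.ofReal (1 + h) * ENNReal.ofReal (q * tent x (q^4) y)) := by
            refine lintegral_mono fun y => ?_
            rw [← ENNReal.ofReal_mul (by positivity), ← hdiff,
              ← ENNReal.ofReal_add (Wpot_nonneg h _) (by positivity)]
            exact ENNReal.ofReal_le_ofReal (Wpot_le_add_abs h0 _ _)
        _ ≤ _ := by
            rw [lintegral_add_left (by fun_prop), lintegral_const_mul _ (by fun_prop)]
            refine add_le_add le_rfl ((mul_le_mul_right hint _).trans ?_)
            rw [← ENNReal.ofReal_mul (by positivity)]
            apply ENNReal.ofReal_le_ofReal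
            have : q^9 ≤ q^6 := pow_le_pow_of_le_one hq.le hq1 (by norm_num)
            have := mul_le_mul_of_nonneg_left this (show 0 ≤ 2 * (1 + h) by positivity)
            linarith
    have eN : NL (fun y => Real.cos (χ y)) Set.univ ≤ NL (fun y => Real.cos (φ y)) Set.univ +
        ENNReal.ofReal (q^6 * (2 * B₀ + 32 * (Real.sqrt A + 1))) := by
      refine (NL_perturb hg.cos hG.cos hq hq1 (a := fun y => q * tent x (q^4) y) (by fun_prop)
        (fun y => mul_nonneg hq.le (tent_nonneg _ _ _)) (fun y => ?_) hint fun y => ?_).trans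
        (add_le_add le_rfl (ENNReal.ofReal_le_ofReal ?_))
      · have := mul_le_mul_of_nonneg_left (tent_le (x₀ := x) (x := y) hr) hq.le
        calc _ ≤ _ := this
          _ = _ := by ring
      · rw [← hdiff]; exact sq_le_sq.1 (cos_sub_sq_le _ _)
      · gcongr
    have hκ : ENNReal.ofReal (1/(4*π)) ≤ 1 := by
      rw [← ENNReal.ofReal_one]
      apply ENNReal.ofReal_le_ofReal
      rw [div_le_one (by positivity)]
      linarith [Real.pi_gt_three]
    have hB0 := hG.nonneg
    set Y := (∫⁻ y, ENNReal.ofReal (Wpot h (φ y))) +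
      ENNReal.ofReal (1/(4*π)) * NL (fun y => Real.cos (φ y)) Set.univ with hY
    have hrelφ : relE h φ A = ENNReal.ofReal (A/2) + Y := by unfold relE; rw [hY, add_assoc]
    have hYt : Y ≠ ⊤ := by
      rw [hrelφ] at hmin
      exact ((le_add_self.trans hmin).trans_lt he).ne
    have hrelχ : relE h χ B ≤ ENNReal.ofReal (B/2 + K * q^6) + Y := by
      unfold relE
      calc _ ≤ ENNReal.ofReal (B/2) + ((∫⁻ y, ENNReal.ofReal (Wpot h (φ y))) +
            ENNReal.ofReal (2 * (1 + h) * q^6)) + (ENNReal.ofReal (1/(4*π)) *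
            NL (fun y => Real.cos (φ y)) Set.univ + ENNReal.ofReal (q^6 * (2 * B₀ + 32 * (Real.sqrt A + 1)))) := by
            refine add_le_add (add_le_add le_rfl eW) ((mul_le_mul_right eN _).trans ?_)
            rw [mul_add]
            exact add_le_add le_rfl (mul_le_of_le_one_left zero_le hκ)
        _ = ENNReal.ofReal (B/2) + ENNReal.ofReal (2 * (1 + h) * q^6) +
            ENNReal.ofReal (q^6 * (2 * B₀ + 32 * (Real.sqrt A + 1))) + Y := by rw [hY]; ring
        _ = _ := by
            rw [← ENNReal.ofReal_add (by positivity) (by positivity),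
              ← ENNReal.ofReal_add (by positivity) (by positivity)]
            congr 2
            rw [hK]; ring
    have hfin := (hmin.trans hle).trans hrelχ
    rw [hrelφ] at hfin
    have h5 := (ENNReal.add_le_add_iff_right hYt).1 hfin
    have h6 := (ENNReal.ofReal_le_ofReal_iff (by positivity)).1 h5
    have : 2 * s^2 * q^4 = 2 * q^6 := by rw [hs2]; ring
    rw [hB] at h6
    linarith
  refine ⟨1 + K, fun x q hq hq1 => ?_⟩
  have k1 := key x q q hq hq1 (abs_of_pos hq)
  have k2 := key x q (-q) hq hq1 (by rw [abs_neg, abs_of_pos hq])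
  set D := φ (x + q^4) + φ (x - q^4) - 2 * φ x
  rw [abs_le]
  constructor
  · refine le_of_mul_le_mul_left (a := q) ?_ hq
    linarith
  · refine le_of_mul_le_mul_left (a := q) ?_ hq
    linarith

/-- A Zygmund-type criterion: second differences of order `r^{5/4}` make the dyadic difference
quotients converge uniformly. -/
lemma contDiff_of_second_difference {φ : ℝ → ℝ} (hφ : Continuous φ) {C : ℝ}
    (hC : ∀ x q, 0 < q → q ≤ 1 → |φ (x + q^4) + φ (x - q^4) - 2 * φ x| ≤ C * q^5) :
    ContDiff ℝ 1 φ := by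
  -- The ratio for which `q⁴ = 1/2`.
  set q : ℝ := Real.sqrt (Real.sqrt (1/2)) with hq
  have hq0 : 0 < q := by positivity
  have hq4 : q^4 = 1/2 := by
    rw [show q^4 = (q^2)^2 by ring, hq, Real.sq_sqrt (by positivity), Real.sq_sqrt (by norm_num)]
  have hq1 : q < 1 := by
    by_contra! h
    have := one_le_pow₀ h (n := 4)
    rw [hq4] at this
    norm_num at this
  have hC0 : 0 ≤ C := by simpa using (abs_nonneg _).trans (hC 0 1 one_pos le_rfl)
  set G : ℕ → ℝ → ℝ := fun n x => 2^n * (φ (x + (1/2)^n) - φ x) with hG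
  have hstep : ∀ x n, dist (G n x) (G (n+1) x) ≤ C * q^n := by
    intro x n
    have h1 := hC (x + (1/2)^(n+1)) (q^(n+1)) (by positivity) (pow_le_one₀ hq0.le hq1.le)
    rw [← pow_mul, mul_comm (n+1), pow_mul, hq4, add_sub_cancel_right, add_assoc,
      show ((1:ℝ)/2)^(n+1) + (1/2)^(n+1) = (1/2)^n by rw [pow_succ]; ring] at h1
    have h2 : G n x - G (n+1) x = 2^n * (φ (x + (1/2)^n) + φ x - 2 * φ (x + (1/2)^(n+1))) := by
      simp only [hG]; rw [pow_succ (2:ℝ)]; ring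
    rw [Real.dist_eq, h2, abs_mul, abs_of_pos (by positivity)]
    calc _ ≤ 2^n * (C * (q^(n+1))^5) := by gcongr
      _ = C * q^n * ((2 * q^4)^n * q^5) := by rw [mul_pow]; ring
      _ = C * q^n * q^5 := by rw [hq4]; norm_num
      _ ≤ C * q^n := mul_le_of_le_one_right (by positivity) (pow_le_one₀ hq0.le hq1.le)
  have hlim : ∀ x, ∃ y, Tendsto (fun n => G n x) atTop (𝓝 y) := fun x =>
    cauchySeq_tendsto_of_complete (cauchySeq_of_le_geometric q C hq1 (hstep x))
  choose g hg using hlim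
  have hunif : TendstoUniformly G g atTop := by
    rw [Metric.tendstoUniformly_iff]
    intro ε hε
    have : Tendsto (fun n : ℕ => C * q^n / (1 - q)) atTop (𝓝 (C * 0 / (1 - q))) :=
      ((tendsto_pow_atTop_nhds_zero_of_lt_one hq0.le hq1).const_mul C).div_const _
    rw [mul_zero, zero_div] at this
    filter_upwards [this.eventually_lt_const hε] with n hn x
    rw [dist_comm]
    exact (dist_le_of_le_geometric_of_tendsto q C hq1 (hstep x) (hg x) n).trans_lt hn
  have hGc : ∀ n, Continuous (G n) := fun n => by simp only [hG]; fun_prop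
  have hgc : Continuous g := hunif.continuous (Eventually.of_forall hGc).frequently
  -- The `G n` are the derivatives of the averages `f n`, which converge to `φ`.
  set Φ : ℝ → ℝ := fun x => ∫ y in (0:ℝ)..x, φ y with hΦ
  have hΦd : ∀ x, HasDerivAt Φ (φ x) x := fun x => (hφ.integral_hasStrictDerivAt 0 x).hasDerivAt
  set f : ℕ → ℝ → ℝ := fun n x => 2^n * (Φ (x + (1/2)^n) - Φ x) with hf
  have hfd : ∀ n x, HasDerivAt (f n) (G n x) x := fun n x =>
    (((hΦd (x + (1/2)^n)).comp_add_const x _).sub (hΦd x)).const_mul _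
  have hzero : Tendsto (fun n : ℕ => ((1:ℝ)/2)^n) atTop (𝓝[≠] 0) :=
    tendsto_nhdsWithin_iff.2 ⟨tendsto_pow_atTop_nhds_zero_of_lt_one (by norm_num) (by norm_num),
      Eventually.of_forall fun n => by simp⟩
  have hff : ∀ x, Tendsto (fun n => f n x) atTop (𝓝 (φ x)) := fun x => by
    refine ((hΦd x).tendsto_slope_zero.comp hzero).congr fun n => ?_
    simp only [hf, Function.comp, smul_eq_mul]
    rw [one_div, inv_pow, inv_inv]
  have hd : ∀ x, HasDerivAt φ (g x) x :=
    hasDerivAt_of_tendstoUniformly hunif (Eventually.of_forall hfd) hff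
  rw [contDiff_one_iff_deriv]
  refine ⟨fun x => (hd x).differentiableAt, ?_⟩
  rwa [show deriv φ = g from funext fun x => (hd x).deriv]

/-! ### The minimizer -/

/-- **Concentration compactness.** If `d = ℓ − α/π` and all the relevant
strict binding inequalities hold, then `ℰ_h(d)` is attained. -/
theorem concentration_compactness (h : ℝ) (h0 : 0 ≤ h) (h1 : h ≠ 1)
    (ℓ : ℕ) (hℓ : 1 ≤ ℓ) (d : ℝ) (hd : d = (ℓ : ℝ) - alphaParam h / Real.pi)
    (hyp : ∀ j : ℕ, 1 ≤ j →
      (0 ≤ d - 2*(j : ℝ) →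
        Einf h d < 2 * Einf h (j : ℝ) + Einf h (d - 2*(j : ℝ))) ∧
      (0 ≤ d - 2*((j : ℝ) - alphaParam h / Real.pi) →
        Einf h d < 2 * Einf h ((j : ℝ) - alphaParam h / Real.pi) +
          Einf h (d - 2*((j : ℝ) - alphaParam h / Real.pi)))) :
    ∃ φ ∈ AA h d, energy h φ = Einf h d := by
  obtain ⟨φ, F, A, hg, hp, hm, hmin⟩ := exists_relaxed_minimizer h0 hℓ hd
    (fun j hj => (hyp j hj).1) (fun j hj => (hyp j hj).2)
  have hfin := Einf_lt_top h0 hℓ hd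
  have hcomp : ∀ χ G B, Gauge χ G B → χ =ᶠ[atTop] φ → χ =ᶠ[atBot] φ →
      Einf h d ≤ relE h χ B := fun χ G B hχ ht hb =>
    Einf_le_relE h0 hχ (cos_add_end h0 hd) (cos_sub_end h0 hd) (hp.congr' ht.symm)
      (hm.congr' hb.symm) (by ring)
  obtain ⟨C, hC⟩ := second_difference_le h0 hfin hg hmin hcomp
  have hc1 : ContDiff ℝ 1 φ := contDiff_of_second_difference hg.continuous hC
  -- The Dirichlet integral of a `C¹` function is at most the mass of any of its gauges.
  have hE : energy h φ ≤ Einf h d := by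
    refine le_trans ?_ hmin
    rw [energy_eq hc1, relE]
    gcongr
    calc ENNReal.ofReal (1/2) * ∫⁻ x, ENNReal.ofReal ((deriv φ x)^2)
        ≤ ENNReal.ofReal (1/2) * ENNReal.ofReal A := by
          gcongr; exact hg.lintegral_deriv_sq hc1
      _ = ENNReal.ofReal (A/2) := by
          rw [← ENNReal.ofReal_mul (by norm_num)]; congr 1; ring
  have hmem : φ ∈ AA h d :=
    ⟨⟨hc1, ⟨_, (mem_limSet_iff h0).2 (cos_add_end h0 hd), hp⟩,
      ⟨_, (mem_limSet_iff h0).2 (cos_sub_end h0 hd), hm⟩, hE.trans_lt hfin⟩,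
      deg_eq hp hm (by ring)⟩
  exact ⟨φ, hmem, le_antisymm hE (iInf₂_le φ hmem)⟩
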